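/- Let k ≥ 2 and let (X_i, σ_{X_i}), i = 1,…,k, be one-sided subshifts over finite alphabets such that X_{i+1} is a factor of X_i with factor map π_i : X_i → X_{i+1} for i = 1,…,k−1; let π_0 be the identity on X_1 and τ_i = π_i ∘ π_{i−1} ∘ ⋯ ∘ π_0 for i = 0,…,k−1. Assume X_1 satisfies weak specification. Then for any f ∈ V(σ_{X_1}) and any a = (a_1,…,a_k) ∈ ℝ^k with a_1 > 0 and a_i ≥ 0 for i ≥ 2, there exists a unique μ ∈ M(X_1, σ_{X_1}) attaining sup_{η ∈ M(X_1,σ_{X_1})} ( η(f) + Σ_{i=1}^k a_i h_{η∘τ_{i−1}^{-1}}(σ_{X_i}) ). Moreover μ is ergodic and there exist p ∈ ℕ and c > 0 such that liminf_{n→∞} Σ_{i=0}^p μ(A ∩ σ_{X_1}^{−n−i}(B)) ≥ c μ(A)μ(B) for all Borel sets A, B ⊆ X_1; and if X_1 satisfies specification, then there exists c > 0 such that liminf_{n→∞} μ(A ∩ σ_{X_1}^{−n}(B)) ≥ c μ(A)μ(B) for all Borel sets A, B ⊆ X_1. -/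

import Mathlib

open MeasureTheory Filter Topology
open scoped Classical ENNReal NNReal

noncomputable section

/-- The left shift on one-sided sequences. -/
def shiftMap {A : Type} : (ℕ → A) → (ℕ → A) := fun x n => x (n + 1)

/-- The cylinder set of a finite word. -/
def cyl {A : Type} (I : List A) : Set (ℕ → A) :=
  {x | ∀ i : Fin I.length, x i = I.get i}

/-- Membership of a word in the language of `X`. -/
def Lang {A : Type} (X : Set (ℕ → A)) (I : List A) : Prop :=
  (cyl I ∩ X).Nonempty

/-- `X` is a (nonempty) one-sided subshift. -/
def IsSubshift {A : Type} [TopologicalSpace A] (X : Set (ℕ → A)) : Prop :=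
  X.Nonempty ∧ IsCompact X ∧ shiftMap '' X ⊆ X

/-- weak `p`-specification -/
def WeakSpecification {A : Type} (X : Set (ℕ → A)) (p : ℕ) : Prop :=
  ∀ I J : List A, Lang X I → Lang X J →
    ∃ K : List A, K.length ≤ p ∧ Lang X (I ++ K ++ J)

/-- `p`-specification -/
def Specification {A : Type} (X : Set (ℕ → A)) (p : ℕ) : Prop :=
  ∀ I J : List A, Lang X I → Lang X J →
    ∃ K : List A, K.length = p ∧ Lang X (I ++ K ++ J)

/-- invariant probability measures supported on `X` (predicate on plain measures) -/
def InvOn {A : Type} [MeasurableSpace A] (X : Set (ℕ → A)) (μ : Measure (ℕ → A)) : Prop :=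
  IsProbabilityMeasure μ ∧ μ.map shiftMap = μ ∧ μ X = 1

/-- the set of shift-invariant probability measures on `X` -/
def MInv {A : Type} [MeasurableSpace A] (X : Set (ℕ → A)) :
    Set (ProbabilityMeasure (ℕ → A)) :=
  {μ | (μ : Measure (ℕ → A)).map shiftMap = (μ : Measure (ℕ → A)) ∧
    (μ : Measure (ℕ → A)) X = 1}

/-- measure of a word: `μ([I] ∩ X)` -/
def mw {A : Type} [MeasurableSpace A] (X : Set (ℕ → A)) (μ : Measure (ℕ → A))
    (I : List A) : ℝ :=
  (μ (cyl I ∩ X)).toReal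

/-- the initial word of length `n` of a sequence -/
def wordOf {A : Type} (x : ℕ → A) (n : ℕ) : List A := List.ofFn (fun i : Fin n => x i)

/-- `n`-block entropy -/
def Hblock {A : Type} [Fintype A] [MeasurableSpace A] (X : Set (ℕ → A))
    (μ : Measure (ℕ → A)) (n : ℕ) : ℝ :=
  -∑ w : Fin n → A, mw X μ (List.ofFn w) * Real.log (mw X μ (List.ofFn w))

/-- measure-theoretic entropy (the limit exists for invariant measures; `liminf` realizes it) -/
def ent {A : Type} [Fintype A] [MeasurableSpace A] (X : Set (ℕ → A))
    (μ : Measure (ℕ → A)) : ℝ :=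
  liminf (fun n : ℕ => Hblock X μ n / n) atTop

/-- extended logarithm: `log t`, with value `⊥` for `t ≤ 0` -/
def elog (t : ℝ) : EReal := if t ≤ 0 then ⊥ else ((Real.log t : ℝ) : EReal)

/-- the integral `∫ log g dμ`, valued in `ℝ ∪ {−∞}` -/
def intlog {Ω : Type*} [MeasurableSpace Ω] (μ : Measure Ω) (g : Ω → ℝ) : EReal :=
  ((∫⁻ x, ENNReal.ofReal (Real.log (g x)) ∂μ : ℝ≥0∞) : EReal) -
    ((∫⁻ x, (if g x ≤ 0 then (⊤ : ℝ≥0∞) else ENNReal.ofReal (-Real.log (g x))) ∂μ : ℝ≥0∞) : EReal)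

/-- sub-additive potential `Φ = (log φ_n)_{n ≥ 1}` -/
def SubaddPot {A : Type} [TopologicalSpace A] (X : Set (ℕ → A))
    (φ : ℕ → (ℕ → A) → ℝ) : Prop :=
  (∀ n, 1 ≤ n → ContinuousOn (φ n) X) ∧
  (∀ n, 1 ≤ n → ∀ x ∈ X, 0 ≤ φ n x) ∧
  ∃ c > (0:ℝ), ∀ n m : ℕ, 1 ≤ n → 1 ≤ m → ∀ x ∈ X,
    φ (n + m) x ≤ c * φ n x * φ m (shiftMap^[n] x)

/-- `Φ_*(μ) = lim (1/n) ∫ log φ_n dμ` (realized as a `liminf` in `EReal`) -/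
def PhiStar {A : Type} [MeasurableSpace A] (μ : Measure (ℕ → A))
    (φ : ℕ → (ℕ → A) → ℝ) : EReal :=
  liminf (fun n : ℕ => (((n : ℝ)⁻¹ : ℝ) : EReal) * intlog μ (φ n)) atTop

/-- sub-multiplicative function on the language of `X` -/
def Submult {A : Type} (X : Set (ℕ → A)) (φ : List A → ℝ) : Prop :=
  (∀ I, Lang X I → 0 ≤ φ I) ∧ φ [] = 1 ∧
  ∃ c > (0:ℝ), ∀ I J : List A, Lang X (I ++ J) → φ (I ++ J) ≤ c⁻¹ * φ I * φ J

/-- the potential generated by a word function -/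
def genPot {A : Type} (φ : List A → ℝ) : ℕ → (ℕ → A) → ℝ := fun n x => φ (wordOf x n)

/-- the scaled potential `cΦ = (log φ_n^c)` -/
def scPot {Ω : Type*} (c : ℝ) (φ : ℕ → Ω → ℝ) : ℕ → Ω → ℝ := fun n x => φ n x ^ c

/-- the "pressure value" `Φ_*(μ) + h_μ` -/
def eqVal {A : Type} [Fintype A] [MeasurableSpace A] (X : Set (ℕ → A))
    (φ : ℕ → (ℕ → A) → ℝ) (μ : ProbabilityMeasure (ℕ → A)) : EReal :=
  PhiStar (μ : Measure (ℕ → A)) φ + ((ent X (μ : Measure (ℕ → A)) : ℝ) : EReal)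

/-- the set of equilibrium states of `Φ` -/
def EqSet {A : Type} [Fintype A] [MeasurableSpace A] (X : Set (ℕ → A))
    (φ : ℕ → (ℕ → A) → ℝ) : Set (ProbabilityMeasure (ℕ → A)) :=
  {μ | μ ∈ MInv X ∧ eqVal X φ μ = ⨆ η ∈ MInv X, eqVal X φ η}

/-- sequence map induced by a one-block map -/
def blockMap {A B : Type} (π : A → B) : (ℕ → A) → (ℕ → B) := fun x n => π (x n)

/-- pushforward of a probability measure under a one-block map -/
def pushM {A B : Type} [MeasurableSpace A] [MeasurableSpace B] (π : A → B)
    (μ : ProbabilityMeasure (ℕ → A)) : Measure (ℕ → B) :=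
  (μ : Measure (ℕ → A)).map (blockMap π)

/-- conditional equilibrium states of `Φ` over `ν` -/
def CondEqSet {A B : Type} [Fintype A] [MeasurableSpace A] [MeasurableSpace B]
    (X : Set (ℕ → A)) (π : A → B) (φ : ℕ → (ℕ → A) → ℝ) (ν : Measure (ℕ → B)) :
    Set (ProbabilityMeasure (ℕ → A)) :=
  {μ | μ ∈ MInv X ∧ pushM π μ = ν ∧
    eqVal X φ μ = ⨆ η ∈ {η | η ∈ MInv X ∧ pushM π η = ν}, eqVal X φ η}

/-- the projected word function `ψ(J) = Σ_{I : πI = J} φ(I)` -/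
def psiProj {A B : Type} [Fintype A] (X : Set (ℕ → A)) (π : A → B) (φ : List A → ℝ)
    (J : List B) : ℝ :=
  ∑ w : Fin J.length → A,
    if Lang X (List.ofFn w) ∧ List.map π (List.ofFn w) = J then φ (List.ofFn w) else 0

/-- `φ^{(2)}(J) = (Σ_{I : πI = J} φ(I)^{1/a₁})^{a₁}` -/
def phiTwo {A B : Type} [Fintype A] (X : Set (ℕ → A)) (π : A → B) (φ : List A → ℝ)
    (a₁ : ℝ) (J : List B) : ℝ :=
  (∑ w : Fin J.length → A,
    if Lang X (List.ofFn w) ∧ List.map π (List.ofFn w) = J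
    then φ (List.ofFn w) ^ a₁⁻¹ else 0) ^ a₁

/-- `a`-weighted pressure value for `k = 2` -/
def wVal2 {A B : Type} [Fintype A] [Fintype B] [MeasurableSpace A] [MeasurableSpace B]
    (X : Set (ℕ → A)) (Y : Set (ℕ → B)) (π : A → B) (φ : ℕ → (ℕ → A) → ℝ)
    (a₁ a₂ : ℝ) (μ : ProbabilityMeasure (ℕ → A)) : EReal :=
  PhiStar (μ : Measure (ℕ → A)) φ +
    ((a₁ * ent X (μ : Measure (ℕ → A)) + a₂ * ent Y (pushM π μ) : ℝ) : EReal)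

/-- the set of `a`-weighted equilibrium states, `k = 2` -/
def WEqSet2 {A B : Type} [Fintype A] [Fintype B] [MeasurableSpace A] [MeasurableSpace B]
    (X : Set (ℕ → A)) (Y : Set (ℕ → B)) (π : A → B) (φ : ℕ → (ℕ → A) → ℝ)
    (a₁ a₂ : ℝ) : Set (ProbabilityMeasure (ℕ → A)) :=
  {μ | μ ∈ MInv X ∧ wVal2 X Y π φ a₁ a₂ μ = ⨆ η ∈ MInv X, wVal2 X Y π φ a₁ a₂ η}

/-- convexity of a set of probability measures -/
def ConvexPM {Ω : Type*} [MeasurableSpace Ω] (S : Set (ProbabilityMeasure Ω)) : Prop :=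
  ∀ μ₁ ∈ S, ∀ μ₂ ∈ S, ∀ t : ℝ, 0 ≤ t → t ≤ 1 → ∀ μ : ProbabilityMeasure Ω,
    (μ : Measure Ω) = ENNReal.ofReal t • (μ₁ : Measure Ω) +
      ENNReal.ofReal (1 - t) • (μ₂ : Measure Ω) → μ ∈ S

/-- extreme points of a set of probability measures -/
def IsExtremePM {Ω : Type*} [MeasurableSpace Ω] (S : Set (ProbabilityMeasure Ω))
    (μ : ProbabilityMeasure Ω) : Prop :=
  μ ∈ S ∧ ∀ μ₁ ∈ S, ∀ μ₂ ∈ S, ∀ t : ℝ, 0 < t → t < 1 →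
    (μ : Measure Ω) = ENNReal.ofReal t • (μ₁ : Measure Ω) +
      ENNReal.ofReal (1 - t) • (μ₂ : Measure Ω) → μ₁ = μ₂

/-- the class `Ω_w(A*, p)` -/
def OmegaW {A : Type} [Fintype A] (p : ℕ) (f : List A → ℝ) : Prop :=
  (∀ I, 0 ≤ f I ∧ f I ≤ 1) ∧
  ∃ c > (0:ℝ),
    (∀ n : ℕ, ∑ w : Fin n → A, f (List.ofFn w) = 1) ∧
    (∀ I J : List A, ∃ K : List A, K.length ≤ p ∧ c * (f I * f J) ≤ f (I ++ K ++ J)) ∧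
    (∀ I : List A, ∃ i j : A, c * f I ≤ f (i :: I) ∧ c * f I ≤ f (I ++ [j]))

/-- the class `Ω(A*, p)` -/
def OmegaS {A : Type} [Fintype A] (p : ℕ) (f : List A → ℝ) : Prop :=
  (∀ I, 0 ≤ f I ∧ f I ≤ 1) ∧
  ∃ c > (0:ℝ),
    (∀ n : ℕ, ∑ w : Fin n → A, f (List.ofFn w) = 1) ∧
    (∀ I J : List A, ∃ K : List A, K.length = p ∧ c * (f I * f J) ≤ f (I ++ K ++ J))

/-- `f_{m,n}(I)` -/
def fmn {A : Type} [Fintype A] (f : List A → ℝ) (m n : ℕ) (I : List A) : ℝ :=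
  ∑ u : Fin m → A, ∑ v : Fin n → A, f (List.ofFn u ++ I ++ List.ofFn v)

/-- `f*(I) = sup_{m,n} f_{m,n}(I)` -/
def fstar {A : Type} [Fintype A] (f : List A → ℝ) (I : List A) : ℝ :=
  ⨆ m : ℕ, ⨆ n : ℕ, fmn f m n I

/-- the class `D_w(X, p)` -/
def Dw {A : Type} (X : Set (ℕ → A)) (p : ℕ) (φ : List A → ℝ) : Prop :=
  (∀ I, Lang X I → 0 ≤ φ I) ∧ (∃ I, Lang X I ∧ I ≠ [] ∧ 0 < φ I) ∧
  ∃ c : ℝ, 0 < c ∧ c ≤ 1 ∧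
    (∀ I J : List A, Lang X (I ++ J) → φ (I ++ J) ≤ c⁻¹ * φ I * φ J) ∧
    (∀ I J : List A, Lang X I → Lang X J →
      ∃ K : List A, K.length ≤ p ∧ Lang X (I ++ K ++ J) ∧
        c * (φ I * φ J) ≤ φ (I ++ K ++ J))

/-- the class `D(X, p)` -/
def Ds {A : Type} (X : Set (ℕ → A)) (p : ℕ) (φ : List A → ℝ) : Prop :=
  (∀ I, Lang X I → 0 ≤ φ I) ∧ (∃ I, Lang X I ∧ I ≠ [] ∧ 0 < φ I) ∧
  ∃ c : ℝ, 0 < c ∧ c ≤ 1 ∧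
    (∀ I J : List A, Lang X (I ++ J) → φ (I ++ J) ≤ c⁻¹ * φ I * φ J) ∧
    (∀ I J : List A, Lang X I → Lang X J →
      ∃ K : List A, K.length = p ∧ Lang X (I ++ K ++ J) ∧
        c * (φ I * φ J) ≤ φ (I ++ K ++ J))

end

noncomputable section

/-- iterated one-block maps along a chain of alphabets: `tauFrom π j i : B j → B (j+i)` -/
def tauFrom {B : ℕ → Type} (π : ∀ i, B i → B (i+1)) (j : ℕ) : (i : ℕ) → B j → B (j + i)
  | 0 => id
  | (i+1) => fun a => π (j + i) (tauFrom π j i a)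

/-- weighted pressure value along a chain starting at index `j`, with `k` weights `w 0, …, w (k-1)` -/
def wValGen {B : ℕ → Type} [∀ i, Fintype (B i)] [∀ i, MeasurableSpace (B i)]
    (π : ∀ i, B i → B (i+1)) (X : ∀ i, Set (ℕ → B i)) (j k : ℕ) (w : ℕ → ℝ)
    (φ : ℕ → (ℕ → B j) → ℝ) (μ : ProbabilityMeasure (ℕ → B j)) : EReal :=
  PhiStar (μ : Measure (ℕ → B j)) φ +
    ((∑ i ∈ Finset.range k, w i *
      ent (X (j + i)) ((μ : Measure (ℕ → B j)).map (blockMap (tauFrom π j i))) : ℝ) : EReal)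

/-- weighted equilibrium states along a chain -/
def wEqSetGen {B : ℕ → Type} [∀ i, Fintype (B i)] [∀ i, MeasurableSpace (B i)]
    (π : ∀ i, B i → B (i+1)) (X : ∀ i, Set (ℕ → B i)) (j k : ℕ) (w : ℕ → ℝ)
    (φ : ℕ → (ℕ → B j) → ℝ) : Set (ProbabilityMeasure (ℕ → B j)) :=
  {μ | μ ∈ MInv (X j) ∧
    wValGen π X j k w φ μ = ⨆ η ∈ MInv (X j), wValGen π X j k w φ η}

end

set_option linter.unusedSectionVars false

noncomputable section

/-- the finset of words of length `n` -/
def words (A : Type) [Fintype A] (n : ℕ) : Finset (List A) :=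
  Finset.univ.image (fun w : Fin n → A => List.ofFn w)

lemma mem_words {A : Type} [Fintype A] {n : ℕ} {l : List A} : l ∈ words A n ↔ l.length = n := by
  unfold words
  simp only [Finset.mem_image, Finset.mem_univ, true_and]
  constructor
  · rintro ⟨w, rfl⟩; simp
  · rintro rfl; exact ⟨l.get, List.ofFn_get l⟩

lemma sum_words_ofFn {A : Type} [Fintype A] (n : ℕ) (g : List A → ℝ) :
    ∑ w : Fin n → A, g (List.ofFn w) = ∑ I ∈ words A n, g I := by
  unfold words
  rw [Finset.sum_image]
  intro a _ b _ h
  exact List.ofFn_injective h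

lemma words_zero {A : Type} [Fintype A] : words A 0 = {[]} := by
  ext l; simp [mem_words]

lemma sum_words_add {A : Type} [Fintype A] (n m : ℕ) (g : List A → ℝ) :
    ∑ W ∈ words A (n + m), g W = ∑ U ∈ words A n, ∑ V ∈ words A m, g (U ++ V) := by
  rw [← Finset.sum_product']
  refine Finset.sum_nbij' (fun W => (W.take n, W.drop n)) (fun P => P.1 ++ P.2) ?_ ?_ ?_ ?_ ?_
  · intro W hW
    simp only [mem_words, Finset.mem_product] at *
    simp [hW]
  · rintro ⟨U, V⟩ h
    simp only [mem_words, Finset.mem_product] at *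
    simp [h.1, h.2]
  · intro W hW; simp
  · rintro ⟨U, V⟩ h
    simp only [mem_words, Finset.mem_product] at *
    simp [← h.1]
  · intro W hW; simp

lemma mem_cyl_iff {A : Type} {I : List A} {x : ℕ → A} : x ∈ cyl I ↔ wordOf x I.length = I := by
  unfold cyl wordOf
  constructor
  · intro h
    apply List.ext_get (by simp)
    intro n h1 h2
    simpa using h ⟨n, h2⟩
  · intro h i
    have := congrArg (fun l => l[i.1]?) h
    simpa using this

lemma mem_cyl_iff' {A : Type} {I : List A} {x : ℕ → A} :
    x ∈ cyl I ↔ ∀ i (h : i < I.length), x i = I[i] := by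
  unfold cyl
  exact ⟨fun h i hi => h ⟨i, hi⟩, fun h i => h i.1 i.2⟩

lemma length_wordOf {A : Type} (x : ℕ → A) (n : ℕ) : (wordOf x n).length = n := by simp [wordOf]

lemma mem_cyl_wordOf {A : Type} (x : ℕ → A) (n : ℕ) : x ∈ cyl (wordOf x n) := by
  rw [mem_cyl_iff, length_wordOf]

lemma shift_iter_apply {A : Type} (n : ℕ) (x : ℕ → A) (i : ℕ) : (shiftMap^[n] x) i = x (n + i) := by
  induction n generalizing x with
  | zero => simp
  | succ n ih =>
    rw [Function.iterate_succ_apply, ih]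
    simp only [shiftMap]; congr 1; omega

lemma mem_cyl_append {A : Type} {I J : List A} {x : ℕ → A} :
    x ∈ cyl (I ++ J) ↔ x ∈ cyl I ∧ shiftMap^[I.length] x ∈ cyl J := by
  simp only [mem_cyl_iff', shift_iter_apply, List.length_append]
  constructor
  · intro h
    refine ⟨fun i hi => ?_, fun i hi => ?_⟩
    · rw [h i (by omega), List.getElem_append_left]
    · rw [h (I.length + i) (by omega), List.getElem_append_right (by omega)]
      simp
  · rintro ⟨h1, h2⟩ i hi
    by_cases hc : i < I.length
    · rw [List.getElem_append_left hc]; exact h1 i hc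
    · rw [List.getElem_append_right (by omega), ← h2 (i - I.length) (by omega)]
      congr 1; omega

lemma cyl_append {A : Type} (I J : List A) :
    cyl (I ++ J) = cyl I ∩ shiftMap^[I.length] ⁻¹' cyl J := by
  ext x; exact mem_cyl_append

lemma cyl_nil {A : Type} : cyl ([] : List A) = Set.univ := by
  ext x; simp [mem_cyl_iff']

lemma cyl_disjoint {A : Type} {I J : List A} (hl : I.length = J.length) (h : I ≠ J) :
    Disjoint (cyl I) (cyl J) := by
  rw [Set.disjoint_left]
  intro x h1 h2
  rw [mem_cyl_iff] at h1 h2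
  exact h (by rw [← h1, ← h2, hl])

lemma mem_cyl_map {A B : Type} (t : A → B) {I : List A} {x : ℕ → A} (h : x ∈ cyl I) :
    blockMap t x ∈ cyl (I.map t) := by
  rw [mem_cyl_iff'] at *
  intro i hi
  simp only [blockMap, List.getElem_map]
  rw [h i (by simpa using hi)]

lemma wordOf_blockMap {A B : Type} (t : A → B) (x : ℕ → A) (n : ℕ) :
    wordOf (blockMap t x) n = (wordOf x n).map t := by
  simp [wordOf, List.map_ofFn, blockMap, Function.comp_def]

lemma preimage_blockMap_cyl {A B : Type} [Fintype A] (t : A → B) (J : List B) :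
    blockMap t ⁻¹' cyl J = ⋃ I ∈ (words A J.length).filter (fun I => I.map t = J), cyl I := by
  ext x
  simp only [Set.mem_preimage, Set.mem_iUnion, Finset.mem_filter, mem_words]
  constructor
  · intro h
    refine ⟨wordOf x J.length, ⟨length_wordOf _ _, ?_⟩, mem_cyl_wordOf _ _⟩
    rw [← wordOf_blockMap]; exact mem_cyl_iff.1 h
  · rintro ⟨I, ⟨h1, rfl⟩, h3⟩
    exact mem_cyl_map t h3

/-! topology and measurability -/

lemma continuous_shiftMap {A : Type} [TopologicalSpace A] : Continuous (shiftMap (A := A)) := by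
  unfold shiftMap; fun_prop

lemma continuous_blockMap {A B : Type} [TopologicalSpace A] [DiscreteTopology A]
    [TopologicalSpace B] (t : A → B) : Continuous (blockMap t) := by
  unfold blockMap
  have : Continuous t := continuous_of_discreteTopology
  fun_prop

lemma isClopen_cyl {A : Type} [TopologicalSpace A] [DiscreteTopology A] (I : List A) :
    IsClopen (cyl I) := by
  have : cyl I = ⋂ i : Fin I.length, (fun x : ℕ → A => x i) ⁻¹' {I.get i} := by
    ext x; simp [cyl]
  rw [this]
  apply isClopen_iInter_of_finite
  intro i
  exact (isClopen_discrete _).preimage (continuous_apply _)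

/-- one-letter spaces with all our instances -/
lemma measurable_shiftMap {A : Type} [MeasurableSpace A] : Measurable (shiftMap (A := A)) := by
  unfold shiftMap; fun_prop

section meas
variable {A : Type} [Fintype A] [TopologicalSpace A] [DiscreteTopology A]
  [MeasurableSpace A] [BorelSpace A]

lemma measurableSet_cyl (I : List A) : MeasurableSet (cyl I) := (isClopen_cyl I).isClosed.measurableSet

lemma measurable_blockMap {B : Type} [TopologicalSpace B] [Fintype B] [DiscreteTopology B]
    [MeasurableSpace B] [BorelSpace B] (t : A → B) : Measurable (blockMap t) :=
  (continuous_blockMap t).measurable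

lemma real_biUnion_cyl (ρ : Measure (ℕ → A)) [IsFiniteMeasure ρ] (n : ℕ) (s : Finset (List A))
    (hs : ∀ I ∈ s, I.length = n) :
    ρ.real (⋃ I ∈ s, cyl I) = ∑ I ∈ s, ρ.real (cyl I) := by
  rw [measureReal_biUnion_finset]
  · intro I hI J hJ h
    exact cyl_disjoint ((hs I hI).trans (hs J hJ).symm) h
  · intro I _; exact measurableSet_cyl I

lemma biUnion_words (n : ℕ) : (⋃ I ∈ words A n, cyl I) = Set.univ := by
  ext x
  simp only [Set.mem_iUnion, Set.mem_univ, iff_true]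
  exact ⟨wordOf x n, mem_words.2 (length_wordOf _ _), mem_cyl_wordOf _ _⟩

lemma sum_real_cyl (ρ : Measure (ℕ → A)) [IsProbabilityMeasure ρ] (n : ℕ) :
    ∑ I ∈ words A n, ρ.real (cyl I) = 1 := by
  rw [← real_biUnion_cyl ρ n _ (fun I hI => mem_words.1 hI), biUnion_words]
  simp

lemma sum_real_cyl_inter (ρ : Measure (ℕ → A)) [IsFiniteMeasure ρ] (n : ℕ) (T : Set (ℕ → A))
    (hT : MeasurableSet T) :
    ∑ I ∈ words A n, ρ.real (cyl I ∩ T) = ρ.real T := by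
  rw [← measureReal_biUnion_finset]
  · rw [← Set.iUnion₂_inter, biUnion_words, Set.univ_inter]
  · intro I hI J hJ h
    exact (cyl_disjoint ((mem_words.1 hI).trans (mem_words.1 hJ).symm) h).mono
      Set.inter_subset_left Set.inter_subset_left
  · intro I _; exact (measurableSet_cyl I).inter hT

lemma real_cyl_pre (ρ : Measure (ℕ → A)) [IsFiniteMeasure ρ] (I : List A) (m : ℕ) :
    ∑ J ∈ words A m, ρ.real (cyl (I ++ J)) = ρ.real (cyl I) := by
  have hm : ∀ J : List A, MeasurableSet (shiftMap^[I.length] ⁻¹' cyl J) := fun J =>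
    (measurable_shiftMap.iterate _) (measurableSet_cyl J)
  have : ∀ J : List A, cyl (I ++ J) = cyl I ∩ shiftMap^[I.length] ⁻¹' cyl J := cyl_append I
  simp only [this]
  rw [← measureReal_biUnion_finset]
  · congr 1
    rw [← Set.inter_iUnion₂, ← Set.preimage_iUnion₂, biUnion_words]; simp
  · intro J hJ K hK h
    exact ((cyl_disjoint ((mem_words.1 hJ).trans (mem_words.1 hK).symm) h).preimage _).mono
      Set.inter_subset_right Set.inter_subset_right
  · intro J _; exact (measurableSet_cyl I).inter (hm J)

lemma real_cyl_suffix (ρ : Measure (ℕ → A)) [IsFiniteMeasure ρ] (J : List A) (n : ℕ) :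
    ∑ I ∈ words A n, ρ.real (cyl (I ++ J)) = (ρ.map shiftMap^[n]).real (cyl J) := by
  have hm : MeasurableSet (shiftMap^[n] ⁻¹' cyl J) :=
    (measurable_shiftMap.iterate _) (measurableSet_cyl J)
  rw [map_measureReal_apply (measurable_shiftMap.iterate n) (measurableSet_cyl J),
    ← sum_real_cyl_inter ρ n _ hm]
  refine Finset.sum_congr rfl fun I hI => ?_
  rw [cyl_append, mem_words.1 hI]

lemma real_map_blockMap {B : Type} [TopologicalSpace B] [Fintype B] [DiscreteTopology B]
    [MeasurableSpace B] [BorelSpace B] (t : A → B) (ρ : Measure (ℕ → A)) [IsFiniteMeasure ρ]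
    (J : List B) :
    (ρ.map (blockMap t)).real (cyl J) =
      ∑ I ∈ (words A J.length).filter (fun I => I.map t = J), ρ.real (cyl I) := by
  rw [map_measureReal_apply (measurable_blockMap t) (measurableSet_cyl J), preimage_blockMap_cyl,
    real_biUnion_cyl ρ J.length]
  intro I hI
  exact mem_words.1 (Finset.mem_filter.1 hI).1

lemma open_cyl (U : Set (ℕ → A)) (hU : IsOpen U) (x : ℕ → A) (hx : x ∈ U) :
    ∃ n, cyl (wordOf x n) ⊆ U := by
  obtain ⟨F, u, h1, h2⟩ := isOpen_pi_iff.1 hU x hx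
  refine ⟨F.sup id + 1, fun y hy => h2 fun i hi => ?_⟩
  have hi' : i ≤ F.sup id := Finset.le_sup (f := id) hi
  have := (mem_cyl_iff'.1 hy) i (by rw [length_wordOf]; omega)
  rw [this]
  simpa only [wordOf, List.getElem_ofFn] using (h1 i hi).2

lemma cyl_wordOf_mono (x : ℕ → A) {n m : ℕ} (h : n ≤ m) : cyl (wordOf x m) ⊆ cyl (wordOf x n) := by
  intro y hy
  rw [mem_cyl_iff'] at *
  intro i hi
  rw [length_wordOf] at hi
  rw [hy i (by rw [length_wordOf]; omega)]
  simp [wordOf]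

/-- a clopen set is a finite union of cylinders of the same length -/
lemma clopen_eq_cyl (C : Set (ℕ → A)) (hC : IsClopen C) :
    ∃ n, ∃ s : Finset (List A), s ⊆ words A n ∧ C = ⋃ I ∈ s, cyl I := by
  choose n hn using fun x : C => open_cyl C hC.isOpen x.1 x.2
  obtain ⟨t, ht⟩ := hC.isClosed.isCompact.elim_finite_subcover (fun x : C => cyl (wordOf x.1 (n x)))
    (fun x => (isClopen_cyl _).isOpen) (fun x hx => Set.mem_iUnion.2 ⟨⟨x, hx⟩, mem_cyl_wordOf _ _⟩)
  refine ⟨t.sup n, (words A (t.sup n)).filter (fun I => cyl I ⊆ C), Finset.filter_subset _ _, ?_⟩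
  ext x
  simp only [Set.mem_iUnion, Finset.mem_filter, mem_words]
  constructor
  · intro hx
    obtain ⟨y, hy, hxy⟩ := Set.mem_iUnion₂.1 (ht hx)
    refine ⟨wordOf x (t.sup n), ⟨length_wordOf _ _, ?_⟩, mem_cyl_wordOf _ _⟩
    refine (cyl_wordOf_mono x (Finset.le_sup hy)).trans ?_
    rw [mem_cyl_iff, length_wordOf] at hxy
    rw [hxy]; exact hn y
  · rintro ⟨I, ⟨_, h⟩, hx⟩; exact h hx

/-- measures are determined by cylinders -/
lemma ext_cyl (ρ₁ ρ₂ : Measure (ℕ → A)) [IsProbabilityMeasure ρ₁] [IsProbabilityMeasure ρ₂]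
    (h : ∀ I : List A, ρ₁.real (cyl I) = ρ₂.real (cyl I)) : ρ₁ = ρ₂ := by
  refine ext_of_generate_finite {C : Set (ℕ → A) | IsClopen C} ?_ ?_ ?_ (by simp)
  · rw [← (isTopologicalBasis_isClopen (X := ℕ → A)).borel_eq_generateFrom]
    exact BorelSpace.measurable_eq
  · intro s hs t ht _
    exact IsClopen.inter hs ht
  · intro C hC
    obtain ⟨n, s, hs, rfl⟩ := clopen_eq_cyl C hC
    have hl : ∀ I ∈ s, I.length = n := fun I hI => mem_words.1 (hs hI)
    rw [← measureReal_eq_measureReal_iff (measure_ne_top _ _) (measure_ne_top _ _), real_biUnion_cyl _ n s hl, real_biUnion_cyl _ n s hl]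
    exact Finset.sum_congr rfl fun I _ => h I

end meas
end

set_option linter.unusedSectionVars false

noncomputable section

/-- Gibbs inequality -/
lemma gibbs {ι : Type*} (s : Finset ι) (p q : ι → ℝ) (hp : ∀ i ∈ s, 0 ≤ p i)
    (hq : ∀ i ∈ s, 0 ≤ q i) (hpq : ∀ i ∈ s, q i = 0 → p i = 0)
    (hsum : ∑ i ∈ s, q i ≤ ∑ i ∈ s, p i) :
    ∑ i ∈ s, Real.negMulLog (p i) ≤ -∑ i ∈ s, p i * Real.log (q i) := by
  have key : ∀ i ∈ s, Real.negMulLog (p i) + p i * Real.log (q i) ≤ q i - p i := by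
    intro i hi
    rcases (hp i hi).eq_or_lt with h | h
    · rw [← h]; simpa using hq i hi
    · have hqi : 0 < q i := lt_of_le_of_ne (hq i hi) fun h0 => h.ne' (hpq i hi h0.symm)
      have := Real.log_le_sub_one_of_pos (div_pos hqi h)
      rw [Real.log_div hqi.ne' h.ne'] at this
      have h2 := mul_le_mul_of_nonneg_left this h.le
      have h3 : p i * (q i / p i - 1) = q i - p i := by field_simp
      rw [Real.negMulLog]
      nlinarith
  have := Finset.sum_le_sum key
  rw [Finset.sum_add_distrib, Finset.sum_sub_distrib] at this
  linarith

section H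
variable {A : Type} [Fintype A] [TopologicalSpace A] [DiscreteTopology A]
  [MeasurableSpace A] [BorelSpace A]

/-- block entropy of a measure on the full shift -/
def HH (ρ : Measure (ℕ → A)) (n : ℕ) : ℝ :=
  ∑ I ∈ words A n, Real.negMulLog (ρ.real (cyl I))

lemma HH_nonneg (ρ : Measure (ℕ → A)) [IsProbabilityMeasure ρ] (n : ℕ) : 0 ≤ HH ρ n :=
  Finset.sum_nonneg fun _ _ => Real.negMulLog_nonneg measureReal_nonneg measureReal_le_one

lemma HH_le (ρ : Measure (ℕ → A)) [IsProbabilityMeasure ρ] (n : ℕ) :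
    HH ρ n ≤ (words A n).card := by
  calc HH ρ n ≤ ∑ I ∈ words A n, (1:ℝ) := by
        refine Finset.sum_le_sum fun I _ => ?_
        have h0 : 0 ≤ ρ.real (cyl I) := measureReal_nonneg
        have := Real.negMulLog_le_one_sub_self h0
        linarith
    _ = _ := by simp

lemma HH_add (ρ : Measure (ℕ → A)) [IsProbabilityMeasure ρ] (n m : ℕ) :
    HH ρ (n + m) ≤ HH ρ n + HH (ρ.map shiftMap^[n]) m := by
  set p1 : List A → ℝ := fun I => ρ.real (cyl I)
  set p2 : List A → ℝ := fun J => (ρ.map shiftMap^[n]).real (cyl J)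
  have : IsProbabilityMeasure (ρ.map shiftMap^[n]) :=
    Measure.isProbabilityMeasure_map (measurable_shiftMap.iterate n).aemeasurable
  have hpre : ∀ I ∈ words A n, ∑ J ∈ words A m, p1 (I ++ J) = p1 I := fun I _ =>
    real_cyl_pre ρ I m
  have hsuf : ∀ J ∈ words A m, ∑ I ∈ words A n, p1 (I ++ J) = p2 J := fun J _ =>
    real_cyl_suffix ρ J n
  have h0 : ∀ I, 0 ≤ p1 I := fun I => measureReal_nonneg
  have h02 : ∀ I, 0 ≤ p2 I := fun I => measureReal_nonneg
  have z1 : ∀ I ∈ words A n, ∀ J ∈ words A m, p1 I = 0 → p1 (I ++ J) = 0 := by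
    intro I hI J hJ h
    refine le_antisymm ?_ (h0 _)
    rw [← h, ← hpre I hI]
    exact Finset.single_le_sum (f := fun J => p1 (I ++ J)) (fun _ _ => h0 _) hJ
  have z2 : ∀ I ∈ words A n, ∀ J ∈ words A m, p2 J = 0 → p1 (I ++ J) = 0 := by
    intro I hI J hJ h
    refine le_antisymm ?_ (h0 _)
    rw [← h, ← hsuf J hJ]
    exact Finset.single_le_sum (f := fun I => p1 (I ++ J)) (fun _ _ => h0 _) hI
  have e1 : HH ρ (n + m) = ∑ P ∈ words A n ×ˢ words A m, Real.negMulLog (p1 (P.1 ++ P.2)) := by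
    unfold HH
    rw [sum_words_add, ← Finset.sum_product']
  have s1 : ∑ I ∈ words A n, p1 I = 1 := sum_real_cyl ρ n
  have s2 : ∑ I ∈ words A m, p2 I = 1 := sum_real_cyl _ m
  rw [e1]
  refine (gibbs _ _ (fun P => p1 P.1 * p2 P.2) (fun _ _ => h0 _) (fun _ _ => mul_nonneg (h0 _) (h02 _))
    ?_ ?_).trans ?_
  · rintro ⟨I, J⟩ h hz
    rw [Finset.mem_product] at h
    rcases mul_eq_zero.1 hz with h1 | h1
    · exact z1 I h.1 J h.2 h1
    · exact z2 I h.1 J h.2 h1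
  · rw [Finset.sum_product' (f := fun I J => p1 I * p2 J),
      Finset.sum_product' (f := fun I J => p1 (I ++ J)), Finset.sum_congr rfl hpre, s1]
    simp only [← Finset.mul_sum, s2, mul_one, s1, le_refl]
  · rw [Finset.sum_product' (f := fun I J => p1 (I ++ J) * Real.log (p1 I * p2 J))]
    have : ∀ I ∈ words A n, ∀ J ∈ words A m, p1 (I ++ J) * Real.log (p1 I * p2 J) =
        p1 (I ++ J) * Real.log (p1 I) + p1 (I ++ J) * Real.log (p2 J) := by
      intro I hI J hJ
      by_cases h : p1 (I ++ J) = 0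
      · simp [h]
      · rw [Real.log_mul (fun h' => h (z1 I hI J hJ h')) (fun h' => h (z2 I hI J hJ h'))]; ring
    rw [Finset.sum_congr rfl fun I hI => Finset.sum_congr rfl (this I hI)]
    simp only [Finset.sum_add_distrib]
    rw [Finset.sum_comm (f := fun I J => p1 (I ++ J) * Real.log (p2 J))]
    simp only [← Finset.sum_mul]
    have r1 : ∑ I ∈ words A n, (∑ J ∈ words A m, p1 (I ++ J)) * Real.log (p1 I) =
        ∑ I ∈ words A n, p1 I * Real.log (p1 I) :=
      Finset.sum_congr rfl fun I hI => by rw [hpre I hI]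
    have r2 : ∑ J ∈ words A m, (∑ I ∈ words A n, p1 (I ++ J)) * Real.log (p2 J) =
        ∑ J ∈ words A m, p2 J * Real.log (p2 J) :=
      Finset.sum_congr rfl fun I hI => by rw [hsuf I hI]
    rw [r1, r2]
    apply le_of_eq
    simp only [HH, Real.negMulLog, neg_mul, Finset.sum_neg_distrib]
    simp only [p1, p2]; ring

lemma HH_mono (ρ : Measure (ℕ → A)) [IsProbabilityMeasure ρ] (n m : ℕ) :
    HH ρ n ≤ HH ρ (n + m) := by
  unfold HH
  rw [sum_words_add]
  refine Finset.sum_le_sum fun I hI => ?_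
  have hpre := real_cyl_pre ρ I m
  have h0 : ∀ I, 0 ≤ ρ.real (cyl I) := fun I => measureReal_nonneg
  have : ∀ J ∈ words A m, - (ρ.real (cyl (I ++ J)) * Real.log (ρ.real (cyl I))) ≤
      Real.negMulLog (ρ.real (cyl (I ++ J))) := by
    intro J hJ
    rw [Real.negMulLog, neg_mul, neg_le_neg_iff]
    rcases (h0 (I ++ J)).eq_or_lt with h | h
    · rw [← h]; simp
    · refine mul_le_mul_of_nonneg_left (Real.log_le_log h ?_) h.le
      rw [← hpre]
      exact Finset.single_le_sum (f := fun J => ρ.real (cyl (I ++ J))) (fun _ _ => h0 _) hJ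
  refine le_trans (le_of_eq ?_) (Finset.sum_le_sum this)
  rw [Finset.sum_neg_distrib, ← Finset.sum_mul, hpre, Real.negMulLog]; ring

lemma map_shift_prob (ρ : Measure (ℕ → A)) [IsProbabilityMeasure ρ] (n : ℕ) :
    IsProbabilityMeasure (ρ.map shiftMap^[n]) :=
  Measure.isProbabilityMeasure_map (measurable_shiftMap.iterate n).aemeasurable

/-- Misiurewicz-type estimate -/
lemma HH_misi (ρ : Measure (ℕ → A)) [IsProbabilityMeasure ρ] (N m : ℕ) :
    m * HH ρ N ≤ ∑ t ∈ Finset.range N, HH (ρ.map shiftMap^[t]) m +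
      ∑ r ∈ Finset.range m, ((words A r).card : ℝ) := by
  have h1 : ∑ r ∈ Finset.range m, HH ρ (N + r) ≤ ∑ t ∈ Finset.range N, HH (ρ.map shiftMap^[t]) m +
      ∑ r ∈ Finset.range m, ((words A r).card : ℝ) := by
    induction N with
    | zero => simpa using Finset.sum_le_sum fun r _ => HH_le ρ r
    | succ N ih =>
      rw [Finset.sum_range_succ]
      have e : ∑ r ∈ Finset.range m, HH ρ (N + 1 + r) + HH ρ N =
          ∑ r ∈ Finset.range m, HH ρ (N + r) + HH ρ (N + m) := by
        rw [← Finset.sum_range_succ (fun r => HH ρ (N + r)), Finset.sum_range_succ']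
        simp only [add_zero]
        congr 1
        exact Finset.sum_congr rfl fun r _ => by congr 1; ring
      have := HH_add ρ N m
      linarith
  refine le_trans ?_ h1
  calc m * HH ρ N = ∑ r ∈ Finset.range m, HH ρ N := by simp
    _ ≤ _ := Finset.sum_le_sum fun r _ => HH_mono ρ N r

/-- concavity of the block entropy -/
lemma HH_concave (N m : ℕ) (hN : 0 < N) (ρ : ℕ → Measure (ℕ → A)) (ν : Measure (ℕ → A))
    (h : ∀ I : List A, N * ν.real (cyl I) = ∑ t ∈ Finset.range N, (ρ t).real (cyl I)) :
    ∑ t ∈ Finset.range N, HH (ρ t) m ≤ N * HH ν m := by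
  unfold HH
  rw [Finset.sum_comm, Finset.mul_sum]
  refine Finset.sum_le_sum fun I _ => ?_
  have hN' : (0:ℝ) < N := by exact_mod_cast hN
  have := Real.concaveOn_negMulLog.le_map_sum (t := Finset.range N) (w := fun _ => (N:ℝ)⁻¹)
    (p := fun t => (ρ t).real (cyl I)) (fun _ _ => by positivity)
    (by simp [hN'.ne']) (fun _ _ => measureReal_nonneg)
  simp only [smul_eq_mul, ← Finset.mul_sum, ← h] at this
  rw [inv_mul_cancel_left₀ hN'.ne', inv_mul_le_iff₀ hN'] at this
  exact this

/-- entropy limit for invariant measures -/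
lemma HH_tendsto (η : Measure (ℕ → A)) [IsProbabilityMeasure η] (hη : η.map shiftMap = η) :
    ∃ h : ℝ, Tendsto (fun n : ℕ => HH η n / n) atTop (𝓝 h) ∧ ∀ n : ℕ, n * h ≤ HH η n := by
  have hit : ∀ n, η.map shiftMap^[n] = η := by
    intro n
    exact ((MeasurePreserving.mk measurable_shiftMap hη).iterate n).map_eq
  have hs : Subadditive (fun n => HH η n) := by
    intro n m
    have := HH_add η n m
    rwa [hit] at this
  have hb : BddBelow (Set.range fun n : ℕ => HH η n / n) :=
    ⟨0, by rintro _ ⟨n, rfl⟩; exact div_nonneg (HH_nonneg η n) (by positivity)⟩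
  refine ⟨hs.lim, hs.tendsto_lim hb, fun n => ?_⟩
  rcases Nat.eq_zero_or_pos n with rfl | hn
  · simpa using HH_nonneg η 0
  · have := hs.lim_le_div hb hn.ne'
    have hn' : (0:ℝ) < n := by exact_mod_cast hn
    rwa [le_div_iff₀ hn', mul_comm] at this

lemma Hblock_eq (X : Set (ℕ → A)) (hX : MeasurableSet X) (μ : Measure (ℕ → A))
    [IsProbabilityMeasure μ] (h : μ X = 1) (n : ℕ) : Hblock X μ n = HH μ n := by
  have hm : ∀ I : List A, mw X μ I = μ.real (cyl I) := by
    intro I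
    unfold mw Measure.real
    congr 1
    exact measure_inter_conull ((prob_compl_eq_zero_iff hX).2 h)
  unfold Hblock HH
  rw [sum_words_ofFn n (fun I => mw X μ I * Real.log (mw X μ I)), ← Finset.sum_neg_distrib]
  refine Finset.sum_congr rfl fun I _ => ?_
  rw [hm, Real.negMulLog]; ring

lemma ent_spec (X : Set (ℕ → A)) (hX : MeasurableSet X) (η : Measure (ℕ → A))
    [IsProbabilityMeasure η] (h : η X = 1) (hη : η.map shiftMap = η) :
    Tendsto (fun n : ℕ => HH η n / n) atTop (𝓝 (ent X η)) ∧ ∀ n : ℕ, n * ent X η ≤ HH η n := by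
  obtain ⟨l, h1, h2⟩ := HH_tendsto η hη
  have : ent X η = l := by
    unfold ent
    simp only [Hblock_eq X hX η h]
    exact h1.liminf_eq
  rw [this]; exact ⟨h1, h2⟩

end H
end

set_option linter.unusedSectionVars false

noncomputable section

section lang
variable {A : Type}

lemma Lang.left {X : Set (ℕ → A)} {I J : List A} (h : Lang X (I ++ J)) : Lang X I := by
  obtain ⟨x, h1, h2⟩ := h
  exact ⟨x, (mem_cyl_append.1 h1).1, h2⟩

lemma shift_iter_mem {X : Set (ℕ → A)} (hX : shiftMap '' X ⊆ X) {x : ℕ → A} (hx : x ∈ X) (n : ℕ) :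
    shiftMap^[n] x ∈ X := by
  induction n with
  | zero => exact hx
  | succ n ih => rw [Function.iterate_succ_apply']; exact hX ⟨_, ih, rfl⟩

lemma Lang.right {X : Set (ℕ → A)} (hX : shiftMap '' X ⊆ X) {I J : List A}
    (h : Lang X (I ++ J)) : Lang X J := by
  obtain ⟨x, h1, h2⟩ := h
  exact ⟨_, (mem_cyl_append.1 h1).2, shift_iter_mem hX h2 _⟩

lemma Lang.extend {X : Set (ℕ → A)} {I : List A} (h : Lang X I) (r : ℕ) :
    ∃ V : List A, V.length = r ∧ Lang X (I ++ V) := by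
  obtain ⟨x, h1, h2⟩ := h
  exact ⟨wordOf (shiftMap^[I.length] x) r, length_wordOf _ _, x,
    mem_cyl_append.2 ⟨h1, mem_cyl_wordOf _ _⟩, h2⟩

lemma Lang.extend_left {X : Set (ℕ → A)} (hne : X.Nonempty) (hX : shiftMap '' X ⊆ X) {p : ℕ}
    (hw : WeakSpecification X p) {I : List A} (h : Lang X I) (r : ℕ) :
    ∃ U : List A, U.length = r ∧ Lang X (U ++ I) := by
  induction r with
  | zero => exact ⟨[], rfl, h⟩
  | succ r ih =>
    obtain ⟨U, hU, hL⟩ := ih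
    obtain ⟨x, hx⟩ := hne
    obtain ⟨K, -, hK⟩ := hw [x 0] (U ++ I) ⟨x, by simp [mem_cyl_iff'], hx⟩ hL
    obtain ⟨L, b, hLb⟩ : ∃ (L : List A) (b : A), [x 0] ++ K = L ++ [b] :=
      ⟨([x 0] ++ K).dropLast, ([x 0] ++ K).getLast (by simp), (List.dropLast_append_getLast _).symm⟩
    rw [hLb, List.append_assoc] at hK
    refine ⟨b :: U, by simp [hU], ?_⟩
    simpa using hK.right hX
end lang

/-- The hypotheses on the normalised weights. -/
structure OmW {A : Type} [Fintype A] (X : Set (ℕ → A)) (f : List A → ℝ) : Prop where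
  nonneg : ∀ I, 0 ≤ f I
  supp : ∀ I, f I ≠ 0 → Lang X I
  sum_one : ∀ n, ∑ I ∈ words A n, f I = 1
  mul : ∀ r : ℕ, ∃ c > 0, ∀ I K J : List A, K.length ≤ r → Lang X (I ++ K ++ J) →
    c * (f I * f J) ≤ f (I ++ K ++ J)

/-- two-sided extension sums -/
def FF {A : Type} [Fintype A] (f : List A → ℝ) (m n : ℕ) (I : List A) : ℝ :=
  ∑ U ∈ words A m, ∑ V ∈ words A n, f (U ++ I ++ V)

section comb
variable {A : Type} [Fintype A] {X : Set (ℕ → A)} {f : List A → ℝ}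

lemma OmW.nil (h : OmW X f) : f [] = 1 := by
  have := h.sum_one 0
  simpa [words_zero] using this

/-- `D` is a set of admissible gap lengths -/
def GapSet (X : Set (ℕ → A)) (D : Finset ℕ) : Prop :=
  ∀ I J : List A, Lang X I → Lang X J → ∃ K : List A, K.length ∈ D ∧ Lang X (I ++ K ++ J)

lemma sum_sigma_ge {c : ℝ} (D : Finset ℕ) (g : List A → ℝ) (hg : ∀ K, 0 ≤ g K) (K : List A)
    (hK : K.length ∈ D) (h : c ≤ g K) : c ≤ ∑ d ∈ D, ∑ K ∈ words A d, g K := by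
  refine h.trans ?_
  refine le_trans ?_ (Finset.single_le_sum (f := fun d => ∑ K ∈ words A d, g K)
    (fun d _ => Finset.sum_nonneg fun _ _ => hg _) hK)
  exact Finset.single_le_sum (f := g) (fun _ _ => hg _) (mem_words.2 rfl)

lemma OmW.gap (h : OmW X f) (D : Finset ℕ) (hD : GapSet X D) :
    ∃ c > 0, ∀ I J : List A, c * (f I * f J) ≤ ∑ d ∈ D, ∑ K ∈ words A d, f (I ++ K ++ J) := by
  obtain ⟨c, hc, hm⟩ := h.mul (D.sup id)
  refine ⟨c, hc, fun I J => ?_⟩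
  by_cases hI : f I = 0
  · rw [hI]; simpa using Finset.sum_nonneg fun d _ => Finset.sum_nonneg fun _ _ => h.nonneg _
  by_cases hJ : f J = 0
  · rw [hJ]; simpa using Finset.sum_nonneg fun d _ => Finset.sum_nonneg fun _ _ => h.nonneg _
  obtain ⟨K, hK, hL⟩ := hD I J (h.supp I hI) (h.supp J hJ)
  exact sum_sigma_ge D (fun K => f (I ++ K ++ J)) (fun _ => h.nonneg _) K hK
    (hm I K J (Finset.le_sup (f := id) hK) hL)

lemma OmW.ext_right (h : OmW X f) (p : ℕ) :
    ∃ c > 0, ∀ r ≤ p, ∀ I : List A, c * f I ≤ ∑ V ∈ words A r, f (I ++ V) := by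
  obtain ⟨c, hc, hm⟩ := h.mul p
  refine ⟨c, hc, fun r hr I => ?_⟩
  by_cases hI : f I = 0
  · rw [hI, mul_zero]; exact Finset.sum_nonneg fun _ _ => h.nonneg _
  obtain ⟨V, hV, hL⟩ := (h.supp I hI).extend r
  have := hm I V [] (by omega) (by simpa using hL)
  rw [h.nil, mul_one, List.append_nil] at this
  exact this.trans (Finset.single_le_sum (f := fun V => f (I ++ V)) (fun _ _ => h.nonneg _)
    (mem_words.2 hV))

lemma OmW.ext_left (h : OmW X f) (p : ℕ)
    (hl : ∀ (I : List A) (r : ℕ), Lang X I → ∃ U : List A, U.length = r ∧ Lang X (U ++ I)) :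
    ∃ c > 0, ∀ r ≤ p, ∀ I : List A, c * f I ≤ ∑ V ∈ words A r, f (V ++ I) := by
  obtain ⟨c, hc, hm⟩ := h.mul p
  refine ⟨c, hc, fun r hr I => ?_⟩
  by_cases hI : f I = 0
  · rw [hI, mul_zero]; exact Finset.sum_nonneg fun _ _ => h.nonneg _
  obtain ⟨V, hV, hL⟩ := hl I r (h.supp I hI)
  have := hm [] V I (by omega) (by simpa using hL)
  rw [h.nil, one_mul, List.nil_append] at this
  exact this.trans (Finset.single_le_sum (f := fun V => f (V ++ I)) (fun _ _ => h.nonneg _)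
    (mem_words.2 hV))

lemma OmW.long_right (h : OmW X f) (p : ℕ) (hD : GapSet X (Finset.range (p+1))) :
    ∃ c > 0, ∀ n, p ≤ n → ∀ I : List A, c * f I ≤ ∑ V ∈ words A n, f (I ++ V) := by
  obtain ⟨c, hc, hg⟩ := h.gap _ hD
  obtain ⟨e, he, hx⟩ := h.ext_right p
  refine ⟨c * e / (p+1), by positivity, fun n hn I => ?_⟩
  obtain ⟨n', rfl⟩ := Nat.exists_eq_add_of_le hn
  have h1 : c * f I ≤ ∑ d ∈ Finset.range (p+1), ∑ W ∈ words A (d + n'), f (I ++ W) := by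
    calc c * f I = ∑ V ∈ words A n', c * (f I * f V) := by
          rw [← Finset.mul_sum, ← Finset.mul_sum, h.sum_one, mul_one]
      _ ≤ ∑ V ∈ words A n', ∑ d ∈ Finset.range (p+1), ∑ K ∈ words A d, f (I ++ K ++ V) :=
          Finset.sum_le_sum fun V _ => hg I V
      _ = _ := by
          rw [Finset.sum_comm]
          refine Finset.sum_congr rfl fun d _ => ?_
          rw [Finset.sum_comm, sum_words_add]
          simp only [List.append_assoc]
  have h2 : ∀ d ∈ Finset.range (p+1), e * ∑ W ∈ words A (d + n'), f (I ++ W) ≤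
      ∑ V ∈ words A (p + n'), f (I ++ V) := by
    intro d hd
    rw [Finset.mem_range] at hd
    have e1 : p + n' = (d + n') + (p - d) := by omega
    rw [e1, sum_words_add (d + n') (p - d), Finset.mul_sum]
    refine Finset.sum_le_sum fun W _ => ?_
    simpa only [List.append_assoc] using hx (p - d) (by omega) (I ++ W)
  have h3 : _ ≤ _ := Finset.sum_le_sum (N := ℝ) h2
  rw [← Finset.mul_sum] at h3
  simp only [Finset.sum_const, Finset.card_range, nsmul_eq_mul] at h3
  push_cast at h3
  rw [div_mul_eq_mul_div, div_le_iff₀ (by positivity)]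
  nlinarith [mul_le_mul_of_nonneg_left h1 he.le]

lemma OmW.long_left (h : OmW X f) (p : ℕ) (hD : GapSet X (Finset.range (p+1)))
    (hl : ∀ (I : List A) (r : ℕ), Lang X I → ∃ U : List A, U.length = r ∧ Lang X (U ++ I)) :
    ∃ c > 0, ∀ n, p ≤ n → ∀ I : List A, c * f I ≤ ∑ V ∈ words A n, f (V ++ I) := by
  obtain ⟨c, hc, hg⟩ := h.gap _ hD
  obtain ⟨e, he, hx⟩ := h.ext_left p hl
  refine ⟨c * e / (p+1), by positivity, fun n hn I => ?_⟩
  obtain ⟨n', rfl⟩ := Nat.exists_eq_add_of_le hn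
  have h1 : c * f I ≤ ∑ d ∈ Finset.range (p+1), ∑ W ∈ words A (n' + d), f (W ++ I) := by
    calc c * f I = ∑ V ∈ words A n', c * (f V * f I) := by
          rw [← Finset.mul_sum, ← Finset.sum_mul, h.sum_one, one_mul]
      _ ≤ ∑ V ∈ words A n', ∑ d ∈ Finset.range (p+1), ∑ K ∈ words A d, f (V ++ K ++ I) :=
          Finset.sum_le_sum fun V _ => hg V I
      _ = _ := by
          rw [Finset.sum_comm]
          refine Finset.sum_congr rfl fun d _ => ?_
          rw [sum_words_add]
  have h2 : ∀ d ∈ Finset.range (p+1), e * ∑ W ∈ words A (n' + d), f (W ++ I) ≤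
      ∑ V ∈ words A (p + n'), f (V ++ I) := by
    intro d hd
    rw [Finset.mem_range] at hd
    have e1 : p + n' = (p - d) + (n' + d) := by omega
    rw [e1, sum_words_add (p - d) (n' + d), Finset.sum_comm, Finset.mul_sum]
    refine Finset.sum_le_sum fun W _ => ?_
    simpa only [List.append_assoc] using hx (p - d) (by omega) (W ++ I)
  have h3 : _ ≤ _ := Finset.sum_le_sum (N := ℝ) h2
  rw [← Finset.mul_sum] at h3
  simp only [Finset.sum_const, Finset.card_range, nsmul_eq_mul] at h3
  push_cast at h3
  rw [div_mul_eq_mul_div, div_le_iff₀ (by positivity)]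
  nlinarith [mul_le_mul_of_nonneg_left h1 he.le]

lemma FF_nonneg (h : OmW X f) (m n : ℕ) (I : List A) : 0 ≤ FF f m n I :=
  Finset.sum_nonneg fun _ _ => Finset.sum_nonneg fun _ _ => h.nonneg _

lemma OmW.FF_right (h : OmW X f) (p : ℕ) (hD : GapSet X (Finset.range (p+1))) :
    ∃ c > 0, ∀ m n s, p ≤ s → ∀ I : List A, c * FF f m n I ≤ FF f m (n + s) I := by
  obtain ⟨c, hc, hr⟩ := h.long_right p hD
  refine ⟨c, hc, fun m n s hs I => ?_⟩
  unfold FF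
  rw [Finset.mul_sum]
  refine Finset.sum_le_sum fun U _ => ?_
  rw [Finset.mul_sum, sum_words_add]
  refine Finset.sum_le_sum fun V _ => ?_
  simpa only [List.append_assoc] using hr s hs (U ++ I ++ V)

lemma OmW.FF_left (h : OmW X f) (p : ℕ) (hD : GapSet X (Finset.range (p+1)))
    (hl : ∀ (I : List A) (r : ℕ), Lang X I → ∃ U : List A, U.length = r ∧ Lang X (U ++ I)) :
    ∃ c > 0, ∀ m n t, p ≤ t → ∀ I : List A, c * FF f m n I ≤ FF f (t + m) n I := by
  obtain ⟨c, hc, hr⟩ := h.long_left p hD hl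
  refine ⟨c, hc, fun m n s hs I => ?_⟩
  unfold FF
  rw [Finset.sum_comm, Finset.mul_sum, Finset.sum_comm (s := words A (s + m))]
  refine Finset.sum_le_sum fun U _ => ?_
  rw [Finset.mul_sum, sum_words_add, Finset.sum_comm]
  refine Finset.sum_le_sum fun V _ => ?_
  simpa only [List.append_assoc] using hr s hs (V ++ I ++ U)

lemma OmW.FF_both (h : OmW X f) (p : ℕ) (hD : GapSet X (Finset.range (p+1)))
    (hl : ∀ (I : List A) (r : ℕ), Lang X I → ∃ U : List A, U.length = r ∧ Lang X (U ++ I)) :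
    ∃ c > 0, ∀ m n m' n', m + p ≤ m' → n + p ≤ n' → ∀ I : List A,
      c * FF f m n I ≤ FF f m' n' I := by
  obtain ⟨c, hc, hr⟩ := h.FF_right p hD
  obtain ⟨e, he, hl⟩ := h.FF_left p hD hl
  refine ⟨e * c, by positivity, fun m n m' n' hm hn I => ?_⟩
  have h1 := hr m n (n' - n) (by omega) I
  have h2 := hl m (n + (n' - n)) (m' - m) (by omega) I
  rw [show n + (n' - n) = n' by omega, show m' - m + m = m' by omega] at h2
  rw [show n + (n' - n) = n' by omega] at h1
  nlinarith [mul_le_mul_of_nonneg_left h1 he.le]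

lemma OmW.FF_mix (h : OmW X f) (D : Finset ℕ) (hD : GapSet X D) :
    ∃ c > 0, ∀ m₁ m₂ m₃ m₄, ∀ I J : List A, c * (FF f m₁ m₂ I * FF f m₃ m₄ J) ≤
      ∑ d ∈ D, ∑ G ∈ words A (m₂ + d + m₃), FF f m₁ m₄ (I ++ G ++ J) := by
  obtain ⟨c, hc, hg⟩ := h.gap _ hD
  refine ⟨c, hc, fun m₁ m₂ m₃ m₄ I J => ?_⟩
  calc c * (FF f m₁ m₂ I * FF f m₃ m₄ J) =
      ∑ U ∈ words A m₁, ∑ V ∈ words A m₂, ∑ U' ∈ words A m₃, ∑ V' ∈ words A m₄,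
        c * (f (U ++ I ++ V) * f (U' ++ J ++ V')) := by
        unfold FF
        simp only [Finset.sum_mul]
        simp only [Finset.mul_sum]
    _ ≤ ∑ U ∈ words A m₁, ∑ V ∈ words A m₂, ∑ U' ∈ words A m₃, ∑ V' ∈ words A m₄,
        ∑ d ∈ D, ∑ K ∈ words A d, f ((U ++ I ++ V) ++ K ++ (U' ++ J ++ V')) := by
        gcongr; exact hg _ _
    _ = ∑ d ∈ D, ∑ U ∈ words A m₁, ∑ V ∈ words A m₂, ∑ U' ∈ words A m₃, ∑ V' ∈ words A m₄,
        ∑ K ∈ words A d, f ((U ++ I ++ V) ++ K ++ (U' ++ J ++ V')) := by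
        simp only [Finset.sum_comm (t := D)]
    _ = _ := by
        refine Finset.sum_congr rfl fun d _ => ?_
        unfold FF
        rw [Finset.sum_comm (t := words A m₁)]
        refine Finset.sum_congr rfl fun U _ => ?_
        rw [sum_words_add, sum_words_add]
        refine Finset.sum_congr rfl fun V _ => ?_
        rw [Finset.sum_comm (s := words A d)]
        refine Finset.sum_congr rfl fun U' _ => ?_
        rw [Finset.sum_comm]
        simp only [List.append_assoc]

end comb
end

set_option linter.unusedSectionVars false

noncomputable section

lemma blockMap_shift {A B : Type} (t : A → B) (n : ℕ) (x : ℕ → A) :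
    blockMap t (shiftMap^[n] x) = shiftMap^[n] (blockMap t x) := by
  funext i
  simp [blockMap, shift_iter_apply]

section
variable {A : Type} [Fintype A] [TopologicalSpace A] [DiscreteTopology A]
  [MeasurableSpace A] [BorelSpace A] {X : Set (ℕ → A)} {f : List A → ℝ} {pt : List A → (ℕ → A)}

/-- discrete measure with weights `f` on length `N` words -/
def rho (f : List A → ℝ) (pt : List A → (ℕ → A)) (N : ℕ) : Measure (ℕ → A) :=
  ∑ J ∈ words A N, ENNReal.ofReal (f J) • Measure.dirac (pt J)

lemma rho_prob (h : OmW X f) (N : ℕ) : IsProbabilityMeasure (rho f pt N) := by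
  constructor
  simp only [rho, Measure.coe_finsetSum, Finset.sum_apply, Measure.smul_apply, measure_univ,
    smul_eq_mul, mul_one]
  rw [← ENNReal.ofReal_sum_of_nonneg fun _ _ => h.nonneg _, h.sum_one]; simp

lemma rho_integral (h : OmW X f) (N : ℕ) (g : (ℕ → A) → ℝ) :
    ∫ x, g x ∂(rho f pt N) = ∑ J ∈ words A N, f J * g (pt J) := by
  unfold rho
  rw [integral_finsetSum_measure]
  · refine Finset.sum_congr rfl fun J _ => ?_
    rw [integral_smul_measure, integral_dirac, ENNReal.toReal_ofReal (h.nonneg _), smul_eq_mul]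
  · intro J _
    exact (integrable_dirac (by simp)).smul_measure ENNReal.ofReal_ne_top

lemma rho_real (h : OmW X f) (N : ℕ) (S : Set (ℕ → A)) (hS : MeasurableSet S) :
    (rho f pt N).real S = ∑ J ∈ words A N, f J * (if pt J ∈ S then 1 else 0) := by
  rw [← integral_indicator_one hS, rho_integral h]
  refine Finset.sum_congr rfl fun J _ => ?_
  simp [Set.indicator_apply]

lemma rho_shift_cyl (h : OmW X f) (hpt : ∀ I, Lang X I → pt I ∈ cyl I) (t s N : ℕ) (I : List A)
    (hN : t + I.length + s = N) :
    ((rho f pt N).map shiftMap^[t]).real (cyl I) = FF f t s I := by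
  rw [map_measureReal_apply (measurable_shiftMap.iterate t) (measurableSet_cyl I),
    rho_real h N _ ((measurable_shiftMap.iterate t) (measurableSet_cyl I)), ← hN, sum_words_add,
    sum_words_add]
  unfold FF
  refine Finset.sum_congr rfl fun U hU => ?_
  rw [Finset.sum_eq_single I]
  · refine Finset.sum_congr rfl fun V _ => ?_
    by_cases h0 : f (U ++ I ++ V) = 0
    · rw [h0, zero_mul]
    · have := hpt _ (h.supp _ h0)
      rw [mem_cyl_append, mem_cyl_append, mem_words.1 hU] at this
      rw [if_pos (show _ ∈ shiftMap^[t] ⁻¹' cyl I from this.1.2), mul_one]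
  · intro M hM hMI
    refine Finset.sum_eq_zero fun V _ => ?_
    by_cases h0 : f (U ++ M ++ V) = 0
    · rw [h0, zero_mul]
    · have := hpt _ (h.supp _ h0)
      rw [mem_cyl_append, mem_cyl_append, mem_words.1 hU] at this
      rw [if_neg, mul_zero]
      intro h'
      exact Set.disjoint_left.1 (cyl_disjoint (mem_words.1 hM) hMI) this.1.2 h'
  · intro hnot; exact absurd (mem_words.2 rfl) hnot

/-- averaged measure -/
def nuM (f : List A → ℝ) (pt : List A → (ℕ → A)) (N : ℕ) : Measure (ℕ → A) :=
  ((N + 1 : ℕ) : ℝ≥0∞)⁻¹ • ∑ t ∈ Finset.range (N + 1), (rho f pt (N + 1)).map shiftMap^[t]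

lemma nuM_prob (h : OmW X f) (N : ℕ) : IsProbabilityMeasure (nuM f pt N) := by
  constructor
  have := rho_prob (pt := pt) h (N + 1)
  have h1 : ∀ t, ((rho f pt (N + 1)).map shiftMap^[t]) Set.univ = 1 := fun t => by
    have := map_shift_prob (rho f pt (N + 1)) t
    simp
  simp only [nuM, Measure.smul_apply, Measure.coe_finsetSum, Finset.sum_apply, h1, smul_eq_mul,
    Finset.sum_const, Finset.card_range, nsmul_eq_mul, mul_one]
  exact ENNReal.inv_mul_cancel (by simp) (by simp)

/-- bundled version -/
def nuP (h : OmW X f) (pt : List A → (ℕ → A)) (N : ℕ) : ProbabilityMeasure (ℕ → A) :=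
  ⟨nuM f pt N, nuM_prob h N⟩

lemma nuM_real (h : OmW X f) (N : ℕ) (S : Set (ℕ → A)) :
    ((N + 1 : ℕ) : ℝ) * (nuM f pt N).real S =
      ∑ t ∈ Finset.range (N + 1), ((rho f pt (N + 1)).map shiftMap^[t]).real S := by
  have := rho_prob (pt := pt) h (N + 1)
  simp only [Measure.real, nuM, Measure.smul_apply, Measure.coe_finsetSum, Finset.sum_apply,
    smul_eq_mul, ENNReal.toReal_mul]
  rw [ENNReal.toReal_sum fun t _ => measure_ne_top _ _, ENNReal.toReal_inv, ENNReal.toReal_natCast,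
    mul_inv_cancel_left₀]
  positivity

lemma nuM_integral (h : OmW X f) (N : ℕ) (g : (ℕ → A) → ℝ) (hg : Continuous g) :
    ((N + 1 : ℕ) : ℝ) * ∫ x, g x ∂(nuM f pt N) =
      ∑ J ∈ words A (N + 1), f J * ∑ t ∈ Finset.range (N + 1), g (shiftMap^[t] (pt J)) := by
  have := rho_prob (pt := pt) h (N + 1)
  unfold nuM
  rw [integral_smul_measure, integral_finsetSum_measure]
  · rw [ENNReal.toReal_inv, ENNReal.toReal_natCast, smul_eq_mul, mul_inv_cancel_left₀ (by positivity)]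
    simp only [Finset.mul_sum]
    rw [Finset.sum_comm]
    refine Finset.sum_congr rfl fun t _ => ?_
    rw [integral_map (measurable_shiftMap.iterate t).aemeasurable hg.aestronglyMeasurable,
      rho_integral h]
  · intro t _
    have := map_shift_prob (rho f pt (N + 1)) t
    exact hg.integrable_of_hasCompactSupport (HasCompactSupport.of_compactSpace _)

lemma exists_limit (h : OmW X f) (pt : List A → (ℕ → A)) :
    ∃ (μ : ProbabilityMeasure (ℕ → A)) (l : Filter ℕ), l.NeBot ∧ l ≤ atTop ∧
      Tendsto (nuP h pt) l (𝓝 μ) := by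
  let U : Ultrafilter ℕ := hyperfilter ℕ
  refine ⟨(U.map (nuP h pt)).lim, U, inferInstance, ?_, ?_⟩
  · exact Nat.hyperfilter_le_atTop
  · exact (U.map (nuP h pt)).le_nhds_lim

section lim
variable {μ : ProbabilityMeasure (ℕ → A)} {l : Filter ℕ}

lemma lim_clopen (h : OmW X f) (hl : Tendsto (nuP h pt) l (𝓝 μ)) (C : Set (ℕ → A))
    (hC : IsClopen C) :
    Tendsto (fun N => (nuM f pt N).real C) l (𝓝 ((μ : Measure (ℕ → A)).real C)) := by
  have := ProbabilityMeasure.tendsto_measure_of_isClopen_of_tendsto hl hC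
  exact (NNReal.tendsto_coe.2 this)

lemma inv_nat_tendsto (hla : l ≤ atTop) (c : ℝ) :
    Tendsto (fun N : ℕ => c / ((N + 1 : ℕ) : ℝ)) l (𝓝 0) :=
  ((tendsto_const_div_atTop_nhds_zero_nat c).comp (tendsto_add_atTop_nat 1)).mono_left hla

lemma lim_inv [l.NeBot] (hla : l ≤ atTop) (h : OmW X f) (hl : Tendsto (nuP h pt) l (𝓝 μ)) :
    (μ : Measure (ℕ → A)).map shiftMap = μ := by
  have := Measure.isProbabilityMeasure_map (μ := (μ : Measure (ℕ → A)))
    (measurable_shiftMap (A := A)).aemeasurable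
  refine ext_cyl _ _ fun I => ?_
  rw [map_measureReal_apply measurable_shiftMap (measurableSet_cyl I)]
  have h1 := lim_clopen h hl _ (isClopen_cyl I)
  have h2 := lim_clopen h hl _ ((isClopen_cyl I).preimage continuous_shiftMap)
  have h3 := h2.sub h1
  rw [← sub_eq_zero]
  refine tendsto_nhds_unique h3 ?_
  refine squeeze_zero_norm (fun N => ?_) (inv_nat_tendsto hla 1)
  have hr := rho_prob (pt := pt) h (N + 1)
  have e : ((N + 1 : ℕ) : ℝ) * ((nuM f pt N).real (shiftMap ⁻¹' cyl I) - (nuM f pt N).real (cyl I)) =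
      ((rho f pt (N + 1)).map shiftMap^[N + 1]).real (cyl I) -
      ((rho f pt (N + 1)).map shiftMap^[0]).real (cyl I) := by
    rw [mul_sub, nuM_real h, nuM_real h]
    have e2 : ∀ t, ((rho f pt (N + 1)).map shiftMap^[t]).real (shiftMap ⁻¹' cyl I) =
        ((rho f pt (N + 1)).map shiftMap^[t + 1]).real (cyl I) := by
      intro t
      rw [map_measureReal_apply (measurable_shiftMap.iterate t)
          (measurable_shiftMap (measurableSet_cyl I)),
        map_measureReal_apply (measurable_shiftMap.iterate (t+1)) (measurableSet_cyl I),
        Function.iterate_succ', Set.preimage_comp]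
    simp only [e2]
    rw [← Finset.sum_sub_distrib, Finset.sum_range_sub (fun t =>
      ((rho f pt (N + 1)).map shiftMap^[t]).real (cyl I))]
  rw [Real.norm_eq_abs, le_div_iff₀ (by positivity), mul_comm, ← abs_of_pos (a := ((N + 1 : ℕ) : ℝ))
    (by positivity), ← abs_mul, e]
  have p1 := map_shift_prob (rho f pt (N + 1)) (N + 1)
  have p2 := map_shift_prob (rho f pt (N + 1)) 0
  have b1 : ((rho f pt (N + 1)).map shiftMap^[N + 1]).real (cyl I) ≤ 1 := measureReal_le_one
  have b2 : ((rho f pt (N + 1)).map shiftMap^[0]).real (cyl I) ≤ 1 := measureReal_le_one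
  have b3 : 0 ≤ ((rho f pt (N + 1)).map shiftMap^[N + 1]).real (cyl I) := measureReal_nonneg
  have b4 : 0 ≤ ((rho f pt (N + 1)).map shiftMap^[0]).real (cyl I) := measureReal_nonneg
  rw [abs_le]; constructor <;> linarith

lemma nuM_X (h : OmW X f) (hX : IsSubshift X) (hpt : ∀ I, pt I ∈ X) (N : ℕ) :
    nuM f pt N X = 1 := by
  have hm : MeasurableSet X := hX.2.1.isClosed.measurableSet
  have := rho_prob (pt := pt) h (N + 1)
  have := nuM_prob (pt := pt) h N
  have h1 : ∀ t, ((rho f pt (N + 1)).map shiftMap^[t]).real X = 1 := by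
    intro t
    rw [map_measureReal_apply (measurable_shiftMap.iterate t) hm,
      rho_real h _ _ ((measurable_shiftMap.iterate t) hm)]
    refine (Finset.sum_congr rfl fun J _ => ?_).trans (h.sum_one (N + 1))
    rw [if_pos, mul_one]
    exact shift_iter_mem hX.2.2 (hpt J) t
  have := nuM_real (pt := pt) h N X
  simp only [h1, Finset.sum_const, Finset.card_range, nsmul_eq_mul, mul_one] at this
  have h2 : (nuM f pt N).real X = 1 := by
    have h0 : ((N + 1 : ℕ) : ℝ) ≠ 0 := by positivity
    exact mul_left_cancel₀ h0 (by rw [this, mul_one])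
  rw [Measure.real, ENNReal.toReal_eq_one_iff] at h2
  exact h2

lemma lim_X [l.NeBot] (h : OmW X f) (hl : Tendsto (nuP h pt) l (𝓝 μ)) (hX : IsSubshift X)
    (hpt : ∀ I, pt I ∈ X) : (μ : Measure (ℕ → A)) X = 1 := by
  have := ProbabilityMeasure.limsup_measure_closed_le_of_tendsto hl hX.2.1.isClosed
  have e : (fun i => (nuP h pt i : Measure (ℕ → A)) X) = fun _ => 1 := by
    funext N; exact nuM_X h hX hpt N
  rw [e, limsup_const] at this
  exact le_antisymm prob_le_one this

lemma lim_lower [l.NeBot] (hla : l ≤ atTop) (h : OmW X f) (hl : Tendsto (nuP h pt) l (𝓝 μ))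
    (hpt : ∀ I, Lang X I → pt I ∈ cyl I) (p : ℕ) (c : ℝ) (I : List A) (m n : ℕ)
    (hc : ∀ m' n', m + p ≤ m' → n + p ≤ n' → c ≤ FF f m' n' I) :
    c ≤ (μ : Measure (ℕ → A)).real (cyl I) := by
  rcases le_or_gt c 0 with h0 | h0
  · exact h0.trans measureReal_nonneg
  set L := m + p + (n + p + I.length) with hL
  have h1 := (lim_clopen h hl _ (isClopen_cyl I)).add (inv_nat_tendsto hla (c * L))
  rw [add_zero] at h1
  refine ge_of_tendsto h1 (hla ?_)
  filter_upwards [eventually_ge_atTop L] with N hN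
  have hr := rho_prob (pt := pt) h (N + 1)
  have hNp : (0:ℝ) < ((N + 1 : ℕ) : ℝ) := by positivity
  have h2 : ((N + 1 - L : ℕ) : ℝ) * c ≤ ((N + 1 : ℕ) : ℝ) * (nuM f pt N).real (cyl I) := by
    rw [nuM_real h]
    have hsub : Finset.Ico (m + p) (N + 1 - (n + p + I.length)) ⊆ Finset.range (N + 1) := by
      intro t ht
      rw [Finset.mem_Ico] at ht
      rw [Finset.mem_range]; omega
    refine le_trans ?_ (Finset.sum_le_sum_of_subset_of_nonneg hsub fun _ _ _ => measureReal_nonneg)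
    have : ((N + 1 - L : ℕ) : ℝ) * c =
        ∑ t ∈ Finset.Ico (m + p) (N + 1 - (n + p + I.length)), c := by
      rw [Finset.sum_const, Nat.card_Ico, nsmul_eq_mul]
      congr 2; omega
    rw [this]
    refine Finset.sum_le_sum fun t ht => ?_
    rw [Finset.mem_Ico] at ht
    rw [rho_shift_cyl h hpt t (N + 1 - t - I.length) (N + 1) I (by omega)]
    exact hc _ _ (by omega) (by omega)
  rw [Nat.cast_sub (by omega)] at h2
  have h3 : c * (L:ℝ) / ((N + 1 : ℕ) : ℝ) * ((N + 1 : ℕ) : ℝ) = c * L := div_mul_cancel₀ _ hNp.ne'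
  nlinarith

lemma lim_upper [l.NeBot] (hla : l ≤ atTop) (h : OmW X f) (hl : Tendsto (nuP h pt) l (𝓝 μ))
    (hpt : ∀ I, Lang X I → pt I ∈ cyl I) (c : ℝ) (I : List A)
    (hc : ∀ m' n', FF f m' n' I ≤ c) :
    (μ : Measure (ℕ → A)).real (cyl I) ≤ c := by
  have hc0 : 0 ≤ c := (FF_nonneg h 0 0 I).trans (hc 0 0)
  have h1 := (lim_clopen h hl _ (isClopen_cyl I)).sub (inv_nat_tendsto hla (I.length : ℝ))
  rw [sub_zero] at h1
  refine le_of_tendsto h1 (Eventually.of_forall fun N => ?_)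
  have hr := rho_prob (pt := pt) h (N + 1)
  have hNp : (0:ℝ) < ((N + 1 : ℕ) : ℝ) := by positivity
  have h2 : ((N + 1 : ℕ) : ℝ) * (nuM f pt N).real (cyl I) ≤ ((N + 1 : ℕ) : ℝ) * c + I.length := by
    rw [nuM_real h]
    have : ∀ t ∈ Finset.range (N + 1), ((rho f pt (N + 1)).map shiftMap^[t]).real (cyl I) ≤
        c + if N + 1 - I.length < t + 1 then 1 else 0 := by
      intro t ht
      have := map_shift_prob (rho f pt (N + 1)) t
      rw [Finset.mem_range] at ht
      split_ifs with h'
      · have : ((rho f pt (N + 1)).map shiftMap^[t]).real (cyl I) ≤ 1 := measureReal_le_one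
        linarith
      · rw [rho_shift_cyl h hpt t (N + 1 - t - I.length) (N + 1) I (by omega)]
        linarith [hc t (N + 1 - t - I.length)]
    refine (Finset.sum_le_sum this).trans ?_
    rw [Finset.sum_add_distrib, Finset.sum_const, Finset.card_range, nsmul_eq_mul,
      Finset.sum_boole]
    gcongr
    have : (Finset.range (N + 1)).filter (fun t => N + 1 - I.length < t + 1) ⊆
        Finset.Ico (N + 1 - I.length) (N + 1) := by
      intro t ht
      rw [Finset.mem_filter, Finset.mem_range] at ht
      rw [Finset.mem_Ico]; omega
    refine (Finset.card_le_card this).trans ?_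
    rw [Nat.card_Ico]; omega
  rw [sub_le_iff_le_add]
  refine le_of_mul_le_mul_left ?_ hNp
  rw [mul_add, mul_div_cancel₀ _ hNp.ne']
  exact h2

lemma lim_integral (h : OmW X f) (hl : Tendsto (nuP h pt) l (𝓝 μ)) (g : (ℕ → A) → ℝ)
    (hg : Continuous g) :
    Tendsto (fun N => ∫ x, g x ∂(nuM f pt N)) l (𝓝 (∫ x, g x ∂(μ : Measure (ℕ → A)))) := by
  have := ProbabilityMeasure.tendsto_iff_forall_integral_tendsto.1 hl
    (BoundedContinuousFunction.mkOfCompact ⟨g, hg⟩)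
  exact this

lemma lim_HH {B : Type} [TopologicalSpace B] [Fintype B] [DiscreteTopology B]
    [MeasurableSpace B] [BorelSpace B] (t : A → B)
    (h : OmW X f) (hl : Tendsto (nuP h pt) l (𝓝 μ)) (m : ℕ) :
    Tendsto (fun N => HH ((nuM f pt N).map (blockMap t)) m) l
      (𝓝 (HH ((μ : Measure (ℕ → A)).map (blockMap t)) m)) := by
  unfold HH
  refine tendsto_finsetSum _ fun J _ => ?_
  refine (Real.continuous_negMulLog.tendsto _).comp ?_
  simp only [map_measureReal_apply (measurable_blockMap t) (measurableSet_cyl J)]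
  exact lim_clopen h hl _ ((isClopen_cyl J).preimage (continuous_blockMap t))

lemma misi_nu {B : Type} [TopologicalSpace B] [Fintype B] [DiscreteTopology B]
    [MeasurableSpace B] [BorelSpace B] (t : A → B) (h : OmW X f) (N m : ℕ) :
    m * HH ((rho f pt (N + 1)).map (blockMap t)) (N + 1) ≤
      ((N + 1 : ℕ) : ℝ) * HH ((nuM f pt N).map (blockMap t)) m +
      ∑ r ∈ Finset.range m, ((words B r).card : ℝ) := by
  have hr := rho_prob (pt := pt) h (N + 1)
  have hr' : IsProbabilityMeasure ((rho f pt (N + 1)).map (blockMap t)) :=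
    Measure.isProbabilityMeasure_map (measurable_blockMap t).aemeasurable
  refine (HH_misi _ (N + 1) m).trans ?_
  gcongr
  refine HH_concave (N + 1) m (by omega) _ _ fun I => ?_
  have hM : MeasurableSet (blockMap t ⁻¹' cyl I) := measurable_blockMap t (measurableSet_cyl I)
  rw [map_measureReal_apply (measurable_blockMap t) (measurableSet_cyl I), nuM_real h]
  refine Finset.sum_congr rfl fun s _ => ?_
  rw [map_measureReal_apply (measurable_shiftMap.iterate s) (measurableSet_cyl I),
    map_measureReal_apply (measurable_blockMap t)
      ((measurable_shiftMap.iterate s) (measurableSet_cyl I)),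
    map_measureReal_apply (measurable_shiftMap.iterate s) hM]
  congr 1
  ext x
  simp [blockMap_shift]

end lim
end
end

set_option linter.unusedSectionVars false

noncomputable section

section
variable {A : Type} [Fintype A] [TopologicalSpace A] [DiscreteTopology A]
  [MeasurableSpace A] [BorelSpace A] {X : Set (ℕ → A)} {f : List A → ℝ} {pt : List A → (ℕ → A)}
  {μ : Measure (ℕ → A)}

/-- comparison between a measure and the word function -/
structure Comp (f : List A → ℝ) (μ : Measure (ℕ → A)) : Prop where
  lower : ∃ c > 0, ∀ m n I, c * FF f m n I ≤ μ.real (cyl I)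
  upper : ∀ I, 0 < μ.real (cyl I) → ∃ m n, μ.real (cyl I) / 2 ≤ FF f m n I

lemma gap_cyl (μ : Measure (ℕ → A)) [IsProbabilityMeasure μ] (I J : List A) (g : ℕ) :
    ∑ G ∈ words A g, μ.real (cyl (I ++ G ++ J)) =
      μ.real (cyl I ∩ shiftMap^[I.length + g] ⁻¹' cyl J) := by
  have hm : MeasurableSet (cyl I ∩ shiftMap^[I.length + g] ⁻¹' cyl J) :=
    (measurableSet_cyl I).inter ((measurable_shiftMap.iterate _) (measurableSet_cyl J))
  rw [← sum_real_cyl_inter μ (I.length + g) _ hm, sum_words_add]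
  symm
  rw [Finset.sum_eq_single I]
  · refine Finset.sum_congr rfl fun G hG => ?_
    congr 1
    ext x
    simp only [mem_cyl_append, Set.mem_inter_iff, Set.mem_preimage, List.length_append,
      mem_words.1 hG]
    tauto
  · intro I' hI' hne
    refine Finset.sum_eq_zero fun V _ => ?_
    have : cyl (I' ++ V) ∩ (cyl I ∩ shiftMap^[I.length + g] ⁻¹' cyl J) = ∅ := by
      ext x
      simp only [mem_cyl_append, Set.mem_inter_iff, Set.mem_empty_iff_false, iff_false]
      rintro ⟨⟨h1, -⟩, h2, -⟩
      exact Set.disjoint_left.1 (cyl_disjoint (mem_words.1 hI') hne) h1 h2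
    rw [this]; simp
  · intro h'; exact absurd (mem_words.2 rfl) h'

lemma cyl_mix [IsProbabilityMeasure μ] (h : OmW X f) (hc : Comp f μ) (p : ℕ)
    (hp : GapSet X (Finset.range (p+1))) (D : Finset ℕ) (hD : GapSet X D) :
    ∃ c > 0, ∀ I J : List A, ∃ g₀, ∀ g ≥ g₀, c * (μ.real (cyl I) * μ.real (cyl J)) ≤
      ∑ d ∈ D, μ.real (cyl I ∩ shiftMap^[g + d] ⁻¹' cyl J) := by
  obtain ⟨c0, hc0, hl⟩ := hc.lower
  obtain ⟨c1, hc1, hr⟩ := h.FF_right p hp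
  obtain ⟨c2, hc2, hmix⟩ := h.FF_mix D hD
  refine ⟨c0 * c1 * c2 / 4, by positivity, fun I J => ?_⟩
  have hnn : ∀ g, 0 ≤ ∑ d ∈ D, μ.real (cyl I ∩ shiftMap^[g + d] ⁻¹' cyl J) := fun g =>
    Finset.sum_nonneg fun _ _ => measureReal_nonneg
  rcases (measureReal_nonneg (μ := μ) (s := cyl I)).eq_or_lt with hI | hI
  · exact ⟨0, fun g _ => by rw [← hI]; simpa using hnn g⟩
  rcases (measureReal_nonneg (μ := μ) (s := cyl J)).eq_or_lt with hJ | hJ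
  · exact ⟨0, fun g _ => by rw [← hJ]; simpa using hnn g⟩
  obtain ⟨m1, m2, h12⟩ := hc.upper I hI
  obtain ⟨m3, m4, h34⟩ := hc.upper J hJ
  refine ⟨I.length + (m2 + p + m3), fun g hg => ?_⟩
  obtain ⟨s, rfl⟩ : ∃ s, g = I.length + (m2 + (p + s) + m3) :=
    ⟨g - (I.length + (m2 + p + m3)), by omega⟩
  have e1 := hr m1 m2 (p + s) (by omega) I
  have e2 := hmix m1 (m2 + (p + s)) m3 m4 I J
  have e3 : ∑ d ∈ D, ∑ G ∈ words A (m2 + (p + s) + d + m3), c0 * FF f m1 m4 (I ++ G ++ J) ≤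
      ∑ d ∈ D, μ.real (cyl I ∩ shiftMap^[I.length + (m2 + (p + s) + m3) + d] ⁻¹' cyl J) := by
    refine Finset.sum_le_sum fun d _ => ?_
    have : I.length + (m2 + (p + s) + m3) + d = I.length + (m2 + (p + s) + d + m3) := by omega
    rw [this, ← gap_cyl]
    exact Finset.sum_le_sum fun G _ => hl _ _ _
  simp only [← Finset.mul_sum] at e3
  refine le_trans ?_ e3
  refine le_trans ?_ (mul_le_mul_of_nonneg_left e2 hc0.le)
  have e4 : c1 * (μ.real (cyl I) / 2) * (μ.real (cyl J) / 2) ≤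
      FF f m1 (m2 + (p + s)) I * FF f m3 m4 J := by
    refine mul_le_mul (le_trans ?_ e1) h34 (by positivity) (FF_nonneg h _ _ _)
    exact mul_le_mul_of_nonneg_left h12 hc1.le
  calc c0 * c1 * c2 / 4 * (μ.real (cyl I) * μ.real (cyl J)) =
      c0 * (c2 * (c1 * (μ.real (cyl I) / 2) * (μ.real (cyl J) / 2))) := by ring
    _ ≤ _ := by gcongr

lemma clopen_mix [IsProbabilityMeasure μ] {c : ℝ} {D : Finset ℕ}
    (hm : ∀ I J : List A, ∃ g₀, ∀ g ≥ g₀, c * (μ.real (cyl I) * μ.real (cyl J)) ≤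
      ∑ d ∈ D, μ.real (cyl I ∩ shiftMap^[g + d] ⁻¹' cyl J)) (S T : Set (ℕ → A))
    (hS : IsClopen S) (hT : IsClopen T) :
    ∃ g₀, ∀ g ≥ g₀, c * (μ.real S * μ.real T) ≤
      ∑ d ∈ D, μ.real (S ∩ shiftMap^[g + d] ⁻¹' T) := by
  obtain ⟨n, s, hs, rfl⟩ := clopen_eq_cyl S hS
  obtain ⟨m, t, ht, rfl⟩ := clopen_eq_cyl T hT
  choose g0 hg0 using hm
  refine ⟨s.sup fun I => t.sup fun J => g0 I J, fun g hg => ?_⟩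
  rw [real_biUnion_cyl μ n s fun I hI => mem_words.1 (hs hI),
    real_biUnion_cyl μ m t fun I hI => mem_words.1 (ht hI)]
  have e : ∀ r, μ.real ((⋃ I ∈ s, cyl I) ∩ shiftMap^[r] ⁻¹' (⋃ J ∈ t, cyl J)) =
      ∑ I ∈ s, ∑ J ∈ t, μ.real (cyl I ∩ shiftMap^[r] ⁻¹' cyl J) := by
    intro r
    have hmJ : ∀ J : List A, MeasurableSet (shiftMap^[r] ⁻¹' cyl J) := fun J =>
      (measurable_shiftMap.iterate r) (measurableSet_cyl J)
    have : (⋃ I ∈ s, cyl I) ∩ shiftMap^[r] ⁻¹' (⋃ J ∈ t, cyl J) =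
        ⋃ I ∈ s, ⋃ J ∈ t, cyl I ∩ shiftMap^[r] ⁻¹' cyl J := by
      ext x; simp only [Set.mem_inter_iff, Set.mem_iUnion, Set.mem_preimage]
      constructor
      · rintro ⟨⟨I, hI, h1⟩, J, hJ, h2⟩; exact ⟨I, hI, J, hJ, h1, h2⟩
      · rintro ⟨I, hI, J, hJ, h1, h2⟩; exact ⟨⟨I, hI, h1⟩, J, hJ, h2⟩
    rw [this, measureReal_biUnion_finset (h := fun _ _ => measure_ne_top _ _)]
    · refine Finset.sum_congr rfl fun I _ => ?_
      rw [measureReal_biUnion_finset]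
      · intro J hJ J' hJ' hne
        have := cyl_disjoint ((mem_words.1 (ht hJ)).trans (mem_words.1 (ht hJ')).symm) hne
        exact ((this.preimage _).inter_left' _).inter_right' _
      · intro J _; exact (measurableSet_cyl I).inter (hmJ J)
    · intro I hI I' hI' hne
      have := cyl_disjoint ((mem_words.1 (hs hI)).trans (mem_words.1 (hs hI')).symm) hne
      refine Disjoint.mono ?_ ?_ this
      · exact Set.iUnion₂_subset fun J _ => Set.inter_subset_left
      · exact Set.iUnion₂_subset fun J _ => Set.inter_subset_left
    · intro I _
      exact Finset.measurableSet_biUnion _ fun J _ => (measurableSet_cyl I).inter (hmJ J)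
  simp only [e]
  rw [Finset.sum_mul_sum, Finset.mul_sum, Finset.sum_comm]
  refine Finset.sum_le_sum fun I hI => ?_
  rw [Finset.mul_sum, Finset.sum_comm]
  refine Finset.sum_le_sum fun J hJ => ?_
  refine hg0 I J g (le_trans ?_ hg)
  exact (Finset.le_sup (f := fun J => g0 I J) hJ).trans
    (Finset.le_sup (f := fun I => t.sup fun J => g0 I J) hI)

lemma clopen_approx (μ : Measure (ℕ → A)) [IsProbabilityMeasure μ] (S : Set (ℕ → A))
    (hS : MeasurableSet S) (ε : ℝ) (hε : 0 < ε) :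
    ∃ C : Set (ℕ → A), IsClopen C ∧ μ.real (S \ C) ≤ ε ∧ μ.real (C \ S) ≤ ε := by
  have hε' : ENNReal.ofReal ε ≠ 0 := by simpa using hε
  obtain ⟨K, hK, hKc, hKm⟩ := hS.exists_isClosed_sdiff_lt (μ := μ) (measure_ne_top _ _) hε'
  obtain ⟨U, hU, hUo, -, hUm⟩ := hS.exists_isOpen_sdiff_lt (μ := μ) (measure_ne_top _ _) hε'
  obtain ⟨C, hC, h1, h2⟩ := exists_clopen_of_closed_subset_open hKc hUo (hK.trans hU)
  refine ⟨C, hC, ?_, ?_⟩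
  · refine ENNReal.toReal_le_of_le_ofReal hε.le (le_trans (measure_mono ?_) hKm.le)
    exact Set.sdiff_subset_sdiff_right h1
  · refine ENNReal.toReal_le_of_le_ofReal hε.le (le_trans (measure_mono ?_) hUm.le)
    exact Set.sdiff_subset_sdiff_left h2

lemma borel_mix [IsProbabilityMeasure μ] (hinv : μ.map shiftMap = μ) {c : ℝ} (hc : 0 < c)
    {D : Finset ℕ}
    (hm : ∀ I J : List A, ∃ g₀, ∀ g ≥ g₀, c * (μ.real (cyl I) * μ.real (cyl J)) ≤
      ∑ d ∈ D, μ.real (cyl I ∩ shiftMap^[g + d] ⁻¹' cyl J)) (S T : Set (ℕ → A))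
    (hS : MeasurableSet S) (hT : MeasurableSet T) :
    c * (μ.real S * μ.real T) ≤
      liminf (fun n => ∑ d ∈ D, μ.real (S ∩ shiftMap^[n + d] ⁻¹' T)) atTop := by
  have hmp : MeasurePreserving shiftMap μ μ := ⟨measurable_shiftMap, hinv⟩
  refine le_of_forall_pos_le_add fun δ hδ => ?_
  obtain ⟨ε, hε, hεδ⟩ : ∃ ε > 0, (2 * c + 2 * D.card) * ε ≤ δ :=
    ⟨δ / (2 * c + 2 * D.card), by positivity, by rw [mul_div_cancel₀]; positivity⟩
  obtain ⟨S0, hS0, s1, s2⟩ := clopen_approx μ S hS ε hε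
  obtain ⟨T0, hT0, t1, t2⟩ := clopen_approx μ T hT ε hε
  obtain ⟨g0, hg0⟩ := clopen_mix hm S0 T0 hS0 hT0
  rw [← sub_le_iff_le_add]
  refine le_liminf_of_le ?_ ?_
  · refine IsBoundedUnder.isCoboundedUnder_ge ⟨∑ d ∈ D, 1, ?_⟩
    rw [eventually_map]
    exact Eventually.of_forall fun n => Finset.sum_le_sum fun d _ => measureReal_le_one
  filter_upwards [eventually_ge_atTop g0] with n hn
  have h1 := hg0 n hn
  have h2 : ∀ r, μ.real (S0 ∩ shiftMap^[r] ⁻¹' T0) ≤ μ.real (S ∩ shiftMap^[r] ⁻¹' T) + 2 * ε := by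
    intro r
    have hsub : S0 ∩ shiftMap^[r] ⁻¹' T0 ⊆
        (S ∩ shiftMap^[r] ⁻¹' T) ∪ (S0 \ S) ∪ shiftMap^[r] ⁻¹' (T0 \ T) := by
      intro x hx
      by_cases a : x ∈ S <;> by_cases b : shiftMap^[r] x ∈ T
      · exact Or.inl (Or.inl ⟨a, b⟩)
      · exact Or.inr ⟨hx.2, b⟩
      · exact Or.inl (Or.inr ⟨hx.1, a⟩)
      · exact Or.inl (Or.inr ⟨hx.1, a⟩)
    have e : μ.real (shiftMap^[r] ⁻¹' (T0 \ T)) = μ.real (T0 \ T) :=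
      (hmp.iterate r).measureReal_preimage (hT0.isOpen.measurableSet.diff hT).nullMeasurableSet
    have := measureReal_mono (μ := μ) hsub
    have u1 := measureReal_union_le (μ := μ) ((S ∩ shiftMap^[r] ⁻¹' T) ∪ (S0 \ S))
      (shiftMap^[r] ⁻¹' (T0 \ T))
    have u2 := measureReal_union_le (μ := μ) (S ∩ shiftMap^[r] ⁻¹' T) (S0 \ S)
    linarith
  have h3 : ∑ d ∈ D, μ.real (S0 ∩ shiftMap^[n + d] ⁻¹' T0) ≤
      ∑ d ∈ D, μ.real (S ∩ shiftMap^[n + d] ⁻¹' T) + D.card * (2 * ε) := by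
    rw [← nsmul_eq_mul, ← Finset.sum_const, ← Finset.sum_add_distrib]
    exact Finset.sum_le_sum fun d _ => h2 _
  have d1 : μ.real S ≤ μ.real S0 + ε := by
    have := measureReal_mono (μ := μ) (show S ⊆ S0 ∪ (S \ S0) by
      intro x hx; by_cases h : x ∈ S0 <;> simp [h, hx])
    linarith [measureReal_union_le (μ := μ) S0 (S \ S0)]
  have d2 : μ.real T ≤ μ.real T0 + ε := by
    have := measureReal_mono (μ := μ) (show T ⊆ T0 ∪ (T \ T0) by
      intro x hx; by_cases h : x ∈ T0 <;> simp [h, hx])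
    linarith [measureReal_union_le (μ := μ) T0 (T \ T0)]
  have b1 : μ.real S ≤ 1 := measureReal_le_one
  have b2 : μ.real T0 ≤ 1 := measureReal_le_one
  have b3 : 0 ≤ μ.real S := measureReal_nonneg
  have b4 : 0 ≤ μ.real T0 := measureReal_nonneg
  have d3 : μ.real S * μ.real T ≤ μ.real S0 * μ.real T0 + 2 * ε := by
    nlinarith [mul_le_mul_of_nonneg_left d2 b3, mul_le_mul_of_nonneg_right d1 b4]
  have d4 := mul_le_mul_of_nonneg_left d3 hc.le
  linarith

lemma ergodic_of_mix [IsProbabilityMeasure μ] (hinv : μ.map shiftMap = μ) {c : ℝ} (hc : 0 < c)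
    {D : Finset ℕ}
    (hm : ∀ S T : Set (ℕ → A), MeasurableSet S → MeasurableSet T → c * (μ.real S * μ.real T) ≤
      liminf (fun n => ∑ d ∈ D, μ.real (S ∩ shiftMap^[n + d] ⁻¹' T)) atTop) :
    Ergodic shiftMap μ := by
  have hmp : MeasurePreserving shiftMap μ μ := ⟨measurable_shiftMap, hinv⟩
  refine ⟨hmp, ⟨fun S hS hSi => ?_⟩⟩
  have hit : ∀ n, shiftMap^[n] ⁻¹' S = S := fun n => by
    induction n with
    | zero => rfl
    | succ n ih => rw [Function.iterate_succ', Set.preimage_comp, hSi, ih]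
  have h := hm S Sᶜ hS hS.compl
  have e : (fun n => ∑ d ∈ D, μ.real (S ∩ shiftMap^[n + d] ⁻¹' Sᶜ)) = fun _ => 0 := by
    funext n
    refine Finset.sum_eq_zero fun d _ => ?_
    rw [Set.preimage_compl, hit, Set.inter_compl_self]; simp
  rw [e, liminf_const] at h
  have h0 : μ.real S * μ.real Sᶜ = 0 := by
    have : 0 ≤ μ.real S * μ.real Sᶜ := by positivity
    nlinarith
  rw [eventuallyConst_set']
  rcases mul_eq_zero.1 h0 with h | h
  · left
    rw [measureReal_eq_zero_iff] at h
    exact ae_eq_empty.2 h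
  · right
    rw [measureReal_eq_zero_iff] at h
    exact ae_eq_univ.2 h

end
end

set_option linter.unusedSectionVars false

noncomputable section

section
variable {A : Type} [Fintype A] [TopologicalSpace A] [DiscreteTopology A]
  [MeasurableSpace A] [BorelSpace A] {X : Set (ℕ → A)} {f : List A → ℝ} {pt : List A → (ℕ → A)}
  {μ : Measure (ℕ → A)}

lemma dv_clopen [IsProbabilityMeasure μ] (η : Measure (ℕ → A)) [IsProbabilityMeasure η]
    (c C : ℝ) (hc : 0 < c)
    (hlow : ∀ I, c * f I ≤ μ.real (cyl I)) (hf : ∀ I, 0 ≤ f I)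
    (hz : ∀ I, f I = 0 → η.real (cyl I) = 0)
    (hC : ∀ n, ∑ I ∈ words A n, η.real (cyl I) * (Real.log (η.real (cyl I)) - Real.log (f I)) ≤ C)
    (K : Set (ℕ → A)) (hK : IsClopen K) (t : ℝ) (ht : μ.real K ≤ Real.exp (-t)) :
    t * η.real K ≤ C - Real.log c + Real.log 2 := by
  obtain ⟨n, s, hs, rfl⟩ := clopen_eq_cyl K hK
  rw [real_biUnion_cyl μ n s fun I hI => mem_words.1 (hs hI)] at ht
  rw [real_biUnion_cyl η n s fun I hI => mem_words.1 (hs hI)]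
  have hμ0 : ∀ I, η.real (cyl I) ≠ 0 → 0 < f I := fun I h =>
    lt_of_le_of_ne (hf I) fun h' => h (hz I h'.symm)
  have hμ1 : ∀ I, η.real (cyl I) ≠ 0 → 0 < μ.real (cyl I) := fun I h =>
    lt_of_lt_of_le (mul_pos hc (hμ0 I h)) (hlow I)
  have g := gibbs (words A n) (fun I => η.real (cyl I))
    (fun I => μ.real (cyl I) * (if I ∈ s then Real.exp t else 1) / 2)
    (fun I _ => measureReal_nonneg)
    (fun I _ => by split_ifs <;> positivity) ?_ ?_
  · have h2 : ∀ I ∈ words A n, η.real (cyl I) *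
        Real.log (μ.real (cyl I) * (if I ∈ s then Real.exp t else 1) / 2) =
        η.real (cyl I) * Real.log (μ.real (cyl I)) + t * (if I ∈ s then η.real (cyl I) else 0) -
        η.real (cyl I) * Real.log 2 := by
      intro I _
      by_cases h : η.real (cyl I) = 0
      · simp [h]
      · have := hμ1 I h
        split_ifs
        · rw [Real.log_div (by positivity) (by norm_num), Real.log_mul (by positivity) (by positivity),
            Real.log_exp]; ring
        · rw [Real.log_div (by positivity) (by norm_num), mul_one]; ring
    rw [Finset.sum_congr rfl h2, Finset.sum_sub_distrib, Finset.sum_add_distrib, ← Finset.sum_mul,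
      sum_real_cyl, ← Finset.mul_sum, Finset.sum_ite_mem, Finset.inter_eq_right.2 hs] at g
    have h3 : ∀ I ∈ words A n, -(η.real (cyl I) * Real.log (μ.real (cyl I))) + 
        (Real.log c) * η.real (cyl I) - Real.negMulLog (η.real (cyl I)) ≤
        η.real (cyl I) * (Real.log (η.real (cyl I)) - Real.log (f I)) := by
      intro I _
      by_cases h : η.real (cyl I) = 0
      · simp [h]
      · have h4 := Real.log_le_log (mul_pos hc (hμ0 I h)) (hlow I)
        rw [Real.log_mul hc.ne' (hμ0 I h).ne'] at h4
        have h5 := mul_le_mul_of_nonneg_left h4 (measureReal_nonneg (μ := η) (s := cyl I))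
        unfold Real.negMulLog
        linarith
    have h6 := (Finset.sum_le_sum h3).trans (hC n)
    rw [Finset.sum_sub_distrib, Finset.sum_add_distrib, ← Finset.mul_sum, sum_real_cyl,
      Finset.sum_neg_distrib] at h6
    linarith
  · intro I _ hI
    by_contra h
    have := hμ1 I h
    have h7 : 0 < μ.real (cyl I) * (if I ∈ s then Real.exp t else 1) / 2 := by
      split_ifs <;> positivity
    exact h7.ne' hI
  · rw [sum_real_cyl]
    have : ∀ I ∈ words A n, μ.real (cyl I) * (if I ∈ s then Real.exp t else 1) / 2 ≤
        (1/2) * μ.real (cyl I) + (Real.exp t / 2) * (if I ∈ s then μ.real (cyl I) else 0) := by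
      intro I _
      have : 0 ≤ μ.real (cyl I) := measureReal_nonneg
      split_ifs <;> nlinarith
    refine (Finset.sum_le_sum this).trans ?_
    rw [Finset.sum_add_distrib, ← Finset.mul_sum, ← Finset.mul_sum, sum_real_cyl,
      Finset.sum_ite_mem, Finset.inter_eq_right.2 hs]
    have := mul_le_mul_of_nonneg_left ht (Real.exp_pos t).le
    rw [← Real.exp_add, add_neg_cancel, Real.exp_zero] at this
    linarith

lemma ac_of_bdd [IsProbabilityMeasure μ] (η : Measure (ℕ → A)) [IsProbabilityMeasure η]
    (C : ℝ) (h : ∀ (K : Set (ℕ → A)), IsClopen K → ∀ t : ℝ, μ.real K ≤ Real.exp (-t) →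
      t * η.real K ≤ C) : η ≪ μ := by
  refine Measure.AbsolutelyContinuous.mk fun S hS h0 => ?_
  have key : ∀ K : Set (ℕ → A), IsClosed K → K ⊆ S → η K = 0 := by
    intro K hK hKS
    have hμK : μ K = 0 := measure_mono_null hKS h0
    rw [← measureReal_eq_zero_iff]
    refine le_antisymm ?_ measureReal_nonneg
    refine ge_of_tendsto (tendsto_const_div_atTop_nhds_zero_nat C) ?_
    filter_upwards [eventually_gt_atTop 0] with t ht
    have hε : μ K < ENNReal.ofReal (Real.exp (-(t:ℝ))) := by
      rw [hμK]; simpa using Real.exp_pos _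
    obtain ⟨U, hU, hUo, hUm⟩ := K.exists_isOpen_lt_of_lt _ hε
    obtain ⟨Q, hQ, h1, h2⟩ := exists_clopen_of_closed_subset_open hK hUo hU
    have h3 := h Q hQ t (ENNReal.toReal_le_of_le_ofReal (Real.exp_pos _).le
      ((measure_mono h2).trans hUm.le))
    have ht' : (0:ℝ) < t := by exact_mod_cast ht
    rw [le_div_iff₀ ht', mul_comm]
    refine le_trans ?_ h3
    exact mul_le_mul_of_nonneg_left (measureReal_mono h1) ht'.le
  by_contra hne
  obtain ⟨K, hK, hKc, hKm⟩ := hS.exists_isClosed_sdiff_lt (μ := η) (measure_ne_top _ _) hne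
  have : η S ≤ η K + η (S \ K) := by
    refine (measure_mono ?_).trans (measure_union_le _ _)
    intro x hx; by_cases h : x ∈ K <;> simp [h, hx]
  rw [key K hKc hK, zero_add] at this
  exact absurd hKm (not_lt.2 this)

/-- all consequences for the limit measure -/
theorem lim_props (h : OmW X f) (hX : IsSubshift X) (p : ℕ) (hw : WeakSpecification X p)
    (hptX : ∀ I, pt I ∈ X) (hpt : ∀ I, Lang X I → pt I ∈ cyl I)
    (P : ProbabilityMeasure (ℕ → A)) (l : Filter ℕ) [l.NeBot] (hla : l ≤ atTop)
    (hl : Tendsto (nuP h pt) l (𝓝 P)) :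
    P ∈ MInv X ∧ Ergodic shiftMap (P : Measure (ℕ → A)) ∧
    (∀ η ∈ MInv X, (∃ C : ℝ, ∀ n, ∑ I ∈ words A n, (η : Measure (ℕ → A)).real (cyl I) *
        (Real.log ((η : Measure (ℕ → A)).real (cyl I)) - Real.log (f I)) ≤ C) →
      (∀ I, f I = 0 → (η : Measure (ℕ → A)).real (cyl I) = 0) → η = P) ∧
    (∃ p : ℕ, ∃ c > (0:ℝ), ∀ S T : Set (ℕ → A), MeasurableSet S → MeasurableSet T →
        c * (((P : Measure (ℕ → A)) S).toReal * ((P : Measure (ℕ → A)) T).toReal) ≤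
          liminf (fun n : ℕ => ∑ i ∈ Finset.range (p+1),
            ((P : Measure (ℕ → A)) (S ∩ shiftMap^[n+i] ⁻¹' T)).toReal) atTop) ∧
      ((∃ q, Specification X q) →
        ∃ c > (0:ℝ), ∀ S T : Set (ℕ → A), MeasurableSet S → MeasurableSet T →
          c * (((P : Measure (ℕ → A)) S).toReal * ((P : Measure (ℕ → A)) T).toReal) ≤
            liminf (fun n : ℕ =>
              ((P : Measure (ℕ → A)) (S ∩ shiftMap^[n] ⁻¹' T)).toReal) atTop) := by
  have hD : GapSet X (Finset.range (p+1)) := by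
    intro I J hI hJ
    obtain ⟨K, hK, hL⟩ := hw I J hI hJ
    exact ⟨K, Finset.mem_range.2 (by omega), hL⟩
  have hinv := lim_inv hla h hl
  have hMX := lim_X h hl hX hptX
  obtain ⟨c0, hc0, hFF⟩ := h.FF_both p hD fun I r hI => hI.extend_left hX.1 hX.2.2 hw r
  have hlow : ∀ m n I, c0 * FF f m n I ≤ (P : Measure (ℕ → A)).real (cyl I) := fun m n I =>
    lim_lower hla h hl hpt p _ I m n fun m' n' hm hn => hFF m n m' n' hm hn I
  have hcomp : Comp f (P : Measure (ℕ → A)) := by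
    refine ⟨⟨c0, hc0, hlow⟩, fun I hI => ?_⟩
    by_contra! hcon
    have := lim_upper hla h hl hpt _ I fun m n => (hcon m n).le
    linarith
  obtain ⟨c, hc, hm⟩ := cyl_mix h hcomp p hD _ hD
  have hmix := borel_mix hinv hc hm
  have herg := ergodic_of_mix hinv hc hmix
  refine ⟨⟨hinv, hMX⟩, herg, ?_, ⟨p, c, hc, hmix⟩, ?_⟩
  · rintro η hη ⟨C, hC⟩ hz
    have hlow' : ∀ I, c0 * f I ≤ (P : Measure (ℕ → A)).real (cyl I) := fun I => by
      have := hlow 0 0 I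
      simpa [FF, words_zero] using this
    have hac : (η : Measure (ℕ → A)) ≪ P := ac_of_bdd _ _ fun K hK t ht =>
      dv_clopen (η : Measure (ℕ → A)) c0 C hc0 hlow' h.nonneg hz hC K hK t ht
    have := herg.eq_of_absolutelyContinuous (ν := (η : Measure (ℕ → A)))
      ⟨measurable_shiftMap, hη.1⟩ hac
    exact Subtype.ext this
  · rintro ⟨q, hq⟩
    have hDq : GapSet X {q} := by
      intro I J hI hJ
      obtain ⟨K, hK, hL⟩ := hq I J hI hJ
      exact ⟨K, by simpa using hK, hL⟩
    obtain ⟨c, hc, hm⟩ := cyl_mix h hcomp p hD _ hDq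
    refine ⟨c, hc, fun S T hS hT => ?_⟩
    have := borel_mix hinv hc hm S T hS hT
    simp only [Finset.sum_singleton] at this
    rw [liminf_nat_add (fun n => (P : Measure (ℕ → A)).real (S ∩ shiftMap^[n] ⁻¹' T)) q] at this
    exact this

end
end

set_option linter.unusedSectionVars false

noncomputable section

section fib
variable {α β γ : Type} [Fintype α] [Fintype β] [Fintype γ]

/-- words projecting to a given word -/
def fib (t : α → β) (J : List β) : Finset (List α) :=
  (words α J.length).filter (fun I => I.map t = J)

lemma mem_fib {t : α → β} {J : List β} {I : List α} : I ∈ fib t J ↔ I.map t = J := by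
  unfold fib
  rw [Finset.mem_filter, mem_words]
  refine ⟨fun h => h.2, fun h => ⟨?_, h⟩⟩
  rw [← h, List.length_map]

lemma sum_fib_append (t : α → β) (J₁ J₂ : List β) (g : List α → ℝ) :
    ∑ W ∈ fib t (J₁ ++ J₂), g W = ∑ U ∈ fib t J₁, ∑ V ∈ fib t J₂, g (U ++ V) := by
  rw [← Finset.sum_product']
  refine Finset.sum_nbij' (fun W => (W.take J₁.length, W.drop J₁.length)) (fun P => P.1 ++ P.2)
    ?_ ?_ ?_ ?_ ?_
  · intro W hW
    rw [mem_fib] at hW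
    rw [Finset.mem_product, mem_fib, mem_fib]
    simp [List.map_take, List.map_drop, hW]
  · rintro ⟨U, V⟩ h
    rw [Finset.mem_product, mem_fib, mem_fib] at h
    rw [mem_fib, List.map_append, h.1, h.2]
  · intro W _; simp
  · rintro ⟨U, V⟩ h
    rw [Finset.mem_product, mem_fib, mem_fib] at h
    have : U.length = J₁.length := by rw [← h.1, List.length_map]
    simp [← this]
  · intro W _; simp

lemma sum_fib_comp (t₁ : α → β) (t₂ : β → γ) (t : α → γ) (ht : ∀ a, t a = t₂ (t₁ a)) (J : List γ)
    (g : List α → ℝ) :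
    ∑ I ∈ fib t J, g I = ∑ w ∈ fib t₂ J, ∑ I ∈ fib t₁ w, g I := by
  have hmap : ∀ I : List α, I.map t = (I.map t₁).map t₂ := fun I => by
    rw [List.map_map]; exact List.map_congr_left fun a _ => ht a
  rw [← Finset.sum_fiberwise_of_maps_to (s := fib t J) (t := fib t₂ J) (g := fun I => I.map t₁)]
  · refine Finset.sum_congr rfl fun w hw => Finset.sum_congr ?_ fun _ _ => rfl
    ext I
    rw [Finset.mem_filter, mem_fib, mem_fib]
    rw [mem_fib] at hw
    refine ⟨fun h => h.2, fun h => ⟨?_, h⟩⟩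
    rw [hmap, h, hw]
  · intro I hI
    rw [mem_fib] at *
    rw [← hmap, hI]

lemma sum_words_fib (t : α → β) (n : ℕ) (g : List α → ℝ) :
    ∑ I ∈ words α n, g I = ∑ w ∈ words β n, ∑ I ∈ fib t w, g I := by
  rw [← Finset.sum_fiberwise_of_maps_to (s := words α n) (t := words β n)
    (g := fun I => I.map t)]
  · refine Finset.sum_congr rfl fun w hw => Finset.sum_congr ?_ fun _ _ => rfl
    ext I
    rw [Finset.mem_filter, mem_fib, mem_words]
    rw [mem_words] at hw
    refine ⟨fun h => h.2, fun h => ⟨?_, h⟩⟩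
    rw [← hw, ← h, List.length_map]
  · intro I hI
    rw [mem_words] at *
    rw [List.length_map, hI]

end fib

/-- partial sums of the weights -/
def AA (a : ℕ → ℝ) (i : ℕ) : ℝ := ∑ j ∈ Finset.range (i + 1), a j

/-- the recursively defined word functions -/
def phi {C : ℕ → Type} [∀ i, Fintype (C i)] (p : ∀ i, C i → C (i + 1)) (a : ℕ → ℝ)
    (φ : List (C 0) → ℝ) : (i : ℕ) → List (C i) → ℝ
  | 0 => φ
  | (i + 1) => fun J => (∑ w ∈ fib (p i) J, phi p a φ i w ^ (AA a i)⁻¹) ^ (AA a i)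

/-- standing assumptions for the chain -/
structure Good {C : ℕ → Type} [∀ i, Fintype (C i)] (X : Set (ℕ → C 0)) (p : ∀ i, C i → C (i + 1))
    (τ : ∀ i, C 0 → C i) (a : ℕ → ℝ) (φ : List (C 0) → ℝ) : Prop where
  τ0 : ∀ x, τ 0 x = x
  τs : ∀ i x, τ (i + 1) x = p i (τ i x)
  a0 : 0 < a 0
  an : ∀ i, 0 ≤ a i
  hne : X.Nonempty
  hsh : shiftMap '' X ⊆ X
  φp : ∀ I, Lang X I → 0 < φ I
  φz : ∀ I, ¬ Lang X I → φ I = 0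
  sub : ∃ c > 0, ∀ I J, φ (I ++ J) ≤ c * (φ I * φ J)
  sup : ∀ r : ℕ, ∃ c > 0, ∀ I K J : List (C 0), K.length ≤ r → Lang X (I ++ K ++ J) →
    c * (φ I * φ J) ≤ φ (I ++ K ++ J)

section chain
variable {C : ℕ → Type} [∀ i, Fintype (C i)] {X : Set (ℕ → C 0)} {p : ∀ i, C i → C (i + 1)}
    {τ : ∀ i, C 0 → C i} {a : ℕ → ℝ} {φ : List (C 0) → ℝ}

lemma Good.map0 (h : Good X p τ a φ) (I : List (C 0)) : I.map (τ 0) = I := by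
  have : τ 0 = id := funext h.τ0
  rw [this, List.map_id]

lemma Good.maps (h : Good X p τ a φ) (i : ℕ) (I : List (C 0)) :
    I.map (τ (i + 1)) = (I.map (τ i)).map (p i) := by
  rw [List.map_map]; exact List.map_congr_left fun x _ => h.τs i x

lemma Good.AA_pos (h : Good X p τ a φ) (i : ℕ) : 0 < AA a i := by
  unfold AA
  rw [Finset.sum_range_succ']
  have := Finset.sum_nonneg fun j (_ : j ∈ Finset.range i) => h.an (j + 1)
  linarith [h.a0]

lemma Good.phi_nonneg (h : Good X p τ a φ) (i : ℕ) (J : List (C i)) : 0 ≤ phi p a φ i J := by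
  cases i with
  | zero =>
    by_cases hJ : Lang X J
    · exact (h.φp J hJ).le
    · exact (h.φz J hJ).ge
  | succ i =>
    refine Real.rpow_nonneg (Finset.sum_nonneg fun w _ => Real.rpow_nonneg ?_ _) _
    exact h.phi_nonneg i w

lemma Good.phi_sub (h : Good X p τ a φ) (i : ℕ) :
    ∃ c > 0, ∀ I J : List (C i), phi p a φ i (I ++ J) ≤ c * (phi p a φ i I * phi p a φ i J) := by
  induction i with
  | zero => exact h.sub
  | succ i ih =>
    obtain ⟨c, hc, hs⟩ := ih
    refine ⟨c, hc, fun I J => ?_⟩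
    have hA := h.AA_pos i
    have hnn := h.phi_nonneg i
    have hnz : ∀ J, 0 ≤ ∑ w ∈ fib (p i) J, phi p a φ i w ^ (AA a i)⁻¹ := fun J =>
      Finset.sum_nonneg fun w _ => Real.rpow_nonneg (hnn w) _
    show (∑ w ∈ fib (p i) (I ++ J), phi p a φ i w ^ (AA a i)⁻¹) ^ (AA a i) ≤
      c * ((∑ w ∈ fib (p i) I, phi p a φ i w ^ (AA a i)⁻¹) ^ (AA a i) *
        (∑ w ∈ fib (p i) J, phi p a φ i w ^ (AA a i)⁻¹) ^ (AA a i))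
    have hcA : c = (c ^ (AA a i)⁻¹) ^ (AA a i) := by
      rw [← Real.rpow_mul hc.le, inv_mul_cancel₀ hA.ne', Real.rpow_one]
    rw [← Real.mul_rpow (hnz _) (hnz _)]
    conv_rhs => rw [hcA]
    rw [← Real.mul_rpow (by positivity) (mul_nonneg (hnz _) (hnz _))]
    refine Real.rpow_le_rpow (hnz _) ?_ hA.le
    rw [sum_fib_append, Finset.sum_mul_sum, Finset.mul_sum]
    refine Finset.sum_le_sum fun U _ => ?_
    rw [Finset.mul_sum]
    refine Finset.sum_le_sum fun V _ => ?_
    rw [← Real.mul_rpow (hnn _) (hnn _), ← Real.mul_rpow hc.le (mul_nonneg (hnn _) (hnn _))]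
    exact Real.rpow_le_rpow (hnn _) (hs U V) (by positivity)

lemma Good.phi_pos (h : Good X p τ a φ) (i : ℕ) (I : List (C 0)) (hI : Lang X I) :
    0 < phi p a φ i (I.map (τ i)) := by
  induction i with
  | zero => rw [h.map0]; exact h.φp I hI
  | succ i ih =>
    refine Real.rpow_pos_of_pos ?_ _
    refine lt_of_lt_of_le (Real.rpow_pos_of_pos ih (AA a i)⁻¹) ?_
    exact Finset.single_le_sum (f := fun w => phi p a φ i w ^ (AA a i)⁻¹)
      (fun w _ => Real.rpow_nonneg (h.phi_nonneg i w) _) (mem_fib.2 (h.maps i I).symm)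

lemma Good.phi_lang (h : Good X p τ a φ) (i : ℕ) (J : List (C i)) (hJ : phi p a φ i J ≠ 0) :
    ∃ I, Lang X I ∧ I.map (τ i) = J := by
  induction i with
  | zero =>
    refine ⟨J, ?_, h.map0 J⟩
    by_contra hL
    exact hJ (h.φz J hL)
  | succ i ih =>
    have : ∑ w ∈ fib (p i) J, phi p a φ i w ^ (AA a i)⁻¹ ≠ 0 := by
      intro h0
      apply hJ
      show (∑ w ∈ fib (p i) J, phi p a φ i w ^ (AA a i)⁻¹) ^ (AA a i) = 0
      rw [h0, Real.zero_rpow (h.AA_pos i).ne']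
    obtain ⟨w, hw, hw0⟩ := Finset.exists_ne_zero_of_sum_ne_zero this
    obtain ⟨I, hI, hIw⟩ := ih w (fun h0 => hw0 (by
      rw [h0, Real.zero_rpow (inv_pos.2 (h.AA_pos i)).ne']))
    refine ⟨I, hI, ?_⟩
    rw [h.maps, hIw, mem_fib.1 hw]

/-- the logarithm along the chain -/
def Lam (p : ∀ i, C i → C (i + 1)) (τ : ∀ i, C 0 → C i) (a : ℕ → ℝ) (φ : List (C 0) → ℝ)
    (i : ℕ) (I : List (C 0)) : ℝ := Real.log (phi p a φ i (I.map (τ i)))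

/-- partition function -/
def zet (p : ∀ i, C i → C (i + 1)) (a : ℕ → ℝ) (φ : List (C 0) → ℝ)
    (K n : ℕ) : ℝ := ∑ J ∈ words (C K) n, phi p a φ K J ^ (AA a K)⁻¹

/-- log conditional weights -/
def EE (p : ∀ i, C i → C (i + 1)) (τ : ∀ i, C 0 → C i) (a : ℕ → ℝ) (φ : List (C 0) → ℝ)
    (K j : ℕ) (I : List (C 0)) : ℝ :=
  ∑ i ∈ Finset.Ico j K, (AA a i)⁻¹ * (Lam p τ a φ i I - Lam p τ a φ (i + 1) I) +
    (AA a K)⁻¹ * Lam p τ a φ K I - Real.log (zet p a φ K I.length)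

/-- the weight -/
def fw (X : Set (ℕ → C 0)) (p : ∀ i, C i → C (i + 1)) (τ : ∀ i, C 0 → C i) (a : ℕ → ℝ)
    (φ : List (C 0) → ℝ) (K : ℕ) (I : List (C 0)) : ℝ :=
  if Lang X I then Real.exp (EE p τ a φ K 0 I) else 0

lemma Lang.exists_word (hne : X.Nonempty) (n : ℕ) : ∃ I, I.length = n ∧ Lang X I := by
  obtain ⟨x, hx⟩ := hne
  exact ⟨wordOf x n, length_wordOf x n, x, mem_cyl_wordOf x n, hx⟩

lemma Good.zet_pos (h : Good X p τ a φ) (K n : ℕ) : 0 < zet p a φ K n := by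
  obtain ⟨I, hI, hL⟩ := Lang.exists_word h.hne n
  refine lt_of_lt_of_le (Real.rpow_pos_of_pos (h.phi_pos K I hL) (AA a K)⁻¹) ?_
  exact Finset.single_le_sum (f := fun w => phi p a φ K w ^ (AA a K)⁻¹)
      (fun w _ => Real.rpow_nonneg (h.phi_nonneg K w) _)
      (mem_words.2 (by rw [List.length_map, hI]))

lemma EE_succ {K j : ℕ} (hj : j < K) (I : List (C 0)) : EE p τ a φ K j I =
    (AA a j)⁻¹ * (Lam p τ a φ j I - Lam p τ a φ (j + 1) I) + EE p τ a φ K (j + 1) I := by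
  unfold EE
  rw [← Finset.add_sum_Ioo_eq_sum_Ico hj]
  have : Finset.Ioo j K = Finset.Ico (j + 1) K := by
    ext x; simp only [Finset.mem_Ioo, Finset.mem_Ico]; omega
  rw [this]; ring

lemma Good.map_eq (h : Good X p τ a φ) {I I' : List (C 0)} {j i : ℕ} (hji : j ≤ i)
    (hI : I.map (τ j) = I'.map (τ j)) : I.map (τ i) = I'.map (τ i) := by
  induction i, hji using Nat.le_induction with
  | base => exact hI
  | succ i _ ih => rw [h.maps, h.maps, ih]

lemma Good.EE_dep (h : Good X p τ a φ) {I I' : List (C 0)} {K j : ℕ} (hj : j ≤ K)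
    (hI : I.map (τ j) = I'.map (τ j)) : EE p τ a φ K j I = EE p τ a φ K j I' := by
  have hL : ∀ i, j ≤ i → Lam p τ a φ i I = Lam p τ a φ i I' := fun i hi => by
    unfold Lam; rw [h.map_eq hi hI]
  have hlen : I.length = I'.length := by
    have := congrArg List.length hI
    simpa using this
  unfold EE
  rw [hL K hj, hlen]
  congr 2
  refine Finset.sum_congr rfl fun i hi => ?_
  rw [Finset.mem_Ico] at hi
  rw [hL i hi.1, hL (i + 1) (by omega)]

/-- marginals of a word function -/
def marg (τ : ∀ i, C 0 → C i) (P : List (C 0) → ℝ) (j : ℕ) (J : List (C j)) : ℝ :=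
  ∑ I ∈ fib (τ j) J, P I

lemma Good.exp_Lam (h : Good X p τ a φ) (j : ℕ) (I : List (C 0)) (hI : Lang X I) (s : ℝ) :
    Real.exp (s * Lam p τ a φ j I) = phi p a φ j (I.map (τ j)) ^ s := by
  unfold Lam
  rw [Real.rpow_def_of_pos (h.phi_pos j I hI), mul_comm]

lemma Good.marg_step (h : Good X p τ a φ) {K j : ℕ} 
    (ih : ∀ I, Lang X I → marg τ (fw X p τ a φ K) j (I.map (τ j)) = Real.exp (EE p τ a φ K j I))
    (w : List (C j)) (e : ℝ)
    (he : ∀ I, Lang X I → I.map (τ j) = w →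
      EE p τ a φ K j I = (AA a j)⁻¹ * Lam p τ a φ j I + e) :
    marg τ (fw X p τ a φ K) j w = phi p a φ j w ^ (AA a j)⁻¹ * Real.exp e := by
  by_cases h0 : phi p a φ j w = 0
  · rw [h0, Real.zero_rpow (inv_pos.2 (h.AA_pos j)).ne', zero_mul]
    refine Finset.sum_eq_zero fun I hI => ?_
    rw [mem_fib] at hI
    unfold fw
    rw [if_neg]
    intro hL
    have := h.phi_pos j I hL
    rw [hI, h0] at this
    exact lt_irrefl _ this
  · obtain ⟨I, hI, hw⟩ := h.phi_lang j w h0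
    have := ih I hI
    rw [hw, he I hI hw, Real.exp_add, h.exp_Lam j I hI, hw] at this
    exact this

lemma Good.marg_eq (h : Good X p τ a φ) {K : ℕ} (j : ℕ) (hj : j ≤ K) (I : List (C 0))
    (hI : Lang X I) :
    marg τ (fw X p τ a φ K) j (I.map (τ j)) = Real.exp (EE p τ a φ K j I) := by
  induction j generalizing I with
  | zero =>
    unfold marg
    rw [Finset.sum_eq_single I]
    · unfold fw; rw [if_pos hI]
    · intro I' hI' hne
      rw [mem_fib, h.map0, h.map0] at hI'
      exact absurd hI' hne
    · intro hI'
      exact absurd (mem_fib.2 rfl) hI'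
  | succ j ih =>
    have ih' := ih (by omega)
    unfold marg
    rw [sum_fib_comp (τ j) (p j) _ (h.τs j)]
    have e1 : ∀ w ∈ fib (p j) (I.map (τ (j + 1))), ∑ I ∈ fib (τ j) w, fw X p τ a φ K I =
        phi p a φ j w ^ (AA a j)⁻¹ * Real.exp (-((AA a j)⁻¹ * Lam p τ a φ (j + 1) I) +
          EE p τ a φ K (j + 1) I) := by
      intro w hw
      refine h.marg_step ih' w _ fun I' hI' hw' => ?_
      have hmap : I'.map (τ (j + 1)) = I.map (τ (j + 1)) := by
        rw [h.maps, hw', mem_fib.1 hw]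
      have hLam : Lam p τ a φ (j + 1) I' = Lam p τ a φ (j + 1) I := by
        unfold Lam; rw [hmap]
      rw [EE_succ (by omega), h.EE_dep hj hmap, hLam]; ring
    rw [Finset.sum_congr rfl e1, ← Finset.sum_mul, Real.exp_add, ← mul_assoc]
    have hp := h.phi_pos (j + 1) I hI
    have hZ0 : 0 ≤ ∑ w ∈ fib (p j) (I.map (τ (j + 1))), phi p a φ j w ^ (AA a j)⁻¹ :=
      Finset.sum_nonneg fun w _ => Real.rpow_nonneg (h.phi_nonneg j w) _
    have e2 : Real.exp (-((AA a j)⁻¹ * Lam p τ a φ (j + 1) I)) =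
        (∑ w ∈ fib (p j) (I.map (τ (j + 1))), phi p a φ j w ^ (AA a j)⁻¹)⁻¹ := by
      rw [Real.exp_neg, h.exp_Lam (j + 1) I hI]
      congr 1
      show ((∑ w ∈ fib (p j) (I.map (τ (j + 1))), phi p a φ j w ^ (AA a j)⁻¹) ^ (AA a j)) ^ _ = _
      rw [← Real.rpow_mul hZ0, mul_inv_cancel₀ (h.AA_pos j).ne', Real.rpow_one]
    rw [e2, mul_inv_cancel₀, one_mul]
    intro h0
    have : phi p a φ (j + 1) (I.map (τ (j + 1))) = 0 := by
      show (∑ w ∈ fib (p j) (I.map (τ (j + 1))), phi p a φ j w ^ (AA a j)⁻¹) ^ (AA a j) = 0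
      rw [h0, Real.zero_rpow (h.AA_pos j).ne']
    exact hp.ne' this

lemma Good.sum_fw (h : Good X p τ a φ) (K n : ℕ) : ∑ I ∈ words (C 0) n, fw X p τ a φ K I = 1 := by
  rw [sum_words_fib (τ K)]
  have e1 : ∀ w ∈ words (C K) n, ∑ I ∈ fib (τ K) w, fw X p τ a φ K I =
      phi p a φ K w ^ (AA a K)⁻¹ * Real.exp (- Real.log (zet p a φ K n)) := by
    intro w hw
    refine h.marg_step (fun I hI => h.marg_eq K le_rfl I hI) w _ fun I' hI' hw' => ?_
    have : I'.length = n := by rw [← mem_words.1 hw, ← hw', List.length_map]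
    unfold EE
    rw [Finset.Ico_self, this]; simp; ring
  rw [Finset.sum_congr rfl e1, ← Finset.sum_mul, Real.exp_neg, Real.exp_log (h.zet_pos K n)]
  exact mul_inv_cancel₀ (h.zet_pos K n).ne'

lemma Good.identity (h : Good X p τ a φ) (K : ℕ) (I : List (C 0)) :
    ∑ j ∈ Finset.range (K + 1), a j * EE p τ a φ K j I =
      Lam p τ a φ 0 I - AA a K * Real.log (zet p a φ K I.length) := by
  have key : ∀ m ≤ K, ∑ j ∈ Finset.range (m + 1), a j * EE p τ a φ K j I =
      Lam p τ a φ 0 I - Lam p τ a φ m I + AA a m * EE p τ a φ K m I := by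
    intro m
    induction m with
    | zero => intro _; simp [AA]
    | succ m ih =>
      intro hm
      rw [Finset.sum_range_succ, ih (by omega), EE_succ (by omega : m < K)]
      have : AA a (m + 1) = AA a m + a (m + 1) := by unfold AA; rw [Finset.sum_range_succ _ (m + 1)]
      rw [this, mul_add, mul_inv_cancel_left₀ (h.AA_pos m).ne']
      ring
  rw [key K le_rfl]
  unfold EE
  rw [Finset.Ico_self, Finset.sum_empty, mul_sub, zero_add, mul_inv_cancel_left₀ (h.AA_pos K).ne']
  ring

end chain
end

set_option linter.unusedSectionVars false

noncomputable section

lemma abel_aux (s L : ℕ → ℝ) (K : ℕ) :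
    ∑ i ∈ Finset.Ico 0 K, s i * (L i - L (i + 1)) + s K * L K =
      s 0 * L 0 - ∑ i ∈ Finset.range K, (s i - s (i + 1)) * L (i + 1) := by
  rw [Finset.range_eq_Ico]
  induction K with
  | zero => simp
  | succ K ih =>
    rw [Finset.sum_Ico_succ_top (by omega), Finset.sum_Ico_succ_top (by omega)]
    linarith

section chain
variable {C : ℕ → Type} [∀ i, Fintype (C i)] {X : Set (ℕ → C 0)} {p : ∀ i, C i → C (i + 1)}
    {τ : ∀ i, C 0 → C i} {a : ℕ → ℝ} {φ : List (C 0) → ℝ}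

lemma Lang.parts {I K J : List (C 0)} (hsh : shiftMap '' X ⊆ X) (hL : Lang X (I ++ K ++ J)) :
    Lang X I ∧ Lang X K ∧ Lang X J :=
  ⟨hL.left.left, hL.left.right hsh, hL.right hsh⟩

lemma Good.Lam_sub (h : Good X p τ a φ) (i r : ℕ) : ∃ M : ℝ, ∀ I K J : List (C 0), K.length ≤ r →
    Lang X (I ++ K ++ J) →
    Lam p τ a φ i (I ++ K ++ J) ≤ Lam p τ a φ i I + Lam p τ a φ i J + M := by
  obtain ⟨c, hc, hs⟩ := h.phi_sub i
  set B : ℝ := 1 + ∑ n ∈ Finset.range (r + 1), ∑ W ∈ words (C i) n, phi p a φ i W with hB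
  have hB0 : ∀ n, 0 ≤ ∑ W ∈ words (C i) n, phi p a φ i W := fun n =>
    Finset.sum_nonneg fun W _ => h.phi_nonneg i W
  have hBpos : 0 < B := by
    have := Finset.sum_nonneg fun n (_ : n ∈ Finset.range (r + 1)) => hB0 n
    linarith
  refine ⟨Real.log (c * c * B), fun I K J hK hL => ?_⟩
  obtain ⟨hI, -, hJ⟩ := hL.parts h.hsh
  have hKB : phi p a φ i (K.map (τ i)) ≤ B := by
    have h1 := Finset.single_le_sum (f := fun W => phi p a φ i W)
      (fun W _ => h.phi_nonneg i W) (mem_words.2 (List.length_map (as := K) (τ i)))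
    have h2 := Finset.single_le_sum (f := fun n => ∑ W ∈ words (C i) n, phi p a φ i W)
      (fun n _ => hB0 n) (Finset.mem_range.2 (by omega : K.length < r + 1))
    linarith
  unfold Lam
  have pI := h.phi_pos i I hI
  have pJ := h.phi_pos i J hJ
  rw [← Real.log_mul pI.ne' pJ.ne', ← Real.log_mul (by positivity) (by positivity)]
  refine Real.log_le_log (h.phi_pos i _ hL) ?_
  rw [List.map_append, List.map_append]
  have h3 := hs (I.map (τ i) ++ K.map (τ i)) (J.map (τ i))
  have h4 := hs (I.map (τ i)) (K.map (τ i))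
  calc _ ≤ _ := h3
    _ ≤ c * ((c * (phi p a φ i (I.map (τ i)) * B)) * phi p a φ i (J.map (τ i))) := by
      gcongr
      refine h4.trans ?_
      gcongr
    _ = _ := by ring

lemma Good.Lam_sup (h : Good X p τ a φ) (r : ℕ) : ∃ M : ℝ, ∀ I K J : List (C 0), K.length ≤ r →
    Lang X (I ++ K ++ J) →
    Lam p τ a φ 0 I + Lam p τ a φ 0 J - M ≤ Lam p τ a φ 0 (I ++ K ++ J) := by
  obtain ⟨c, hc, hs⟩ := h.sup r
  refine ⟨-Real.log c, fun I K J hK hL => ?_⟩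
  obtain ⟨hI, -, hJ⟩ := hL.parts h.hsh
  unfold Lam
  simp only [h.map0]
  show Real.log (φ I) + Real.log (φ J) - -Real.log c ≤ Real.log (φ (I ++ K ++ J))
  have pI := h.φp I hI
  have pJ := h.φp J hJ
  have := Real.log_le_log (by positivity) (hs I K J hK hL)
  rw [Real.log_mul hc.ne' (by positivity), Real.log_mul pI.ne' pJ.ne'] at this
  linarith

/-- unnormalised log weight -/
def LL (p : ∀ i, C i → C (i + 1)) (τ : ∀ i, C 0 → C i) (a : ℕ → ℝ) (φ : List (C 0) → ℝ)
    (K : ℕ) (I : List (C 0)) : ℝ :=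
  EE p τ a φ K 0 I + Real.log (zet p a φ K I.length)

lemma LL_eq (K : ℕ) (I : List (C 0)) : LL p τ a φ K I = (AA a 0)⁻¹ * Lam p τ a φ 0 I -
    ∑ i ∈ Finset.range K, ((AA a i)⁻¹ - (AA a (i + 1))⁻¹) * Lam p τ a φ (i + 1) I := by
  rw [← abel_aux (fun i => (AA a i)⁻¹) (fun i => Lam p τ a φ i I) K]
  unfold LL EE
  ring

lemma Good.coef_nonneg (h : Good X p τ a φ) (i : ℕ) : 0 ≤ (AA a i)⁻¹ - (AA a (i + 1))⁻¹ := by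
  have : AA a (i + 1) = AA a i + a (i + 1) := by unfold AA; rw [Finset.sum_range_succ _ (i + 1)]
  rw [sub_nonneg]
  exact inv_anti₀ (h.AA_pos i) (by linarith [h.an (i + 1)])

lemma Good.LL_sup (h : Good X p τ a φ) (K r : ℕ) : ∃ M : ℝ, ∀ I G J : List (C 0), G.length ≤ r →
    Lang X (I ++ G ++ J) →
    LL p τ a φ K I + LL p τ a φ K J - M ≤ LL p τ a φ K (I ++ G ++ J) := by
  obtain ⟨M0, hM0⟩ := h.Lam_sup r
  choose M hM using fun i => h.Lam_sub i r
  refine ⟨(AA a 0)⁻¹ * M0 + ∑ i ∈ Finset.range K, ((AA a i)⁻¹ - (AA a (i + 1))⁻¹) * M (i + 1),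
    fun I G J hG hL => ?_⟩
  simp only [LL_eq]
  have h1 := mul_le_mul_of_nonneg_left (hM0 I G J hG hL) (inv_pos.2 (h.AA_pos 0)).le
  have h2 : ∑ i ∈ Finset.range K, ((AA a i)⁻¹ - (AA a (i + 1))⁻¹) * Lam p τ a φ (i + 1) (I ++ G ++ J)
      ≤ ∑ i ∈ Finset.range K, ((AA a i)⁻¹ - (AA a (i + 1))⁻¹) * Lam p τ a φ (i + 1) I +
        ∑ i ∈ Finset.range K, ((AA a i)⁻¹ - (AA a (i + 1))⁻¹) * Lam p τ a φ (i + 1) J +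
        ∑ i ∈ Finset.range K, ((AA a i)⁻¹ - (AA a (i + 1))⁻¹) * M (i + 1) := by
    rw [← Finset.sum_add_distrib, ← Finset.sum_add_distrib]
    refine Finset.sum_le_sum fun i _ => ?_
    rw [← mul_add, ← mul_add]
    exact mul_le_mul_of_nonneg_left (hM (i + 1) I G J hG hL) (h.coef_nonneg i)
  linarith

lemma Good.zet_sub (h : Good X p τ a φ) (K : ℕ) : ∃ c > 0, ∀ n m,
    zet p a φ K (n + m) ≤ c * (zet p a φ K n * zet p a φ K m) := by
  obtain ⟨c, hc, hs⟩ := h.phi_sub K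
  refine ⟨c ^ (AA a K)⁻¹, by positivity, fun n m => ?_⟩
  have hnn := h.phi_nonneg K
  unfold zet
  rw [sum_words_add, Finset.sum_mul_sum, Finset.mul_sum]
  refine Finset.sum_le_sum fun U _ => ?_
  rw [Finset.mul_sum]
  refine Finset.sum_le_sum fun V _ => ?_
  rw [← Real.mul_rpow (hnn _) (hnn _), ← Real.mul_rpow hc.le (mul_nonneg (hnn _) (hnn _))]
  exact Real.rpow_le_rpow (hnn _) (hs U V) (inv_pos.2 (h.AA_pos K)).le

lemma Good.zet_bound (h : Good X p τ a φ) (K r : ℕ) : ∃ B > 0, ∀ n ≤ r, zet p a φ K n ≤ B := by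
  refine ⟨∑ n ∈ Finset.range (r + 1), zet p a φ K n, ?_, fun n hn => ?_⟩
  · exact Finset.sum_pos (fun n _ => h.zet_pos K n) ⟨0, by simp⟩
  · exact Finset.single_le_sum (f := fun n => zet p a φ K n) (fun n _ => (h.zet_pos K n).le)
      (Finset.mem_range.2 (by omega))

lemma Good.fw_eq (h : Good X p τ a φ) (K : ℕ) (I : List (C 0)) (hI : Lang X I) :
    fw X p τ a φ K I = Real.exp (LL p τ a φ K I) / zet p a φ K I.length := by
  unfold fw LL
  rw [if_pos hI, Real.exp_add, Real.exp_log (h.zet_pos K _), mul_div_cancel_right₀]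
  exact (h.zet_pos K _).ne'

lemma fw_nonneg (K : ℕ) (I : List (C 0)) : 0 ≤ fw X p τ a φ K I := by
  unfold fw; split_ifs
  · positivity
  · exact le_rfl

lemma fw_supp (K : ℕ) (I : List (C 0)) (hI : fw X p τ a φ K I ≠ 0) : Lang X I := by
  by_contra hL
  exact hI (if_neg hL)

lemma Good.omW (h : Good X p τ a φ) (K : ℕ) : OmW X (fw X p τ a φ K) := by
  refine ⟨fw_nonneg K, fw_supp K, h.sum_fw K, fun r => ?_⟩
  obtain ⟨M, hM⟩ := h.LL_sup K r
  obtain ⟨c, hc, hz⟩ := h.zet_sub K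
  obtain ⟨B, hB, hzB⟩ := h.zet_bound K r
  refine ⟨Real.exp (-M) / (c * c * B), by positivity, fun I G J hG hL => ?_⟩
  obtain ⟨hI, -, hJ⟩ := hL.parts h.hsh
  rw [h.fw_eq K I hI, h.fw_eq K J hJ, h.fw_eq K _ hL]
  have h1 := Real.exp_le_exp.2 (hM I G J hG hL)
  rw [sub_eq_add_neg, Real.exp_add, Real.exp_add] at h1
  have pI := h.zet_pos K I.length
  have pJ := h.zet_pos K J.length
  have pL := h.zet_pos K (I ++ G ++ J).length
  have h2 : zet p a φ K (I ++ G ++ J).length ≤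
      c * c * B * (zet p a φ K I.length * zet p a φ K J.length) := by
    rw [List.length_append, List.length_append]
    calc _ ≤ _ := hz _ _
      _ ≤ c * ((c * (zet p a φ K I.length * B)) * zet p a φ K J.length) := by
        gcongr
        refine (hz _ _).trans ?_
        gcongr
        exact hzB _ hG
      _ = _ := by ring
  calc Real.exp (-M) / (c * c * B) * (Real.exp (LL p τ a φ K I) / zet p a φ K I.length *
        (Real.exp (LL p τ a φ K J) / zet p a φ K J.length)) =
      (Real.exp (LL p τ a φ K I) * Real.exp (LL p τ a φ K J) * Real.exp (-M)) /
        (c * c * B * (zet p a φ K I.length * zet p a φ K J.length)) := by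
        field_simp
    _ ≤ Real.exp (LL p τ a φ K (I ++ G ++ J)) / zet p a φ K (I ++ G ++ J).length := by
        gcongr

lemma Good.zet_sup (h : Good X p τ a φ) (K q : ℕ) (hw : WeakSpecification X q) : ∃ c > 0, ∀ n m,
    zet p a φ K n * zet p a φ K m ≤ c * zet p a φ K (n + m) := by
  obtain ⟨M, hM⟩ := h.LL_sup K q
  obtain ⟨c, hc, hz⟩ := h.zet_sub K
  obtain ⟨B, hB, hzB⟩ := h.zet_bound K q
  have hD : GapSet X (Finset.range (q + 1)) := by
    intro I J hI hJ
    obtain ⟨K, hK, hL⟩ := hw I J hI hJ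
    exact ⟨K, Finset.mem_range.2 (by omega), hL⟩
  set u : List (C 0) → ℝ := fun I => if Lang X I then Real.exp (LL p τ a φ K I) else 0 with hu
  have hu0 : ∀ I, 0 ≤ u I := fun I => by
    simp only [hu]; split_ifs
    · positivity
    · exact le_rfl
  have hsum : ∀ n, ∑ I ∈ words (C 0) n, u I = zet p a φ K n := by
    intro n
    have h1 := h.sum_fw K n
    have h2 : ∀ I ∈ words (C 0) n, u I = zet p a φ K n * fw X p τ a φ K I := by
      intro I hI
      by_cases hL : Lang X I
      · rw [h.fw_eq K I hL, mem_words.1 hI, mul_div_cancel₀ _ (h.zet_pos K n).ne']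
        simp only [hu]; rw [if_pos hL]
      · simp only [hu, fw]; rw [if_neg hL, if_neg hL, mul_zero]
    rw [Finset.sum_congr rfl h2, ← Finset.mul_sum, h1, mul_one]
  have hg : ∀ I J, Real.exp (-M) * (u I * u J) ≤
      ∑ d ∈ Finset.range (q + 1), ∑ G ∈ words (C 0) d, u (I ++ G ++ J) := by
    intro I J
    by_cases hI : Lang X I
    · by_cases hJ : Lang X J
      · obtain ⟨G, hG, hL⟩ := hD I J hI hJ
        refine sum_sigma_ge _ (fun G => u (I ++ G ++ J)) (fun _ => hu0 _) G hG ?_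
        have h1 := Real.exp_le_exp.2 (hM I G J (by rw [Finset.mem_range] at hG; omega) hL)
        rw [sub_eq_add_neg, Real.exp_add, Real.exp_add] at h1
        simp only [hu]
        rw [if_pos hI, if_pos hJ, if_pos hL]
        linarith
      · have : u J = 0 := by simp only [hu]; rw [if_neg hJ]
        rw [this, mul_zero, mul_zero]
        exact Finset.sum_nonneg fun d _ => Finset.sum_nonneg fun _ _ => hu0 _
    · have : u I = 0 := by simp only [hu]; rw [if_neg hI]
      rw [this, zero_mul, mul_zero]
      exact Finset.sum_nonneg fun d _ => Finset.sum_nonneg fun _ _ => hu0 _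
  refine ⟨Real.exp M * ((q + 1) * (c * B)), by positivity, fun n m => ?_⟩
  have key : Real.exp (-M) * (zet p a φ K n * zet p a φ K m) ≤
      ∑ d ∈ Finset.range (q + 1), zet p a φ K (n + d + m) := by
    rw [← hsum n, ← hsum m, Finset.sum_mul_sum, Finset.mul_sum]
    have e : ∀ d, zet p a φ K (n + d + m) = ∑ I ∈ words (C 0) n, ∑ J ∈ words (C 0) m,
        ∑ G ∈ words (C 0) d, u (I ++ G ++ J) := by
      intro d
      rw [← hsum, sum_words_add, sum_words_add]
      refine Finset.sum_congr rfl fun I _ => ?_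
      rw [Finset.sum_comm]
    simp only [e]
    rw [Finset.sum_comm]
    refine Finset.sum_le_sum fun I _ => ?_
    rw [Finset.mul_sum, Finset.sum_comm]
    exact Finset.sum_le_sum fun J _ => hg I J
  have key2 : ∑ d ∈ Finset.range (q + 1), zet p a φ K (n + d + m) ≤
      (q + 1) * (c * B) * zet p a φ K (n + m) := by
    have : ∀ d ∈ Finset.range (q + 1), zet p a φ K (n + d + m) ≤ c * B * zet p a φ K (n + m) := by
      intro d hd
      rw [Finset.mem_range] at hd
      have e : n + d + m = n + m + d := by omega
      rw [e]
      refine (hz _ _).trans ?_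
      have := hzB d (by omega)
      have := h.zet_pos K (n + m)
      calc c * (zet p a φ K (n + m) * zet p a φ K d) ≤ c * (zet p a φ K (n + m) * B) := by gcongr
        _ = _ := by ring
    refine (Finset.sum_le_sum this).trans ?_
    rw [Finset.sum_const, Finset.card_range, nsmul_eq_mul]
    push_cast
    exact le_of_eq (by ring)
  have h3 := mul_le_mul_of_nonneg_left (key.trans key2) (Real.exp_pos M).le
  rw [← mul_assoc, ← Real.exp_add, add_neg_cancel, Real.exp_zero, one_mul] at h3
  linarith

lemma almost_additive (u : ℕ → ℝ) (c : ℝ) (h1 : ∀ n m, u (n + m) ≤ u n + u m + c)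
    (h2 : ∀ n m, u n + u m ≤ u (n + m) + c) :
    ∃ P : ℝ, ∀ n : ℕ, n * P - c ≤ u n ∧ u n ≤ n * P + c := by
  have hs1 : Subadditive (fun n => u n + c) := fun n m => by
    have := h1 n m; simp only; linarith
  have hs2 : Subadditive (fun n => c - u n) := fun n m => by
    have := h2 n m; simp only; linarith
  have hc : 0 ≤ c := by linarith [h1 0 0, h2 0 0]
  have lin1 : ∀ n : ℕ, u n ≤ n * (u 1 + c) + |u 0| := by
    intro n
    induction n with
    | zero => simpa using le_abs_self (u 0)
    | succ n ih => have := h1 n 1; push_cast; linarith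
  have lin2 : ∀ n : ℕ, n * (u 1 - c) - |u 0| ≤ u n := by
    intro n
    induction n with
    | zero => simpa using neg_abs_le (u 0)
    | succ n ih => have := h2 n 1; push_cast; linarith
  have dv : ∀ n : ℕ, n ≠ 0 → |u 0| ≤ n * |u 0| := by
    intro n hn
    have : (1:ℝ) ≤ n := by exact_mod_cast Nat.one_le_iff_ne_zero.2 hn
    nlinarith [abs_nonneg (u 0)]
  have b1 : BddBelow (Set.range fun n : ℕ => (u n + c) / n) := by
    refine ⟨min 0 (u 1 - c - |u 0|), ?_⟩
    rintro _ ⟨n, rfl⟩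
    rcases eq_or_ne n 0 with rfl | hn
    · simp
    · have hn' : (0:ℝ) < n := by exact_mod_cast Nat.pos_of_ne_zero hn
      refine (min_le_right _ _).trans ?_
      simp only
      rw [le_div_iff₀ hn']
      nlinarith [lin2 n, dv n hn]
  have b2 : BddBelow (Set.range fun n : ℕ => (c - u n) / n) := by
    refine ⟨min 0 (-(u 1 + c) - |u 0|), ?_⟩
    rintro _ ⟨n, rfl⟩
    rcases eq_or_ne n 0 with rfl | hn
    · simp
    · have hn' : (0:ℝ) < n := by exact_mod_cast Nat.pos_of_ne_zero hn
      refine (min_le_right _ _).trans ?_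
      simp only
      rw [le_div_iff₀ hn']
      nlinarith [lin1 n, dv n hn]
  have t1 := hs1.tendsto_lim b1
  have t2 := hs2.tendsto_lim b2
  have t3 : hs2.lim = -hs1.lim := by
    have hz := tendsto_const_div_atTop_nhds_zero_nat (2 * c)
    have := hz.sub t1
    rw [zero_sub] at this
    refine tendsto_nhds_unique t2 (this.congr fun n => ?_)
    ring
  refine ⟨hs1.lim, fun n => ?_⟩
  rcases eq_or_ne n 0 with rfl | hn
  · have := h1 0 0
    have := h2 0 0
    simp only [add_zero] at *
    constructor <;> push_cast <;> linarith
  · have hn' : (0:ℝ) < n := by exact_mod_cast Nat.pos_of_ne_zero hn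
    have l1 := hs1.lim_le_div b1 hn
    have l2 := hs2.lim_le_div b2 hn
    rw [le_div_iff₀ hn'] at l1 l2
    rw [t3] at l2
    constructor <;> linarith

lemma Good.pressure (h : Good X p τ a φ) (K q : ℕ) (hw : WeakSpecification X q) :
    ∃ P c : ℝ, ∀ n : ℕ, n * P - c ≤ Real.log (zet p a φ K n) ∧
      Real.log (zet p a φ K n) ≤ n * P + c := by
  obtain ⟨c1, hc1, h1⟩ := h.zet_sub K
  obtain ⟨c2, hc2, h2⟩ := h.zet_sup K q hw
  have zp := h.zet_pos K
  have e1 : ∀ n m, Real.log (zet p a φ K (n + m)) ≤ Real.log (zet p a φ K n) +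
      Real.log (zet p a φ K m) + max (Real.log c1) (Real.log c2) := by
    intro n m
    have := Real.log_le_log (zp _) (h1 n m)
    rw [Real.log_mul hc1.ne' (mul_pos (zp n) (zp m)).ne', Real.log_mul (zp n).ne' (zp m).ne'] at this
    linarith [le_max_left (Real.log c1) (Real.log c2)]
  have e2 : ∀ n m, Real.log (zet p a φ K n) + Real.log (zet p a φ K m) ≤
      Real.log (zet p a φ K (n + m)) + max (Real.log c1) (Real.log c2) := by
    intro n m
    have := Real.log_le_log (mul_pos (zp n) (zp m)) (h2 n m)
    rw [Real.log_mul hc2.ne' (zp _).ne', Real.log_mul (zp n).ne' (zp m).ne'] at this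
    linarith [le_max_right (Real.log c1) (Real.log c2)]
  obtain ⟨P, hP⟩ := almost_additive (fun n => Real.log (zet p a φ K n)) _ e1 e2
  exact ⟨P, _, hP⟩

/-- finite-level variational inequality -/
lemma Good.finite_vp (h : Good X p τ a φ) (K n : ℕ) (P : List (C 0) → ℝ) (hP : ∀ I, 0 ≤ P I)
    (hPz : ∀ I, ¬ Lang X I → P I = 0) (hs : ∑ I ∈ words (C 0) n, P I = 1) :
    ∑ I ∈ words (C 0) n, P I * Lam p τ a φ 0 I +
      ∑ j ∈ Finset.range (K + 1), a j * ∑ J ∈ words (C j) n, Real.negMulLog (marg τ P j J) +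
      a 0 * ∑ I ∈ words (C 0) n, P I * (Real.log (P I) - Real.log (fw X p τ a φ K I)) ≤
    AA a K * Real.log (zet p a φ K n) := by
  have hmz : ∀ j ≤ K, ∀ J : List (C j), marg τ (fw X p τ a φ K) j J = 0 → marg τ P j J = 0 := by
    intro j hj J h0
    refine Finset.sum_eq_zero fun I hI => hPz I fun hL => ?_
    have := h.marg_eq j hj I hL
    rw [mem_fib.1 hI, h0] at this
    exact (Real.exp_pos _).ne this
  have hlog : ∀ j ≤ K, ∑ J ∈ words (C j) n, marg τ P j J *
      Real.log (marg τ (fw X p τ a φ K) j J) =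
      ∑ I ∈ words (C 0) n, P I * EE p τ a φ K j I := by
    intro j hj
    rw [sum_words_fib (τ j)]
    refine Finset.sum_congr rfl fun J _ => ?_
    unfold marg
    rw [Finset.sum_mul]
    refine Finset.sum_congr rfl fun I hI => ?_
    by_cases hL : Lang X I
    · have := h.marg_eq j hj I hL
      rw [mem_fib.1 hI] at this
      unfold marg at this
      rw [this, Real.log_exp]
    · rw [hPz I hL, zero_mul, zero_mul]
  have hgib : ∀ j ≤ K, ∑ J ∈ words (C j) n, Real.negMulLog (marg τ P j J) ≤
      - ∑ I ∈ words (C 0) n, P I * EE p τ a φ K j I := by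
    intro j hj
    rw [← hlog j hj]
    refine gibbs _ _ _ (fun J _ => Finset.sum_nonneg fun I _ => hP I)
      (fun J _ => Finset.sum_nonneg fun I _ => fw_nonneg K I) (fun J _ => hmz j hj J) ?_
    unfold marg
    rw [← sum_words_fib (τ j), ← sum_words_fib (τ j), hs, h.sum_fw]
  have hfw : ∀ I ∈ words (C 0) n, P I * (Real.log (P I) - Real.log (fw X p τ a φ K I)) =
      - Real.negMulLog (P I) - P I * EE p τ a φ K 0 I := by
    intro I _
    by_cases hL : Lang X I
    · unfold fw Real.negMulLog
      rw [if_pos hL, Real.log_exp]; ring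
    · rw [hPz I hL]; simp
  have hm0 : ∑ J ∈ words (C 0) n, Real.negMulLog (marg τ P 0 J) =
      ∑ I ∈ words (C 0) n, Real.negMulLog (P I) := by
    refine Finset.sum_congr rfl fun J _ => ?_
    congr 1
    unfold marg
    rw [Finset.sum_eq_single J]
    · intro I' hI' hne
      rw [mem_fib, h.map0] at hI'
      exact absurd hI' hne
    · intro hI'
      exact absurd (mem_fib.2 (h.map0 J)) hI'
  rw [Finset.sum_congr rfl hfw, Finset.sum_sub_distrib, Finset.sum_neg_distrib,
    Finset.sum_range_succ', hm0]
  have h1 : ∑ j ∈ Finset.range K, a (j + 1) *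
      ∑ J ∈ words (C (j + 1)) n, Real.negMulLog (marg τ P (j + 1) J) ≤
      ∑ j ∈ Finset.range K, a (j + 1) * (- ∑ I ∈ words (C 0) n, P I * EE p τ a φ K (j + 1) I) := by
    refine Finset.sum_le_sum fun j hj => ?_
    rw [Finset.mem_range] at hj
    exact mul_le_mul_of_nonneg_left (hgib (j + 1) (by omega)) (h.an _)
  have h2 : ∑ j ∈ Finset.range (K + 1), a j * ∑ I ∈ words (C 0) n, P I * EE p τ a φ K j I =
      ∑ I ∈ words (C 0) n, P I * Lam p τ a φ 0 I - AA a K * Real.log (zet p a φ K n) := by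
    simp only [Finset.mul_sum]
    rw [Finset.sum_comm]
    have : ∀ I ∈ words (C 0) n, ∑ j ∈ Finset.range (K + 1), a j * (P I * EE p τ a φ K j I) =
        P I * Lam p τ a φ 0 I - P I * (AA a K * Real.log (zet p a φ K n)) := by
      intro I hI
      rw [← mul_sub, ← mem_words.1 hI, ← h.identity, Finset.mul_sum]
      exact Finset.sum_congr rfl fun j _ => by ring
    rw [Finset.sum_congr rfl this, Finset.sum_sub_distrib, ← Finset.sum_mul, hs, one_mul]
  rw [Finset.sum_range_succ'] at h2
  simp only [mul_neg, Finset.sum_neg_distrib] at h1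
  linarith

/-- equality for the weight itself -/
lemma Good.finite_eq (h : Good X p τ a φ) (K n : ℕ) :
    ∑ I ∈ words (C 0) n, fw X p τ a φ K I * Lam p τ a φ 0 I +
      ∑ j ∈ Finset.range (K + 1), a j *
        ∑ J ∈ words (C j) n, Real.negMulLog (marg τ (fw X p τ a φ K) j J) =
    AA a K * Real.log (zet p a φ K n) := by
  set P := fw X p τ a φ K with hPdef
  have hPz : ∀ I, ¬ Lang X I → P I = 0 := fun I hI => if_neg hI
  have hs : ∑ I ∈ words (C 0) n, P I = 1 := h.sum_fw K n
  have hlog : ∀ j ≤ K, ∑ J ∈ words (C j) n, Real.negMulLog (marg τ P j J) =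
      - ∑ I ∈ words (C 0) n, P I * EE p τ a φ K j I := by
    intro j hj
    rw [sum_words_fib (τ j), ← Finset.sum_neg_distrib]
    refine Finset.sum_congr rfl fun J _ => ?_
    unfold Real.negMulLog
    rw [neg_mul]
    congr 1
    conv_lhs => enter [1]; unfold marg
    rw [Finset.sum_mul]
    refine Finset.sum_congr rfl fun I hI => ?_
    by_cases hL : Lang X I
    · have := h.marg_eq j hj I hL
      rw [mem_fib.1 hI] at this
      rw [this, Real.log_exp]
    · rw [hPz I hL, zero_mul, zero_mul]
  have h1 : ∑ j ∈ Finset.range (K + 1), a j *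
        ∑ J ∈ words (C j) n, Real.negMulLog (marg τ P j J) =
      - ∑ j ∈ Finset.range (K + 1), a j * ∑ I ∈ words (C 0) n, P I * EE p τ a φ K j I := by
    rw [← Finset.sum_neg_distrib]
    refine Finset.sum_congr rfl fun j hj => ?_
    rw [Finset.mem_range] at hj
    rw [hlog j (by omega)]; ring
  have h2 : ∑ j ∈ Finset.range (K + 1), a j * ∑ I ∈ words (C 0) n, P I * EE p τ a φ K j I =
      ∑ I ∈ words (C 0) n, P I * Lam p τ a φ 0 I - AA a K * Real.log (zet p a φ K n) := by
    simp only [Finset.mul_sum]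
    rw [Finset.sum_comm]
    have : ∀ I ∈ words (C 0) n, ∑ j ∈ Finset.range (K + 1), a j * (P I * EE p τ a φ K j I) =
        P I * Lam p τ a φ 0 I - P I * (AA a K * Real.log (zet p a φ K n)) := by
      intro I hI
      rw [← mul_sub, ← mem_words.1 hI, ← h.identity, Finset.mul_sum]
      exact Finset.sum_congr rfl fun j _ => by ring
    rw [Finset.sum_congr rfl this, Finset.sum_sub_distrib, ← Finset.sum_mul, hs, one_mul]
  rw [h1, h2]; ring

end chain
end

set_option linter.unusedSectionVars false

noncomputable section

/-- Birkhoff sums -/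
def SS {A : Type} (g : (ℕ → A) → ℝ) (n : ℕ) (x : ℕ → A) : ℝ :=
  ∑ i ∈ Finset.range n, g (shiftMap^[i] x)

lemma SS_add {A : Type} (g : (ℕ → A) → ℝ) (n m : ℕ) (x : ℕ → A) :
    SS g (n + m) x = SS g n x + SS g m (shiftMap^[n] x) := by
  unfold SS
  rw [Finset.sum_range_add]
  congr 1
  refine Finset.sum_congr rfl fun i _ => ?_
  rw [← Function.iterate_add_apply, Nat.add_comm]

lemma agree_cyl {A : Type} {I : List A} {x y : ℕ → A} (hx : x ∈ cyl I) (hy : y ∈ cyl I) :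
    ∀ i < I.length, x i = y i := fun i hi => (hx ⟨i, hi⟩).trans (hy ⟨i, hi⟩).symm

/-- the word weight of a potential -/
def wt {A : Type} (X : Set (ℕ → A)) (g : (ℕ → A) → ℝ) (pt : List A → (ℕ → A)) (I : List A) : ℝ :=
  if Lang X I then Real.exp (SS g I.length (pt I)) else 0

lemma exists_pt {A : Type} {X : Set (ℕ → A)} (hne : X.Nonempty) :
    ∃ pt : List A → (ℕ → A), (∀ I, pt I ∈ X) ∧ ∀ I, Lang X I → pt I ∈ cyl I := by
  have : ∀ I : List A, ∃ x, x ∈ X ∧ (Lang X I → x ∈ cyl I) := by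
    intro I
    by_cases h : Lang X I
    · obtain ⟨x, hx⟩ := h
      exact ⟨x, hx.2, fun _ => hx.1⟩
    · obtain ⟨x, hx⟩ := hne
      exact ⟨x, hx, fun h' => absurd h' h⟩
  choose pt h1 using this
  exact ⟨pt, fun I => (h1 I).1, fun I => (h1 I).2⟩

lemma good_of_V {C : ℕ → Type} [∀ i, Fintype (C i)] {X : Set (ℕ → C 0)}
    {p : ∀ i, C i → C (i + 1)} {τ : ∀ i, C 0 → C i} {a : ℕ → ℝ}
    (τ0 : ∀ x, τ 0 x = x) (τs : ∀ i x, τ (i + 1) x = p i (τ i x)) (a0 : 0 < a 0)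
    (an : ∀ i, 0 ≤ a i) (hne : X.Nonempty) (hsh : shiftMap '' X ⊆ X)
    (g : (ℕ → C 0) → ℝ) (M : ℝ) (hM : ∀ x, |g x| ≤ M) (c : ℝ)
    (hV : ∀ n : ℕ, ∀ x ∈ X, ∀ y ∈ X, (∀ i < n, x i = y i) → |SS g n x - SS g n y| ≤ c)
    (pt : List (C 0) → (ℕ → C 0)) (h1 : ∀ I, pt I ∈ X) (h2 : ∀ I, Lang X I → pt I ∈ cyl I) :
    Good X p τ a (wt X g pt) := by
  have wpos : ∀ I, Lang X I → 0 < wt X g pt I := fun I hI => by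
    rw [wt, if_pos hI]; exact Real.exp_pos _
  have wz : ∀ I, ¬ Lang X I → wt X g pt I = 0 := fun I hI => if_neg hI
  have wnn : ∀ I, 0 ≤ wt X g pt I := fun I => by
    by_cases hI : Lang X I
    · exact (wpos I hI).le
    · rw [wz I hI]
  have hM0 : 0 ≤ M := (abs_nonneg _).trans (hM (pt []))
  refine ⟨τ0, τs, a0, an, hne, hsh, wpos, wz, ⟨Real.exp (2 * c), Real.exp_pos _, fun I J => ?_⟩,
    fun r => ⟨Real.exp (-(2 * c) - r * M), Real.exp_pos _, fun I K J hK hL => ?_⟩⟩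
  · by_cases hL : Lang X (I ++ J)
    · have hI := hL.left
      have hJ := hL.right hsh
      rw [wt, if_pos hL, wt, if_pos hI, wt, if_pos hJ, ← Real.exp_add, ← Real.exp_add]
      refine Real.exp_le_exp.2 ?_
      rw [List.length_append, SS_add]
      have hz := mem_cyl_append.1 (h2 _ hL)
      have e1 := abs_le.1 (hV _ _ (h1 _) _ (h1 _) (agree_cyl hz.1 (h2 _ hI)))
      have e2 := abs_le.1 (hV _ _ (shift_iter_mem hsh (h1 _) _) _ (h1 _) (agree_cyl hz.2 (h2 _ hJ)))
      linarith [e1.2, e2.2]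
    · rw [wz _ hL]
      have := wnn I
      have := wnn J
      positivity
  · have hI := hL.left.left
    have hJ := hL.right hsh
    rw [wt, if_pos hI, wt, if_pos hJ, wt, if_pos hL, ← Real.exp_add, ← Real.exp_add]
    refine Real.exp_le_exp.2 ?_
    have hz := mem_cyl_append.1 (h2 _ hL)
    have hz' := mem_cyl_append.1 hz.1
    rw [List.length_append, SS_add, List.length_append, SS_add]
    rw [List.length_append] at hz
    have e1 := abs_le.1 (hV _ _ (h1 _) _ (h1 _) (agree_cyl hz'.1 (h2 _ hI)))
    have e2 := abs_le.1 (hV _ _ (shift_iter_mem hsh (h1 _) _) _ (h1 _) (agree_cyl hz.2 (h2 _ hJ)))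
    have e3 : -(r * M) ≤ SS g K.length (shiftMap^[I.length] (pt (I ++ K ++ J))) := by
      have : ∑ i ∈ Finset.range K.length, (-M) ≤
          SS g K.length (shiftMap^[I.length] (pt (I ++ K ++ J))) :=
        Finset.sum_le_sum fun i _ => (abs_le.1 (hM _)).1
      rw [Finset.sum_const, Finset.card_range, nsmul_eq_mul] at this
      have h4 : (K.length : ℝ) ≤ r := by exact_mod_cast hK
      nlinarith
    linarith [e1.1, e2.1]

section one
variable {A : Type} [Fintype A] [TopologicalSpace A] [DiscreteTopology A]
  [MeasurableSpace A] [BorelSpace A] {X : Set (ℕ → A)}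

lemma cyl_zero_of_not_lang (η : Measure (ℕ → A)) [IsProbabilityMeasure η] (hX : MeasurableSet X)
    (h : η X = 1) (I : List A) (hI : ¬ Lang X I) : η.real (cyl I) = 0 := by
  have h0 : η Xᶜ = 0 := (prob_compl_eq_zero_iff hX).2 h
  have : cyl I ⊆ Xᶜ := fun x hx hxX => hI ⟨x, hx, hxX⟩
  rw [measureReal_def, measure_mono_null this h0]; rfl

lemma integral_SS (η : Measure (ℕ → A)) [IsProbabilityMeasure η] (hη : η.map shiftMap = η)
    (g : (ℕ → A) → ℝ) (hg : Continuous g) (n : ℕ) :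
    Integrable (SS g n) η ∧ ∫ x, SS g n x ∂η = n * ∫ x, g x ∂η := by
  have mp : MeasurePreserving (shiftMap (A := A)) η η := ⟨measurable_shiftMap, hη⟩
  have hInt : ∀ i, Integrable (fun x => g (shiftMap^[i] x)) η := fun i => by
    have hc : Continuous fun x : ℕ → A => g (shiftMap^[i] x) :=
      hg.comp (continuous_shiftMap.iterate i)
    exact (BoundedContinuousFunction.mkOfCompact ⟨_, hc⟩).integrable η
  refine ⟨integrable_finsetSum _ fun i _ => hInt i, ?_⟩
  unfold SS
  rw [integral_finsetSum _ fun i _ => hInt i]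
  have : ∀ i ∈ Finset.range n, ∫ x, g (shiftMap^[i] x) ∂η = ∫ x, g x ∂η := fun i _ => by
    have m := mp.iterate i
    conv_rhs => rw [← m.map_eq]
    rw [integral_map m.measurable.aemeasurable hg.aestronglyMeasurable]
  rw [Finset.sum_congr rfl this]; simp

lemma integral_le_words (η : Measure (ℕ → A)) [IsProbabilityMeasure η] (hX : MeasurableSet X)
    (h : η X = 1) (hη : η.map shiftMap = η) (g : (ℕ → A) → ℝ) (hg : Continuous g) (c : ℝ)
    (hV : ∀ n : ℕ, ∀ x ∈ X, ∀ y ∈ X, (∀ i < n, x i = y i) → |SS g n x - SS g n y| ≤ c)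
    (pt : List A → (ℕ → A)) (h1 : ∀ I, pt I ∈ X) (h2 : ∀ I, Lang X I → pt I ∈ cyl I) (n : ℕ) :
    n * ∫ x, g x ∂η ≤ ∑ I ∈ words A n, η.real (cyl I) * SS g n (pt I) + c := by
  obtain ⟨hi, he⟩ := integral_SS η hη g hg n
  rw [← he]
  have hm : ∀ I ∈ words A n, Integrable ((cyl I).indicator fun _ => SS g n (pt I)) η :=
    fun I _ => (integrable_const _).indicator (measurableSet_cyl I)
  have e : ∑ I ∈ words A n, η.real (cyl I) * SS g n (pt I) + c =
      ∫ x, (∑ I ∈ words A n, (cyl I).indicator (fun _ => SS g n (pt I)) x) + c ∂η := by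
    rw [integral_add (integrable_finsetSum _ hm) (integrable_const _), integral_finsetSum _ hm]
    simp [integral_indicator_const, measurableSet_cyl]
  rw [e]
  refine integral_mono_ae hi ((integrable_finsetSum _ hm).add (integrable_const _)) ?_
  have hae : ∀ᵐ x ∂η, x ∈ X := by
    rw [ae_iff]; exact (prob_compl_eq_zero_iff hX).2 h
  filter_upwards [hae] with x hx
  have hw : wordOf x n ∈ words A n := mem_words.2 (length_wordOf x n)
  have hL : Lang X (wordOf x n) := ⟨x, mem_cyl_wordOf x n, hx⟩
  have : ∑ I ∈ words A n, (cyl I).indicator (fun _ => SS g n (pt I)) x = SS g n (pt (wordOf x n)) := by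
    rw [Finset.sum_eq_single_of_mem _ hw]
    · exact Set.indicator_of_mem (mem_cyl_wordOf x n) _
    · intro I hI hne
      refine Set.indicator_of_notMem (fun hxI => hne ?_) _
      rw [← mem_cyl_iff.1 hxI, mem_words.1 hI]
  rw [this]
  have ag := agree_cyl (mem_cyl_wordOf x n) (h2 _ hL)
  rw [length_wordOf] at ag
  have := abs_le.1 (hV n x hx _ (h1 _) ag)
  linarith [this.2]

end one

end

set_option linter.unusedSectionVars false

noncomputable section

section fin
variable {C : ℕ → Type} [∀ i, Fintype (C i)] [∀ i, TopologicalSpace (C i)]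
  [∀ i, DiscreteTopology (C i)] [∀ i, MeasurableSpace (C i)] [∀ i, BorelSpace (C i)]

lemma Lam_wt {p : ∀ i, C i → C (i + 1)} {τ : ∀ i, C 0 → C i} {a : ℕ → ℝ} {X : Set (ℕ → C 0)}
    {g : (ℕ → C 0) → ℝ} {pt : List (C 0) → (ℕ → C 0)} (h : Good X p τ a (wt X g pt))
    (I : List (C 0)) (hI : Lang X I) : Lam p τ a (wt X g pt) 0 I = SS g I.length (pt I) := by
  unfold Lam
  rw [h.map0]
  change Real.log (wt X g pt I) = _
  rw [wt, if_pos hI, Real.log_exp]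

lemma HH_map_marg (τ : ∀ i, C 0 → C i) (η : Measure (ℕ → C 0)) [IsProbabilityMeasure η] (j n : ℕ) :
    HH (η.map (blockMap (τ j))) n =
      ∑ J ∈ words (C j) n, Real.negMulLog (marg τ (fun I => η.real (cyl I)) j J) := by
  unfold HH
  refine Finset.sum_congr rfl fun J _ => ?_
  rw [real_map_blockMap]
  rfl

lemma push_inv {A B : Type} [Fintype A] [TopologicalSpace A] [DiscreteTopology A]
    [MeasurableSpace A] [BorelSpace A] [Fintype B] [TopologicalSpace B] [DiscreteTopology B]
    [MeasurableSpace B] [BorelSpace B] (t : A → B) (η : Measure (ℕ → A)) [IsProbabilityMeasure η]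
    (hη : η.map shiftMap = η) (X : Set (ℕ → A)) (Y : Set (ℕ → B)) (hY : MeasurableSet Y)
    (hXY : ∀ x ∈ X, blockMap t x ∈ Y) (h : η X = 1) :
    IsProbabilityMeasure (η.map (blockMap t)) ∧ (η.map (blockMap t)) Y = 1 ∧
      (η.map (blockMap t)).map shiftMap = η.map (blockMap t) := by
  have hp : IsProbabilityMeasure (η.map (blockMap t)) :=
    Measure.isProbabilityMeasure_map (measurable_blockMap t).aemeasurable
  refine ⟨hp, ?_, ?_⟩
  · rw [Measure.map_apply (measurable_blockMap t) hY]
    refine le_antisymm prob_le_one ?_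
    rw [← h]
    exact measure_mono hXY
  · rw [Measure.map_map measurable_shiftMap (measurable_blockMap t)]
    conv_rhs => rw [← hη]
    rw [Measure.map_map (measurable_blockMap t) measurable_shiftMap]
    rfl

theorem chain_main (K : ℕ) (X : ∀ i, Set (ℕ → C i)) (hX : IsSubshift (X 0))
    (hm : ∀ i ≤ K, MeasurableSet (X i)) (p : ∀ i, C i → C (i + 1)) (τ : ∀ i, C 0 → C i)
    (τ0 : ∀ x, τ 0 x = x) (τs : ∀ i x, τ (i + 1) x = p i (τ i x))
    (hmap : ∀ i ≤ K, ∀ x ∈ X 0, blockMap (τ i) x ∈ X i) (q : ℕ) (hw : WeakSpecification (X 0) q)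
    (a : ℕ → ℝ) (a0 : 0 < a 0) (an : ∀ i, 0 ≤ a i)
    (g : (ℕ → C 0) → ℝ) (hg : Continuous g) (c : ℝ)
    (hV : ∀ n : ℕ, ∀ x ∈ X 0, ∀ y ∈ X 0, (∀ i < n, x i = y i) → |SS g n x - SS g n y| ≤ c)
    (W : ProbabilityMeasure (ℕ → C 0) → ℝ)
    (hW : ∀ μ ∈ MInv (X 0), W μ = (∫ x, g x ∂(μ : Measure (ℕ → C 0))) +
        ∑ i ∈ Finset.range (K + 1), a i *
          ent (X i) ((μ : Measure (ℕ → C 0)).map (blockMap (τ i)))) :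
    ∃ P : ProbabilityMeasure (ℕ → C 0),
      P ∈ MInv (X 0) ∧
      (∀ η ∈ MInv (X 0), W η ≤ W P) ∧
      (∀ η ∈ MInv (X 0), (∀ κ ∈ MInv (X 0), W κ ≤ W η) → η = P) ∧
      Ergodic shiftMap (P : Measure (ℕ → C 0)) ∧
    (∃ p : ℕ, ∃ c > (0:ℝ), ∀ S T : Set (ℕ → C 0), MeasurableSet S → MeasurableSet T →
        c * (((P : Measure (ℕ → C 0)) S).toReal * ((P : Measure (ℕ → C 0)) T).toReal) ≤
          liminf (fun n : ℕ => ∑ i ∈ Finset.range (p+1),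
            ((P : Measure (ℕ → C 0)) (S ∩ shiftMap^[n+i] ⁻¹' T)).toReal) atTop) ∧
      ((∃ q, Specification (X 0) q) →
        ∃ c > (0:ℝ), ∀ S T : Set (ℕ → C 0), MeasurableSet S → MeasurableSet T →
          c * (((P : Measure (ℕ → C 0)) S).toReal * ((P : Measure (ℕ → C 0)) T).toReal) ≤
            liminf (fun n : ℕ =>
              ((P : Measure (ℕ → C 0)) (S ∩ shiftMap^[n] ⁻¹' T)).toReal) atTop) := by
  obtain ⟨pt, h1, h2⟩ := exists_pt hX.1
  obtain ⟨M, hM⟩ : ∃ M : ℝ, ∀ x, |g x| ≤ M :=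
    ⟨‖BoundedContinuousFunction.mkOfCompact ⟨g, hg⟩‖, fun x =>
      (BoundedContinuousFunction.mkOfCompact ⟨g, hg⟩).norm_coe_le_norm x⟩
  have G : Good (X 0) p τ a (wt (X 0) g pt) :=
    good_of_V τ0 τs a0 an hX.1 hX.2.2 g M hM c hV pt h1 h2
  have mX : MeasurableSet (X 0) := hm 0 (Nat.zero_le _)
  obtain ⟨Pr, c', hPr⟩ := G.pressure K q hw
  have O := G.omW K
  obtain ⟨μ, l, hl0, hla, hl⟩ := exists_limit O pt
  obtain ⟨hμ, herg, huniq, hwm, hsm⟩ := lim_props O hX q hw h1 h2 μ l hla hl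
  have hAA := G.AA_pos K
  set f := fw (X 0) p τ a (wt (X 0) g pt) K with hf
  have hfz : ∀ I, f I = 0 → ¬ Lang (X 0) I := by
    intro I h0 hL
    rw [hf, fw, if_pos hL] at h0
    exact (Real.exp_pos _).ne' h0
  have upper : ∀ η ∈ MInv (X 0), ∀ n : ℕ, n * W η +
      a 0 * ∑ I ∈ words (C 0) n, (η : Measure (ℕ → C 0)).real (cyl I) *
        (Real.log ((η : Measure (ℕ → C 0)).real (cyl I)) - Real.log (f I)) ≤
      n * (AA a K * Pr) + (AA a K * c' + c) := by
    intro η hη n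
    have hz := cyl_zero_of_not_lang (η : Measure (ℕ → C 0)) mX hη.2
    have e1 := G.finite_vp K n (fun I => (η : Measure (ℕ → C 0)).real (cyl I))
      (fun I => measureReal_nonneg) hz (sum_real_cyl _ n)
    have e2 := integral_le_words (η : Measure (ℕ → C 0)) mX hη.2 hη.1 g hg c hV pt h1 h2 n
    have e3 : ∑ I ∈ words (C 0) n, (η : Measure (ℕ → C 0)).real (cyl I) *
        Lam p τ a (wt (X 0) g pt) 0 I =
        ∑ I ∈ words (C 0) n, (η : Measure (ℕ → C 0)).real (cyl I) * SS g n (pt I) := by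
      refine Finset.sum_congr rfl fun I hI => ?_
      by_cases hL : Lang (X 0) I
      · rw [Lam_wt G I hL, mem_words.1 hI]
      · rw [hz I hL, zero_mul, zero_mul]
    have e4 : n * ∑ i ∈ Finset.range (K + 1), a i *
          ent (X i) ((η : Measure (ℕ → C 0)).map (blockMap (τ i))) ≤
        ∑ j ∈ Finset.range (K + 1), a j * ∑ J ∈ words (C j) n, Real.negMulLog
          (marg τ (fun I => (η : Measure (ℕ → C 0)).real (cyl I)) j J) := by
      rw [Finset.mul_sum]
      refine Finset.sum_le_sum fun j hj => ?_
      have hjK : j ≤ K := by have := Finset.mem_range.1 hj; omega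
      obtain ⟨b1, b2, b3⟩ := push_inv (τ j) (η : Measure (ℕ → C 0)) hη.1 (X 0) (X j) (hm j hjK)
        (hmap j hjK) hη.2
      have := (ent_spec (X j) (hm j hjK) _ b2 b3).2 n
      rw [HH_map_marg] at this
      have := mul_le_mul_of_nonneg_left this (an j)
      linarith
    have e5 := mul_le_mul_of_nonneg_left (hPr n).2 hAA.le
    rw [hW η hη]
    linarith
  have gibbsD : ∀ η ∈ MInv (X 0), ∀ n : ℕ, 0 ≤
      ∑ I ∈ words (C 0) n, (η : Measure (ℕ → C 0)).real (cyl I) *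
        (Real.log ((η : Measure (ℕ → C 0)).real (cyl I)) - Real.log (f I)) := by
    intro η hη n
    have hz := cyl_zero_of_not_lang (η : Measure (ℕ → C 0)) mX hη.2
    have := gibbs (words (C 0) n) (fun I => (η : Measure (ℕ → C 0)).real (cyl I)) f
      (fun I _ => measureReal_nonneg) (fun I _ => fw_nonneg K I) (fun I _ h0 => hz I (hfz I h0))
      (by rw [sum_real_cyl]; exact (G.sum_fw K n).le)
    simp only [mul_sub, Finset.sum_sub_distrib]
    simp only [Real.negMulLog, neg_mul, Finset.sum_neg_distrib] at this
    linarith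
  have upW : ∀ η ∈ MInv (X 0), W η ≤ AA a K * Pr := by
    intro η hη
    by_contra! hlt
    obtain ⟨n, hn⟩ := exists_nat_gt ((AA a K * c' + c) / (W η - AA a K * Pr))
    rw [div_lt_iff₀ (by linarith)] at hn
    have := upper η hη n
    have := mul_nonneg a0.le (gibbsD η hη n)
    nlinarith
  have lower : AA a K * Pr ≤ W μ := by
    have hrp := fun N => rho_prob (pt := pt) O N
    have r1 : ∀ N, ∀ I, I.length = N → (rho f pt N).real (cyl I) = f I := by
      intro N I hI
      have := rho_shift_cyl O h2 0 0 N I (by omega)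
      simpa [FF, words_zero] using this
    have r2 : ∀ N j, HH ((rho f pt N).map (blockMap (τ j))) N =
        ∑ J ∈ words (C j) N, Real.negMulLog (marg τ f j J) := by
      intro N j
      have := hrp N
      rw [HH_map_marg]
      refine Finset.sum_congr rfl fun J hJ => ?_
      congr 1
      refine Finset.sum_congr rfl fun I hI => r1 N I ?_
      rw [← mem_words.1 hJ, ← mem_fib.1 hI, List.length_map]
    have fin : ∀ m N : ℕ, m * (((N + 1 : ℕ) : ℝ) * (AA a K * Pr) - AA a K * c') ≤
        ((N + 1 : ℕ) : ℝ) * (m * ∫ x, g x ∂(nuM f pt N) +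
          ∑ j ∈ Finset.range (K + 1), a j * HH ((nuM f pt N).map (blockMap (τ j))) m) +
        ∑ j ∈ Finset.range (K + 1), a j * ∑ r ∈ Finset.range m, ((words (C j) r).card : ℝ) := by
      intro m N
      have e1 := G.finite_eq K (N + 1)
      have e2 := nuM_integral (pt := pt) O N g hg
      have e3 : ∑ I ∈ words (C 0) (N + 1), f I * Lam p τ a (wt (X 0) g pt) 0 I =
          ∑ I ∈ words (C 0) (N + 1), f I * ∑ t ∈ Finset.range (N + 1), g (shiftMap^[t] (pt I)) := by
        refine Finset.sum_congr rfl fun I hI => ?_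
        by_cases hL : Lang (X 0) I
        · rw [Lam_wt G I hL, mem_words.1 hI]; rfl
        · rw [hf, fw, if_neg hL, zero_mul, zero_mul]
      rw [← hf, e3, ← e2] at e1
      have e4 : m * ∑ j ∈ Finset.range (K + 1), a j * ∑ J ∈ words (C j) (N + 1),
          Real.negMulLog (marg τ f j J) ≤ ((N + 1 : ℕ) : ℝ) *
          ∑ j ∈ Finset.range (K + 1), a j * HH ((nuM f pt N).map (blockMap (τ j))) m +
          ∑ j ∈ Finset.range (K + 1), a j * ∑ r ∈ Finset.range m, ((words (C j) r).card : ℝ) := by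
        rw [Finset.mul_sum, Finset.mul_sum, ← Finset.sum_add_distrib]
        refine Finset.sum_le_sum fun j _ => ?_
        have := mul_le_mul_of_nonneg_left (misi_nu (pt := pt) (τ j) O N m) (an j)
        rw [r2] at this
        linarith
      have e5 := mul_le_mul_of_nonneg_left (hPr (N + 1)).1 hAA.le
      have e6 : ((N + 1 : ℕ) : ℝ) * (AA a K * Pr) - AA a K * c' ≤
        ((N + 1 : ℕ) : ℝ) * ∫ x, g x ∂(nuM f pt N) + ∑ j ∈ Finset.range (K + 1), a j *
          ∑ J ∈ words (C j) (N + 1), Real.negMulLog (marg τ f j J) := by linarith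
      have e7 := mul_le_mul_of_nonneg_left e6 (Nat.cast_nonneg (α := ℝ) m)
      linarith
    have limm : ∀ m : ℕ, m * (AA a K * Pr) ≤ m * ∫ x, g x ∂(μ : Measure (ℕ → C 0)) +
          ∑ j ∈ Finset.range (K + 1), a j * HH ((μ : Measure (ℕ → C 0)).map (blockMap (τ j))) m := by
      intro m
      set D := ∑ j ∈ Finset.range (K + 1), a j * ∑ r ∈ Finset.range m, ((words (C j) r).card : ℝ)
        with hD
      have t1 : Tendsto (fun N => m * ∫ x, g x ∂(nuM f pt N) +
          ∑ j ∈ Finset.range (K + 1), a j * HH ((nuM f pt N).map (blockMap (τ j))) m +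
          (D + m * (AA a K * c')) / ((N + 1 : ℕ) : ℝ)) l
          (𝓝 (m * ∫ x, g x ∂(μ : Measure (ℕ → C 0)) +
          ∑ j ∈ Finset.range (K + 1), a j *
            HH ((μ : Measure (ℕ → C 0)).map (blockMap (τ j))) m + 0)) := by
        refine Tendsto.add (Tendsto.add ((lim_integral O hl g hg).const_mul _)
          (tendsto_finsetSum _ fun j _ => (lim_HH (τ j) O hl m).const_mul _))
          (inv_nat_tendsto hla _)
      rw [add_zero] at t1
      refine ge_of_tendsto' t1 fun N => ?_
      have hN : (0 : ℝ) < ((N + 1 : ℕ) : ℝ) := by positivity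
      rw [← mul_le_mul_iff_right₀ hN, mul_add _ _ (_ / _), mul_div_cancel₀ _ hN.ne']
      have := fin m N
      linarith
    have t2 : Tendsto (fun m : ℕ => ∫ x, g x ∂(μ : Measure (ℕ → C 0)) +
          ∑ j ∈ Finset.range (K + 1), a j *
            (HH ((μ : Measure (ℕ → C 0)).map (blockMap (τ j))) m / m)) atTop (𝓝 (W μ)) := by
      rw [hW μ hμ]
      refine tendsto_const_nhds.add (tendsto_finsetSum _ fun j hj => Tendsto.const_mul _ ?_)
      have hjK : j ≤ K := by have := Finset.mem_range.1 hj; omega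
      obtain ⟨b1, b2, b3⟩ := push_inv (τ j) (μ : Measure (ℕ → C 0)) hμ.1 (X 0) (X j) (hm j hjK)
        (hmap j hjK) hμ.2
      exact (ent_spec (X j) (hm j hjK) _ b2 b3).1
    refine ge_of_tendsto t2 ?_
    filter_upwards [eventually_gt_atTop 0] with m hm0
    have hm1 : (0 : ℝ) < m := by exact_mod_cast hm0
    rw [← mul_le_mul_iff_right₀ hm1, mul_add, Finset.mul_sum]
    refine (limm m).trans (le_of_eq ?_)
    congr 1
    refine Finset.sum_congr rfl fun j _ => ?_
    field_simp
  refine ⟨μ, hμ, fun η hη => (upW η hη).trans lower, fun η hη hmax => ?_, herg, hwm, hsm⟩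
  refine huniq η hη ⟨(AA a K * c' + c) / a 0, fun n => ?_⟩ fun I h0 =>
    cyl_zero_of_not_lang (η : Measure (ℕ → C 0)) mX hη.2 I (hfz I h0)
  have e1 := hmax μ hμ
  have e2 := upper η hη n
  rw [le_div_iff₀ a0]
  have e3 := mul_le_mul_of_nonneg_left (lower.trans e1) (Nat.cast_nonneg (α := ℝ) n)
  linarith

end fin

end

/-- Theorem 1.1 / `thm-1`: if `X₁` satisfies weak specification then every
`f ∈ V(σ_{X₁})` has a unique `a`-weighted equilibrium state `μ` for the chain of factor maps;
`μ` is ergodic and satisfies the stated mixing-type lower bounds (at `p+1` consecutive times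
in general, and at single times if `X₁` satisfies specification). -/
theorem weighted_eq_states_stmt_0 {k : ℕ} (hk : 2 ≤ k) {B : ℕ → Type}
    [∀ i, Fintype (B i)] [∀ i, TopologicalSpace (B i)] [∀ i, DiscreteTopology (B i)]
    [∀ i, MeasurableSpace (B i)] [∀ i, BorelSpace (B i)]
    (X : ∀ i, Set (ℕ → B i)) (hX : ∀ i, 1 ≤ i → i ≤ k → IsSubshift (X i))
    (π : ∀ i, B i → B (i+1))
    (hπ : ∀ i, 1 ≤ i → i ≤ k - 1 → blockMap (π i) '' X i = X (i+1))
    (hws : ∃ q, WeakSpecification (X 1) q)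
    (a : ℕ → ℝ) (ha₁ : 0 < a 1) (ha : ∀ i, 2 ≤ i → i ≤ k → 0 ≤ a i)
    (f : (ℕ → B 1) → ℝ) (hfc : ContinuousOn f (X 1))
    (hfV : ∃ c > (0:ℝ), ∀ n : ℕ, 1 ≤ n → ∀ x ∈ X 1, ∀ y ∈ X 1,
      (∀ i < n, x i = y i) →
      |(∑ i ∈ Finset.range n, f (shiftMap^[i] x)) -
        ∑ i ∈ Finset.range n, f (shiftMap^[i] y)| ≤ c)
    (W : ProbabilityMeasure (ℕ → B 1) → ℝ)
    (hW : ∀ μ : ProbabilityMeasure (ℕ → B 1), W μ =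
      (∫ x in X 1, f x ∂(μ : Measure (ℕ → B 1))) +
        ∑ i ∈ Finset.range k, a (i+1) *
          ent (X (1+i)) ((μ : Measure (ℕ → B 1)).map (blockMap (tauFrom π 1 i)))) :
    ∃ μ : ProbabilityMeasure (ℕ → B 1),
      μ ∈ MInv (X 1) ∧
      (∀ η ∈ MInv (X 1), W η ≤ W μ) ∧
      (∀ η ∈ MInv (X 1), (∀ κ ∈ MInv (X 1), W κ ≤ W η) → η = μ) ∧
      Ergodic shiftMap (μ : Measure (ℕ → B 1)) ∧
      (∃ p : ℕ, ∃ c > (0:ℝ), ∀ S T : Set (ℕ → B 1), MeasurableSet S → MeasurableSet T →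
        c * (((μ : Measure (ℕ → B 1)) S).toReal * ((μ : Measure (ℕ → B 1)) T).toReal) ≤
          liminf (fun n : ℕ => ∑ i ∈ Finset.range (p+1),
            ((μ : Measure (ℕ → B 1)) (S ∩ shiftMap^[n+i] ⁻¹' T)).toReal) atTop) ∧
      ((∃ q, Specification (X 1) q) →
        ∃ c > (0:ℝ), ∀ S T : Set (ℕ → B 1), MeasurableSet S → MeasurableSet T →
          c * (((μ : Measure (ℕ → B 1)) S).toReal * ((μ : Measure (ℕ → B 1)) T).toReal) ≤
            liminf (fun n : ℕ =>
              ((μ : Measure (ℕ → B 1)) (S ∩ shiftMap^[n] ⁻¹' T)).toReal) atTop) := by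
  obtain ⟨q, hq⟩ := hws
  obtain ⟨c, hc, hV⟩ := hfV
  have hX1 := hX 1 le_rfl (by omega)
  have hcl : IsClosed (X 1) := hX1.2.1.isClosed
  obtain ⟨g, hgr⟩ := ContinuousMap.exists_restrict_eq hcl
    (⟨(X 1).domRestrict f, continuousOn_iff_continuous_domRestrict.1 hfc⟩ : C(X 1, ℝ))
  have hgf : ∀ x ∈ X 1, g x = f x := fun x hx => by
    have := congrArg (fun u : C(X 1, ℝ) => u ⟨x, hx⟩) hgr
    exact this
  have hsh := hX1.2.2
  have hmap : ∀ i ≤ k - 1, ∀ x ∈ X 1, blockMap (tauFrom π 1 i) x ∈ X (1 + i) := by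
    intro i
    induction i with
    | zero => intro _ x hx; exact hx
    | succ i ih =>
      intro hi x hx
      have h1 := ih (by omega) x hx
      have h2 := hπ (1 + i) (by omega) (by omega)
      have h3 : blockMap (π (1 + i)) (blockMap (tauFrom π 1 i) x) ∈ X (1 + i + 1) := by
        rw [← h2]
        exact Set.mem_image_of_mem _ h1
      exact h3
  have hSS : ∀ n : ℕ, ∀ x ∈ X 1, SS g n x = ∑ i ∈ Finset.range n, f (shiftMap^[i] x) :=
    fun n x hx => Finset.sum_congr rfl fun i _ => hgf _ (shift_iter_mem hsh hx i)
  have hkk : k - 1 + 1 = k := by omega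
  refine chain_main (C := fun i => B (1 + i)) (k - 1) (fun i => X (1 + i)) hX1
    (fun i hi => (hX (1 + i) (by omega) (by omega)).2.1.isClosed.measurableSet)
    (fun i => π (1 + i)) (tauFrom π 1) (fun _ => rfl) (fun _ _ => rfl) hmap q hq
    (fun i => if i ≤ k - 1 then a (i + 1) else 0) (by simpa using ha₁) ?_ g g.continuous c ?_ W ?_
  · intro i
    by_cases hi : i ≤ k - 1
    · simp only [hi, if_true]
      rcases Nat.eq_zero_or_pos i with h0 | h0
      · subst h0; exact ha₁.le
      · exact ha (i + 1) (by omega) (by omega)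
    · simp only [hi, if_false]; exact le_rfl
  · intro n x hx y hy hxy
    rcases Nat.eq_zero_or_pos n with h0 | h0
    · subst h0
      simp only [SS, Finset.range_zero, Finset.sum_empty, sub_zero, abs_zero]
      exact hc.le
    · have e1 := hSS n x hx
      have e2 := hSS n y hy
      have e3 := hV n h0 x hx y hy hxy
      rw [← e1, ← e2] at e3
      exact e3
  · intro μ hμ
    have e0 : ∀ᵐ x ∂(μ : Measure (ℕ → B 1)), x ∈ X 1 := by
      rw [ae_iff]; exact (prob_compl_eq_zero_iff hcl.measurableSet).2 hμ.2
    have e1 : ∫ x in X 1, f x ∂(μ : Measure (ℕ → B 1)) = ∫ x, g x ∂(μ : Measure (ℕ → B 1)) := by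
      rw [Measure.restrict_eq_self_of_ae_mem e0]
      refine integral_congr_ae ?_
      filter_upwards [e0] with x hx
      exact (hgf x hx).symm
    rw [hW μ, e1, hkk]
    congr 1
    refine Finset.sum_congr rfl fun i hi => ?_
    have hi' : i ≤ k - 1 := by have := Finset.mem_range.1 hi; omega
    simp only [hi', if_true]
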